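/- arXiv:1011.4492 — 3 statements merged into one kernel-verified Lean document; each statement's English description precedes it below -/
import Mathlib

section
/- Let χ be a non-principal Dirichlet character modulo a prime p ≥ 10^{18} such that the order of χ (as an element of the group of Dirichlet characters mod p) is odd, and let q_1 < q_2 be the two smallest prime non-residues of χ. Then q_1·q_2 < 24·p^{1/2}·(log p)². -/
/-!
Suppose `q₁ * q₂` is large and let `h = ⌊log₄ p⌋`. Since `χ n = 1` for all positive `n < q₂` prime
to `q₁`, one can find `h` shifts `b` and many residues `a` such that `χ (a + b) = 1` for every `b`:
if `q₁ < 6h`, shift the integers prime to `q₁` by the multiples `q₁ * i`; if `q₁ ≥ 6h`, shift the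
fractions `n / b` of small height by `i`, where `0 ≤ i < h`.

Stepanov's method bounds the number of such `a`. Every `y` with `χ y = 1` satisfies `y ^ m = 1` for
some `p / 3 ≲ m < p / 2`. One looks for a combination
`∑ t j, P t j * X ^ (q * j) * ∏ b ∈ e t, (X + b) ^ m`
over subsets `e t` of the shifts vanishing to high order at every such `a`. At these points
`X ^ (q * j)` agrees with `X ^ j` and the `m`-th powers with `1`, also after differentiating, so the
vanishing conditions are few enough to be solved by linear algebra. That the combination is
nonzero follows from a Wronskian argument: dependent functions have zero Wronskian, and the
multiplicities of `∏ b ∈ e t, (X + b) ^ m` at the points `-b` force the degree of a nonzero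
Wronskian up.
-/

open Polynomial Finset

section Derivation

variable {A R : Type*} [CommRing A] [CommRing R] [Algebra A R] (D : Derivation A R R)

/-- The first-order operator `D + L`. It is the derivation `D` conjugated by an `f` with logarithmic
derivative `D f / f = L`. -/
def twistedDerivation (L : R) : Module.End A R := (D : R →ₗ[A] R) + LinearMap.mulLeft A L

lemma twistedDerivation_apply (L P : R) : twistedDerivation D L P = D P + L * P := rfl

lemma twistedDerivation_zero : twistedDerivation D 0 = (D : R →ₗ[A] R) := by
  ext P
  simp [twistedDerivation_apply]

lemma twistedDerivation_pow_mul {f L : R} (hf : D f = L * f) (L' P : R) (k : ℕ) :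
    (twistedDerivation D L' ^ k) (P * f) = (twistedDerivation D (L' + L) ^ k) P * f := by
  induction k generalizing P with
  | zero => simp
  | succ k ih =>
    rw [pow_succ, pow_succ, Module.End.mul_apply, Module.End.mul_apply, ← ih]
    congr 1
    simp only [twistedDerivation_apply, D.leibniz, smul_eq_mul]
    linear_combination P * hf

lemma derivation_pow_mul {f L : R} (hf : D f = L * f) (P : R) (k : ℕ) :
    ((D : R →ₗ[A] R) ^ k) (P * f) = (twistedDerivation D L ^ k) P * f := by
  rw [← twistedDerivation_zero, twistedDerivation_pow_mul D hf, zero_add]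

lemma twistedDerivation_pow_mul_of_derivation_eq_zero {c : R} (hc : D c = 0) (L P : R) (k : ℕ) :
    (twistedDerivation D L ^ k) (P * c) = (twistedDerivation D L ^ k) P * c := by
  simpa using twistedDerivation_pow_mul D (f := c) (L := 0) (by simpa using hc) L P k

lemma derivation_mul_pow_pred_eq_zero (p : ℕ) [Fact p.Prime] [CharP R p] {x y : R}
    (h : x * D y = D x * y) : D (y * x ^ (p - 1)) = 0 := by
  obtain ⟨q, hq⟩ := Nat.exists_eq_add_of_le' (Fact.out : p.Prime).two_le
  have hp : (q : R) + 1 + 1 = 0 := by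
    have := CharP.cast_eq_zero R p
    rw [hq] at this
    push_cast at this
    linear_combination this
  simp only [hq, D.leibniz, D.leibniz_pow, smul_eq_mul, nsmul_eq_mul, Nat.add_sub_cancel,
    show q + 2 - 1 = q + 1 by rfl]
  push_cast
  linear_combination x ^ q * h + y * x ^ q * D x * hp

/-- The Wronskian matrix of `g₀, …, gₙ₋₁` with respect to `D`. -/
def wronskianMatrix {n : ℕ} (g : Fin n → R) : Matrix (Fin n) (Fin n) R :=
  .of fun j k ↦ ((D : R →ₗ[A] R) ^ (k : ℕ)) (g j)

lemma vecMul_wronskianMatrix_apply {n : ℕ} (v g : Fin n → R) (k : Fin n) :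
    Matrix.vecMul v (wronskianMatrix D g) k =
      ∑ j, v j * ((D : R →ₗ[A] R) ^ (k : ℕ)) (g j) := rfl

lemma derivation_sum_mul_pow {n : ℕ} (v g : Fin n → R) (k : ℕ) :
    D (∑ j, v j * ((D : R →ₗ[A] R) ^ k) (g j)) =
      ∑ j, D (v j) * ((D : R →ₗ[A] R) ^ k) (g j) +
        ∑ j, v j * ((D : R →ₗ[A] R) ^ (k + 1)) (g j) := by
  rw [map_sum, ← sum_add_distrib]
  refine sum_congr rfl fun j _ ↦ ?_
  rw [pow_succ', Module.End.mul_apply, D.leibniz, Derivation.coeFn_coe]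
  simp only [smul_eq_mul]
  ring

/-- If `v` kills the rows of the Wronskian matrix and `v 0 ≠ 0`, then differentiating the relation
shows that the ratios `v j / v 0` are constants, unless the smaller Wronskian vanishes. -/
lemma mul_derivation_eq_of_vecMul_wronskianMatrix_eq_zero [IsDomain R] {n : ℕ}
    {g v : Fin (n + 1) → R}
    (hg : (wronskianMatrix D (Fin.tail g)).det ≠ 0)
    (hv : Matrix.vecMul v (wronskianMatrix D g) = 0) (j : Fin (n + 1)) :
    v 0 * D (v j) = D (v 0) * v j := by
  have hrow (k : ℕ) (hk : k < n + 1) : ∑ j, v j * ((D : R →ₗ[A] R) ^ k) (g j) = 0 :=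
    congrFun hv ⟨k, hk⟩
  have hDrow (k : ℕ) (hk : k < n) : ∑ j, D (v j) * ((D : R →ₗ[A] R) ^ k) (g j) = 0 := by
    have := derivation_sum_mul_pow D v g k
    rwa [hrow k (by lia), hrow (k + 1) (by lia), map_zero, add_zero, eq_comm] at this
  have hu : (fun j : Fin n ↦ v 0 * D (v j.succ) - D (v 0) * v j.succ) = 0 := by
    refine Matrix.eq_zero_of_vecMul_eq_zero hg (funext fun k ↦ ?_)
    have h := hrow k (by lia)
    have hD := hDrow k k.2
    rw [Fin.sum_univ_succ] at h hD
    simp only [vecMul_wronskianMatrix_apply, Fin.tail, sub_mul, sum_sub_distrib, mul_assoc,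
      ← mul_sum, Pi.zero_apply]
    linear_combination v 0 * hD - D (v 0) * h
  refine Fin.cases (by ring) (fun j ↦ ?_) j
  exact sub_eq_zero.mp (congrFun hu j)

theorem exists_constants_of_det_wronskianMatrix_eq_zero [IsDomain R] (p : ℕ) [Fact p.Prime]
    [CharP R p] {n : ℕ} {g : Fin n → R} (hg : (wronskianMatrix D g).det = 0) :
    ∃ c : Fin n → R, c ≠ 0 ∧ (∀ j, D (c j) = 0) ∧ ∑ j, c j * g j = 0 := by
  induction n with
  | zero => simp at hg
  | succ n ih =>
    by_cases htail : (wronskianMatrix D (Fin.tail g)).det = 0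
    · obtain ⟨c, hc0, hDc, hsum⟩ := ih htail
      refine ⟨Fin.cons 0 c, fun h ↦ hc0 (funext fun j ↦ congrFun h j.succ), ?_, ?_⟩
      · exact Fin.cases (map_zero D) hDc
      · simpa [Fin.sum_univ_succ, Fin.tail] using hsum
    obtain ⟨v, hv0, hv⟩ := Matrix.exists_vecMul_eq_zero_iff.mpr hg
    have hratio := mul_derivation_eq_of_vecMul_wronskianMatrix_eq_zero D htail hv
    have hv00 : v 0 ≠ 0 := by
      intro h0
      have hvtail : Fin.tail v = 0 := by
        refine Matrix.eq_zero_of_vecMul_eq_zero htail (funext fun k ↦ ?_)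
        have := congrFun hv k.castSucc
        rw [vecMul_wronskianMatrix_apply, Fin.sum_univ_succ, h0, zero_mul, zero_add] at this
        exact this
      exact hv0 (funext (Fin.cases h0 (congrFun hvtail)))
    refine ⟨fun j ↦ v j * v 0 ^ (p - 1), fun h ↦ ?_, fun j ↦ ?_, ?_⟩
    · exact mul_ne_zero hv00 (pow_ne_zero _ hv00) (congrFun h 0)
    · exact derivation_mul_pow_pred_eq_zero D p (hratio j)
    · have := congrFun hv 0
      simp only [vecMul_wronskianMatrix_apply, Fin.val_zero, pow_zero, Module.End.one_apply,
        Pi.zero_apply] at this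
      simp only [mul_right_comm, ← sum_mul, this, zero_mul]

/-- The Wronskian of the products `Q j * f j`, divided by the product of the `f j`, when `L j` is
the logarithmic derivative of `f j`. -/
def twistedWronskian {n : ℕ} (L Q : Fin n → R) : R :=
  (Matrix.of fun j k : Fin n ↦ (twistedDerivation D (L j) ^ (k : ℕ)) (Q j)).det

lemma det_wronskianMatrix_mul {n : ℕ} {f L : Fin n → R} (hf : ∀ j, D (f j) = L j * f j)
    (Q : Fin n → R) :
    (wronskianMatrix D fun j ↦ Q j * f j).det = (∏ j, f j) * twistedWronskian D L Q := by
  rw [twistedWronskian, ← Matrix.det_mul_column]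
  congr 1
  ext j k
  simp only [wronskianMatrix, Matrix.of_apply, derivation_pow_mul D (hf j), mul_comm (f j)]

lemma twistedWronskian_ne_zero [IsDomain R] (p : ℕ) [Fact p.Prime] [CharP R p] {n : ℕ}
    {f L Q : Fin n → R} (hf : ∀ j, D (f j) = L j * f j)
    (hind : ∀ c : Fin n → R, (∀ j, D (c j) = 0) → ∑ j, c j * (Q j * f j) = 0 → c = 0) :
    twistedWronskian D L Q ≠ 0 := by
  intro h
  have hdet : (wronskianMatrix D fun j ↦ Q j * f j).det = 0 := by
    rw [det_wronskianMatrix_mul D hf, h, mul_zero]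
  obtain ⟨c, hc0, hDc, hc⟩ := exists_constants_of_det_wronskianMatrix_eq_zero D p hdet
  exact hc0 (hind c hDc hc)

/-- Both sides are, up to the common factor `∏ j, f j`, maximal minors of a matrix whose rows sum
to zero. -/
lemma associated_mul_twistedWronskian [IsDomain R] {n : ℕ} {f L Q : Fin (n + 1) → R}
    (hf : ∀ j, D (f j) = L j * f j) (hf0 : ∀ j, f j ≠ 0) (hsum : ∑ j, Q j * f j = 0)
    (a b : Fin (n + 1)) :
    Associated (f b * twistedWronskian D (L ∘ a.succAbove) (Q ∘ a.succAbove))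
      (f a * twistedWronskian D (L ∘ b.succAbove) (Q ∘ b.succAbove)) := by
  set M : Matrix (Fin (n + 1)) (Fin n) R :=
    .of fun j k ↦ ((D : R →ₗ[A] R) ^ (k : ℕ)) (Q j * f j)
  have hrows : ∑ j, M j = 0 := by
    funext k
    have := congrArg ((D : R →ₗ[A] R) ^ (k : ℕ)) hsum
    rw [map_sum, map_zero] at this
    exact (Finset.sum_apply k univ M).trans this
  have hminor (c : Fin (n + 1)) : f c * (M.submatrix c.succAbove id).det =
      (∏ j, f j) * twistedWronskian D (L ∘ c.succAbove) (Q ∘ c.succAbove) := by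
    rw [Fin.prod_univ_succAbove f c, mul_assoc]
    exact congrArg _ (det_wronskianMatrix_mul D (fun j ↦ hf (c.succAbove j)) (Q ∘ c.succAbove))
  have hab := Matrix.submatrix_succAbove_det_eq_negOnePow_submatrix_succAbove_det M hrows b a
  refine ⟨Units.map (Int.castRingHom R).toMonoidHom (Int.negOnePow (b - a)), ?_⟩
  apply mul_left_cancel₀ (prod_ne_zero_iff.mpr fun j _ ↦ hf0 j : ∏ j, f j ≠ 0)
  have ha := hminor a
  have hb := hminor b
  rw [hab, Units.smul_def, zsmul_eq_mul] at hb
  simp only [Units.coe_map, RingHom.toMonoidHom_eq_coe, MonoidHom.coe_coe, eq_intCast]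
  linear_combination f a * hb - f b * ((Int.negOnePow (b - a) : ℤ) : R) * ha

end Derivation

section PseudoDegree

variable {R : Type*} [CommRing R]

/-- The polynomials killed by `n + 1` derivatives. This submodule contains the polynomials of degree
at most `n`, but in characteristic `p` it ignores factors that are polynomials in `X ^ p`. -/
noncomputable def pseudoDegreeLE (R : Type*) [CommRing R] (n : ℕ) : Submodule R R[X] :=
  LinearMap.ker ((derivative : R[X] →ₗ[R] R[X]) ^ (n + 1))

lemma mem_pseudoDegreeLE {n : ℕ} {P : R[X]} :
    P ∈ pseudoDegreeLE R n ↔ derivative^[n + 1] P = 0 := by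
  rw [pseudoDegreeLE, LinearMap.mem_ker, Module.End.pow_apply]

lemma iterate_derivative_eq_zero_of_mem_pseudoDegreeLE {n k : ℕ} {P : R[X]}
    (hP : P ∈ pseudoDegreeLE R n) (hnk : n < k) : derivative^[k] P = 0 := by
  obtain ⟨c, rfl⟩ := Nat.exists_eq_add_of_le' hnk
  rw [Function.iterate_add_apply, mem_pseudoDegreeLE.mp hP, iterate_derivative_zero]

lemma mem_pseudoDegreeLE_of_natDegree_le {n : ℕ} {P : R[X]} (hP : P.natDegree ≤ n) :
    P ∈ pseudoDegreeLE R n :=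
  mem_pseudoDegreeLE.mpr (iterate_derivative_eq_zero (Nat.lt_succ_of_le hP))

lemma derivative_mem_pseudoDegreeLE {n : ℕ} {P : R[X]} (hP : P ∈ pseudoDegreeLE R n) :
    derivative P ∈ pseudoDegreeLE R n := by
  rw [mem_pseudoDegreeLE] at hP ⊢
  rw [← Function.iterate_succ_apply, Function.iterate_succ_apply', hP, derivative_zero]

lemma mul_mem_pseudoDegreeLE {a b : ℕ} {P Q : R[X]} (hP : P ∈ pseudoDegreeLE R a)
    (hQ : Q ∈ pseudoDegreeLE R b) : P * Q ∈ pseudoDegreeLE R (a + b) := by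
  rw [mem_pseudoDegreeLE, iterate_derivative_mul]
  refine sum_eq_zero fun k hk ↦ ?_
  rw [mem_range] at hk
  obtain hkb | hkb := lt_or_ge b k
  · rw [iterate_derivative_eq_zero_of_mem_pseudoDegreeLE hQ hkb, mul_zero, smul_zero]
  · rw [iterate_derivative_eq_zero_of_mem_pseudoDegreeLE hP (by lia), zero_mul, smul_zero]

lemma prod_mem_pseudoDegreeLE {ι : Type*} (s : Finset ι) {a : ι → ℕ} {P : ι → R[X]}
    (h : ∀ i ∈ s, P i ∈ pseudoDegreeLE R (a i)) :
    ∏ i ∈ s, P i ∈ pseudoDegreeLE R (∑ i ∈ s, a i) := by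
  induction s using Finset.cons_induction with
  | empty => simpa using mem_pseudoDegreeLE_of_natDegree_le (natDegree_one (R := R)).le
  | cons i s hi ih =>
    rw [prod_cons, sum_cons]
    exact mul_mem_pseudoDegreeLE (h i (mem_cons_self i s))
      (ih fun j hj ↦ h j (mem_cons_of_mem hj))

lemma det_mem_pseudoDegreeLE {ι : Type*} [Fintype ι] [DecidableEq ι] {M : Matrix ι ι R[X]}
    {a : ι → ℕ} (h : ∀ i j, M i j ∈ pseudoDegreeLE R (a j)) :
    M.det ∈ pseudoDegreeLE R (∑ j, a j) := by
  rw [Matrix.det_apply]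
  refine sum_mem fun σ _ ↦ ?_
  rw [Units.smul_def]
  exact zsmul_mem (prod_mem_pseudoDegreeLE univ fun i _ ↦ h (σ i) i) _

lemma twistedDerivation_pow_mem_pseudoDegreeLE {a h : ℕ} {B L P : R[X]}
    (hB : B ∈ pseudoDegreeLE R h) (hL : L ∈ pseudoDegreeLE R h) (hP : P ∈ pseudoDegreeLE R a)
    (k : ℕ) :
    (twistedDerivation (B • derivative') L ^ k) P ∈ pseudoDegreeLE R (a + k * h) := by
  induction k with
  | zero => simpa using hP
  | succ k ih =>
    rw [pow_succ', Module.End.mul_apply, twistedDerivation_apply,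
      show a + (k + 1) * h = h + (a + k * h) by ring]
    exact add_mem (mul_mem_pseudoDegreeLE hB (derivative_mem_pseudoDegreeLE ih))
      (mul_mem_pseudoDegreeLE hL ih)

lemma isRoot_of_natCast_rootMultiplicity_ne_zero {Q : R[X]} {x : R}
    (hx : (Q.rootMultiplicity x : R) ≠ 0) : Q.IsRoot x := by
  have hQ : Q ≠ 0 := by
    rintro rfl
    simp at hx
  exact (rootMultiplicity_pos hQ).mp (Nat.pos_of_ne_zero fun h ↦ hx (by rw [h, Nat.cast_zero]))

lemma natCast_rootMultiplicity_eq_zero_of_derivative_eq_zero [IsDomain R] {Q : R[X]}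
    (hQ0 : Q ≠ 0) (hQ : derivative Q = 0) (x : R) : (Q.rootMultiplicity x : R) = 0 := by
  by_contra hx
  have hroot := isRoot_of_natCast_rootMultiplicity_ne_zero hx
  have hle := derivative_rootMultiplicity_of_root_of_mem_nonZeroDivisors hroot
    (mem_nonZeroDivisors_of_ne_zero hx)
  have hlt := (one_lt_rootMultiplicity_iff_isRoot hQ0).mpr ⟨hroot, by simp [hQ]⟩
  rw [hQ, rootMultiplicity_zero] at hle
  lia

lemma rootMultiplicity_mod_le [IsDomain R] (p : ℕ) [CharP R p] {N : ℕ} {Q : R[X]} (hQ0 : Q ≠ 0)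
    (hQ : Q ∈ pseudoDegreeLE R N) (x : R) : Q.rootMultiplicity x % p ≤ N := by
  rw [mem_pseudoDegreeLE] at hQ
  induction N generalizing Q with
  | zero =>
    have hx := natCast_rootMultiplicity_eq_zero_of_derivative_eq_zero hQ0 hQ x
    exact (Nat.mod_eq_zero_of_dvd ((CharP.cast_eq_zero_iff R p _).mp hx)).le
  | succ N ih =>
    by_cases hx : (Q.rootMultiplicity x : R) = 0
    · rw [Nat.mod_eq_zero_of_dvd ((CharP.cast_eq_zero_iff R p _).mp hx)]
      exact zero_le
    have hroot := isRoot_of_natCast_rootMultiplicity_ne_zero hx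
    have hQ' : derivative Q ≠ 0 := fun h ↦
      hx (natCast_rootMultiplicity_eq_zero_of_derivative_eq_zero hQ0 h x)
    have hle := ih hQ' hQ
    rw [derivative_rootMultiplicity_of_root_of_mem_nonZeroDivisors hroot
      (mem_nonZeroDivisors_of_ne_zero hx)] at hle
    calc Q.rootMultiplicity x % p
        = (Q.rootMultiplicity x - 1 + 1) % p := by
          rw [Nat.sub_add_cancel ((rootMultiplicity_pos hQ0).mpr hroot)]
      _ ≤ (Q.rootMultiplicity x - 1) % p + 1 % p := by
          rw [Nat.add_mod]
          exact Nat.mod_le _ _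
      _ ≤ N + 1 := add_le_add hle (Nat.mod_le _ _)

end PseudoDegree

section ShiftProd

variable {R : Type*} [CommRing R]

/-- The product of the linear polynomials `X + b` for `b ∈ S`. -/
noncomputable def shiftProd (S : Finset R) : R[X] := ∏ b ∈ S, (X + C b)

/-- The logarithmic derivative of `shiftProd e ^ m` with respect to `shiftProd S • derivative'`; it
is a polynomial for `e ⊆ S`. -/
noncomputable def shiftLogDeriv [DecidableEq R] (S : Finset R) (m : ℕ) (e : Finset R) : R[X] :=
  C (m : R) * derivative (shiftProd e) * shiftProd (S \ e)

lemma monic_shiftProd (S : Finset R) : (shiftProd S).Monic :=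
  monic_prod_of_monic _ _ fun b _ ↦ monic_X_add_C b

lemma natDegree_shiftProd [Nontrivial R] (S : Finset R) : (shiftProd S).natDegree = #S := by
  rw [shiftProd, natDegree_prod_of_monic _ _ fun b _ ↦ monic_X_add_C b]
  simp

lemma eval_shiftProd (S : Finset R) (a : R) : (shiftProd S).eval a = ∏ b ∈ S, (a + b) := by
  simp [shiftProd, eval_prod]

lemma shiftProd_smul_derivative_pow [DecidableEq R] {S e : Finset R} (he : e ⊆ S) (m : ℕ) :
    (shiftProd S • derivative' : Derivation R R[X] R[X]) (shiftProd e ^ m) =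
      shiftLogDeriv S m e * shiftProd e ^ m := by
  have hS : shiftProd S = shiftProd (S \ e) * shiftProd e := (prod_sdiff he).symm
  change shiftProd S * derivative (shiftProd e ^ m) = _
  cases m with
  | zero => simp [shiftLogDeriv]
  | succ m =>
    rw [hS, shiftLogDeriv, derivative_pow, Nat.add_sub_cancel]
    ring

lemma natDegree_shiftLogDeriv_le [Nontrivial R] [DecidableEq R] {S e : Finset R} (he : e ⊆ S)
    (m : ℕ) : (shiftLogDeriv S m e).natDegree ≤ #S := by
  calc (shiftLogDeriv S m e).natDegree
      ≤ (C (m : R) * derivative (shiftProd e)).natDegree + (shiftProd (S \ e)).natDegree :=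
        natDegree_mul_le
    _ ≤ #e + #(S \ e) := by
        rw [natDegree_shiftProd]
        gcongr
        calc _ ≤ (derivative (shiftProd e)).natDegree := natDegree_C_mul_le _ _
          _ ≤ (shiftProd e).natDegree - 1 := natDegree_derivative_le _
          _ ≤ #e := by rw [natDegree_shiftProd]; exact Nat.sub_le _ _
    _ = #S := by rw [add_comm, card_sdiff_add_card_eq_card he]

lemma rootMultiplicity_shiftProd_pow [IsDomain R] [DecidableEq R] (e : Finset R) (m : ℕ) (x : R) :
    (shiftProd e ^ m).rootMultiplicity (-x) = if x ∈ e then m else 0 := by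
  rw [← count_roots, roots_pow, Multiset.count_nsmul, shiftProd,
    roots_prod _ _ (monic_shiftProd e).ne_zero, Multiset.count_bind]
  simp [Multiset.count_singleton]

lemma not_associated_shiftProd_pow_mul [IsDomain R] (p : ℕ) [CharP R p] {e₁ e₂ : Finset R} {x : R}
    (hx₁ : x ∉ e₁) (hx₂ : x ∈ e₂) {m N : ℕ} (hN : N < m) (hm : 2 * m < p) {P Q : R[X]} (hP0 : P ≠ 0)
    (hP : P ∈ pseudoDegreeLE R N) (hQ0 : Q ≠ 0) (hQ : Q ∈ pseudoDegreeLE R N) :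
    ¬ Associated (shiftProd e₁ ^ m * P) (shiftProd e₂ ^ m * Q) := by
  classical
  intro h
  have hne (e : Finset R) : shiftProd e ^ m ≠ 0 := pow_ne_zero m (monic_shiftProd e).ne_zero
  have hroots : P.rootMultiplicity (-x) = m + Q.rootMultiplicity (-x) := by
    have := congrArg (Multiset.count (-x)) h.roots_eq
    simpa only [count_roots, rootMultiplicity_mul (mul_ne_zero (hne _) hP0),
      rootMultiplicity_mul (mul_ne_zero (hne _) hQ0), rootMultiplicity_shiftProd_pow, if_neg hx₁,
      if_pos hx₂, zero_add] using this
  have hPx := rootMultiplicity_mod_le p hP0 hP (-x)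
  have hQx := rootMultiplicity_mod_le p hQ0 hQ (-x)
  rw [hroots, Nat.add_mod, Nat.mod_eq_of_lt (by lia : m < p), Nat.mod_eq_of_lt (by lia)] at hPx
  lia

lemma twistedWronskian_shiftLogDeriv_mem_pseudoDegreeLE [Nontrivial R] [DecidableEq R]
    {S : Finset R} (m : ℕ) {n d : ℕ} {e : Fin n → Finset R} (he : ∀ j, e j ⊆ S) {Q : Fin n → R[X]}
    (hQ : ∀ j, Q j ∈ pseudoDegreeLE R d) :
    twistedWronskian (shiftProd S • derivative') (fun j ↦ shiftLogDeriv S m (e j)) Q ∈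
      pseudoDegreeLE R (∑ k ∈ range n, (d + k * #S)) := by
  rw [← Fin.sum_univ_eq_sum_range fun k ↦ d + k * #S]
  exact det_mem_pseudoDegreeLE fun i j ↦ twistedDerivation_pow_mem_pseudoDegreeLE
    (mem_pseudoDegreeLE_of_natDegree_le (natDegree_shiftProd S).le)
    (mem_pseudoDegreeLE_of_natDegree_le (natDegree_shiftLogDeriv_le (he i) m)) (hQ i) j

lemma sum_mul_shiftProd_pow_ne_zero [IsDomain R] (p : ℕ) [Fact p.Prime] [CharP R p] {S : Finset R}
    {m n d : ℕ} (hm : 2 * m < p) (hN : ∑ k ∈ range (n + 1), (d + k * #S) < m)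
    {e : Fin (n + 2) → Finset R} (he : Function.Injective e) (heS : ∀ j, e j ⊆ S)
    {Q : Fin (n + 2) → R[X]} (hQ : ∀ j, Q j ∈ pseudoDegreeLE R d)
    (hind : ∀ (a : Fin (n + 2)) (c : Fin (n + 1) → R[X]), (∀ j, derivative (c j) = 0) →
      ∑ j, c j * (Q (a.succAbove j) * shiftProd (e (a.succAbove j)) ^ m) = 0 → c = 0) :
    ∑ j, Q j * shiftProd (e j) ^ m ≠ 0 := by
  classical
  intro hsum
  set L : Fin (n + 2) → R[X] := fun j ↦ shiftLogDeriv S m (e j)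
  set W : Fin (n + 2) → R[X] := fun a ↦
    twistedWronskian (shiftProd S • derivative') (L ∘ a.succAbove) (Q ∘ a.succAbove)
  have hL j := shiftProd_smul_derivative_pow (heS j) m
  have hW a : W a ∈ pseudoDegreeLE R (∑ k ∈ range (n + 1), (d + k * #S)) :=
    twistedWronskian_shiftLogDeriv_mem_pseudoDegreeLE m (fun j ↦ heS (a.succAbove j))
      fun j ↦ hQ (a.succAbove j)
  have hW0 a : W a ≠ 0 := by
    refine twistedWronskian_ne_zero _ p (fun j ↦ hL (a.succAbove j)) fun c hc ↦ hind a c fun j ↦ ?_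
    exact (mul_eq_zero.mp (hc j)).resolve_left (monic_shiftProd S).ne_zero
  obtain ⟨a, b, x, hxa, hxb⟩ : ∃ a b x, x ∈ e a ∧ x ∉ e b := by
    by_contra! h
    exact absurd (he (Subset.antisymm (h 0 1) (h 1 0))) (by simp)
  exact not_associated_shiftProd_pow_mul p hxb hxa hN hm (hW0 a) (hW a) (hW0 b) (hW b)
    (associated_mul_twistedWronskian _ hL
      (fun j ↦ pow_ne_zero m (monic_shiftProd (e j)).ne_zero) hsum a b)

theorem eq_zero_of_sum_mul_shiftProd_pow_eq_zero [IsDomain R] (p : ℕ) [Fact p.Prime] [CharP R p]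
    {S : Finset R} {m n d : ℕ} (hm : 2 * m < p) (hN : ∑ k ∈ range n, (d + k * #S) < m)
    {e : Fin n → Finset R} (he : Function.Injective e) (heS : ∀ j, e j ⊆ S)
    {Q : Fin n → R[X]} (hQ : ∀ j, Q j ∈ pseudoDegreeLE R d)
    (hsum : ∑ j, Q j * shiftProd (e j) ^ m = 0) : Q = 0 := by
  induction n with
  | zero => exact Subsingleton.elim _ _
  | succ n ih =>
    rw [sum_range_succ] at hN
    have ih' (a : Fin (n + 1)) {Q' : Fin n → R[X]} (hQ' : ∀ j, Q' j ∈ pseudoDegreeLE R d) :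
        ∑ j, Q' j * shiftProd (e (a.succAbove j)) ^ m = 0 → Q' = 0 :=
      ih (by lia) (he.comp Fin.succAbove_right_injective) (fun j ↦ heS _) hQ'
    obtain ⟨a, ha⟩ : ∃ a, Q a = 0 := by
      by_contra! hne
      obtain _ | n := n
      · rw [Fin.sum_univ_one] at hsum
        exact mul_ne_zero (hne 0) (pow_ne_zero m (monic_shiftProd (e 0)).ne_zero) hsum
      refine sum_mul_shiftProd_pow_ne_zero p hm (by lia) he heS hQ (fun a c hc hcsum ↦ ?_) hsum
      have hcQ j : c j * Q (a.succAbove j) ∈ pseudoDegreeLE R d := by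
        simpa using mul_mem_pseudoDegreeLE (mem_pseudoDegreeLE.mpr (hc j) : _ ∈ pseudoDegreeLE R 0)
          (hQ (a.succAbove j))
      have hzero := ih' a hcQ (by simpa only [mul_assoc] using hcsum)
      exact funext fun j ↦ (mul_eq_zero.mp (congrFun hzero j)).resolve_right (hne _)
    rw [Fin.sum_univ_succAbove _ a, ha, zero_mul, zero_add] at hsum
    have hrest := ih' a (fun j ↦ hQ (a.succAbove j)) hsum
    exact funext fun j ↦ Fin.succAboveCases a ha (congrFun hrest) j

end ShiftProd

section PolynomialMethod

lemma mul_mem_degreeLT {R : Type*} [CommRing R] {P Q : R[X]} {a b : ℕ} (hP : P.natDegree ≤ a)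
    (hQ : Q ∈ degreeLT R b) : P * Q ∈ degreeLT R (b + a) := by
  obtain rfl | hQ0 := eq_or_ne Q 0
  · simp
  rw [mem_degreeLT] at hQ ⊢
  have hQb := (natDegree_lt_iff_degree_lt hQ0).mpr hQ
  have hlt : (P * Q).natDegree < b + a := natDegree_mul_le.trans_lt (by lia)
  exact degree_le_natDegree.trans_lt (mod_cast hlt)

lemma twistedDerivation_pow_mem_degreeLT {R : Type*} [CommRing R] {B L P : R[X]} {d h : ℕ}
    (hB : B.natDegree ≤ h) (hL : L.natDegree ≤ h) (hP : P ∈ degreeLT R d) (k : ℕ) :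
    (twistedDerivation (B • derivative') L ^ k) P ∈ degreeLT R (d + k * h) := by
  induction k with
  | zero => simpa using hP
  | succ k ih =>
    rw [pow_succ', Module.End.mul_apply, twistedDerivation_apply, Nat.succ_mul, ← add_assoc]
    refine add_mem (mul_mem_degreeLT hB ?_) (mul_mem_degreeLT hL ih)
    exact mem_degreeLT.mpr (degree_derivative_le.trans_lt (mem_degreeLT.mp ih))

lemma eq_zero_of_sum_mul_X_pow_eq_zero {R : Type*} [CommRing R] {d q J : ℕ} (hd : d ≤ q)
    {P : Fin J → R[X]} (hP : ∀ j, P j ∈ degreeLT R d)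
    (hsum : ∑ j, P j * X ^ ((j : ℕ) * q) = 0) : P = 0 := by
  nontriviality R
  induction J with
  | zero => exact Subsingleton.elim _ _
  | succ J ih =>
    have hsplit : P 0 + X ^ q * ∑ j : Fin J, P j.succ * X ^ ((j : ℕ) * q) = 0 := by
      rw [← hsum, Fin.sum_univ_succ, mul_sum]
      congr 1
      · simp
      · refine sum_congr rfl fun j _ ↦ ?_
        rw [Fin.val_succ]
        ring
    have hdvd : X ^ q ∣ P 0 :=
      (dvd_add_left (dvd_mul_right _ _)).mp (hsplit ▸ dvd_zero (X ^ q))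
    have hP0 : P 0 = 0 := by
      by_contra h0
      refine (monic_X_pow q).not_dvd_of_degree_lt h0 ?_ hdvd
      rw [degree_X_pow]
      exact (mem_degreeLT.mp (hP 0)).trans_le (mod_cast hd)
    rw [hP0, zero_add, (monic_X_pow q).mul_right_eq_zero_iff] at hsplit
    exact funext (Fin.cases hP0 (congrFun (ih (fun j ↦ hP j.succ) hsplit)))

lemma exists_ne_zero_forall_eq_zero_of_sum_lt_finrank {K V : Type*} [Field K] [AddCommGroup V]
    [Module K V] {M : ℕ} (Φ : Fin M → V →ₗ[K] K[X]) (d : Fin M → ℕ)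
    (hΦ : ∀ k v, Φ k v ∈ degreeLT K (d k)) (hd : ∑ k, d k < Module.finrank K V) :
    ∃ v ≠ 0, ∀ k, Φ k v = 0 := by
  have : Module.Finite K V := Module.finite_of_finrank_pos (Nat.zero_lt_of_lt hd)
  let Ψ : V →ₗ[K] ∀ k, degreeLT K (d k) := LinearMap.pi fun k ↦ (Φ k).codRestrict _ (hΦ k)
  have hker : LinearMap.ker Ψ ≠ ⊥ := by
    refine LinearMap.ker_ne_bot_of_finrank_lt ?_
    simpa [Module.finrank_pi_fintype, (degreeLTEquiv K _).finrank_eq] using hd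
  obtain ⟨v, hv, hv0⟩ := Submodule.exists_mem_ne_zero_of_ne_bot hker
  exact ⟨v, hv0, fun k ↦ congrArg Subtype.val (congrFun (LinearMap.mem_ker.mp hv) k)⟩

lemma eval_derivation_pow_X_sub_C_pow_mul {R : Type*} [CommRing R] (B G : R[X]) (a : R) (k : ℕ) :
    (((B • derivative').toLinearMap ^ k) ((X - C a) ^ k * G)).eval a =
      k.factorial * B.eval a ^ k * G.eval a := by
  induction k generalizing G with
  | zero => simp
  | succ k ih =>
    have hstep : (B • derivative').toLinearMap ((X - C a) ^ (k + 1) * G) =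
        (X - C a) ^ k * (B * (((k + 1 : ℕ) : R[X]) * G + (X - C a) * derivative G)) := by
      change B * derivative ((X - C a) ^ (k + 1) * G) = _
      rw [derivative_mul, derivative_X_sub_C_pow, Nat.add_sub_cancel, C_eq_natCast]
      ring
    rw [pow_succ, Module.End.mul_apply, hstep, ih, Nat.factorial_succ]
    simp only [eval_mul, eval_add, eval_natCast, eval_sub, eval_X, eval_C, sub_self, zero_mul,
      add_zero]
    push_cast
    ring

lemma X_sub_C_pow_dvd_of_eval_derivation_pow {R : Type*} [CommRing R] [IsDomain R] (p : ℕ)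
    [Fact p.Prime] [CharP R p] {B G : R[X]} {a : R} (hB : B.eval a ≠ 0) {M : ℕ} (hM : M ≤ p)
    (h : ∀ k < M, (((B • derivative').toLinearMap ^ k) G).eval a = 0) : (X - C a) ^ M ∣ G := by
  induction M with
  | zero => simp
  | succ M ih =>
    obtain ⟨H, rfl⟩ := ih (by lia) fun k hk ↦ h k (by lia)
    have hM0 := h M (by lia)
    have hfact : (M.factorial : R) ≠ 0 := by
      rw [Ne, CharP.cast_eq_zero_iff R p, (Fact.out : p.Prime).dvd_factorial]
      lia
    rw [eval_derivation_pow_X_sub_C_pow_mul] at hM0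
    have hroot : H.IsRoot a :=
      (mul_eq_zero.mp hM0).resolve_left (mul_ne_zero hfact (pow_ne_zero _ hB))
    rw [pow_succ]
    exact mul_dvd_mul_left _ (dvd_iff_isRoot.mpr hroot)

end PolynomialMethod

section AuxiliaryPolynomial

variable {R : Type*} [CommRing R] {T J : ℕ}

/-- The auxiliary polynomial of Stepanov's method: a combination of the products `shiftProd (e t)`
raised to the power `m`, with coefficients written in base `X ^ q`. -/
noncomputable def auxPoly (q m : ℕ) (e : Fin T → Finset R) (P : Fin T → Fin J → R[X]) : R[X] :=
  ∑ t, (∑ j, P t j * X ^ ((j : ℕ) * q)) * shiftProd (e t) ^ m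

/-- What the `k`-th derivative of `auxPoly q m e P` along `shiftProd S • derivative'` becomes when
`X ^ q` is replaced by `X` and each `shiftProd (e t) ^ m` by `1`. -/
noncomputable def reducedAuxPoly [DecidableEq R] (S : Finset R) (m : ℕ) (e : Fin T → Finset R)
    (k : ℕ) : (Fin T → Fin J → R[X]) →ₗ[R] R[X] :=
  ∑ t : Fin T, ∑ j : Fin J, LinearMap.mulRight R (X ^ (j : ℕ)) ∘ₗ
    (twistedDerivation (shiftProd S • derivative') (shiftLogDeriv S m (e t)) ^ k) ∘ₗ
      LinearMap.proj j ∘ₗ LinearMap.proj t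

lemma reducedAuxPoly_apply [DecidableEq R] (S : Finset R) (m : ℕ) (e : Fin T → Finset R) (k : ℕ)
    (P : Fin T → Fin J → R[X]) :
    reducedAuxPoly S m e k P = ∑ t, ∑ j, (twistedDerivation (shiftProd S • derivative')
      (shiftLogDeriv S m (e t)) ^ k) (P t j) * X ^ (j : ℕ) := by
  simp [reducedAuxPoly]

lemma reducedAuxPoly_mem_degreeLT [Nontrivial R] [DecidableEq R] {S : Finset R} (m : ℕ)
    {e : Fin T → Finset R} (he : ∀ t, e t ⊆ S) {d : ℕ} {P : Fin T → Fin J → R[X]}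
    (hP : ∀ t j, P t j ∈ degreeLT R d) (k : ℕ) :
    reducedAuxPoly S m e k P ∈ degreeLT R (d + k * #S + J) := by
  rw [reducedAuxPoly_apply]
  refine sum_mem fun t _ ↦ sum_mem fun j _ ↦ ?_
  rw [mul_comm _ (X ^ _)]
  exact mul_mem_degreeLT (natDegree_X_pow_le _ |>.trans j.2.le)
    (twistedDerivation_pow_mem_degreeLT (natDegree_shiftProd S).le
      (natDegree_shiftLogDeriv_le (he t) m) (hP t j) k)

lemma natDegree_auxPoly_le [Nontrivial R] {S : Finset R} (q m : ℕ) {e : Fin T → Finset R}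
    (he : ∀ t, e t ⊆ S) {d : ℕ} {P : Fin T → Fin J → R[X]} (hP : ∀ t j, P t j ∈ degreeLT R d) :
    (auxPoly q m e P).natDegree ≤ d + (J - 1) * q + m * #S := by
  refine natDegree_sum_le_of_forall_le _ _ fun t _ ↦ natDegree_mul_le.trans (add_le_add ?_ ?_)
  · refine natDegree_sum_le_of_forall_le _ _ fun j _ ↦ natDegree_mul_le.trans (add_le_add ?_ ?_)
    · exact natDegree_le_iff_degree_le.mpr (mem_degreeLT.mp (hP t j)).le
    · rw [natDegree_X_pow]
      gcongr
      lia
  · refine natDegree_pow_le.trans ?_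
    rw [natDegree_shiftProd]
    gcongr
    exact he t

lemma derivative_X_pow_mul_eq_zero {q : ℕ} (hq : (q : R) = 0) (j : ℕ) :
    derivative (X ^ (j * q) : R[X]) = 0 := by
  simp [derivative_X_pow, hq]

lemma auxPoly_ne_zero [IsDomain R] (p : ℕ) [Fact p.Prime] [CharP R p] {S : Finset R} {q m d : ℕ}
    (hq : (q : R) = 0) (hdq : d ≤ q) (hm : 2 * m < p) (hT : ∑ k ∈ range T, (d + k * #S) < m)
    {e : Fin T → Finset R} (he : Function.Injective e) (heS : ∀ t, e t ⊆ S)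
    {P : Fin T → Fin J → R[X]} (hP : ∀ t j, P t j ∈ degreeLT R d) (hP0 : P ≠ 0) :
    auxPoly q m e P ≠ 0 := by
  intro h
  have hQ (t : Fin T) : ∑ j, P t j * X ^ ((j : ℕ) * q) ∈ pseudoDegreeLE R d := by
    refine sum_mem fun j _ ↦ mul_mem_pseudoDegreeLE (b := 0) ?_
      (mem_pseudoDegreeLE.mpr (derivative_X_pow_mul_eq_zero hq j))
    exact mem_pseudoDegreeLE_of_natDegree_le
      (natDegree_le_iff_degree_le.mpr (mem_degreeLT.mp (hP t j)).le)
  have hzero := eq_zero_of_sum_mul_shiftProd_pow_eq_zero p hm hT he heS hQ h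
  exact hP0 (funext fun t ↦
    eq_zero_of_sum_mul_X_pow_eq_zero (P := P t) hdq (hP t) (congrFun hzero t))

lemma derivation_pow_auxPoly [DecidableEq R] {S : Finset R} {q : ℕ} (hq : (q : R) = 0) (m : ℕ)
    {e : Fin T → Finset R} (heS : ∀ t, e t ⊆ S) (P : Fin T → Fin J → R[X]) (k : ℕ) :
    ((shiftProd S • derivative').toLinearMap ^ k) (auxPoly q m e P) =
      ∑ t, ∑ j, (twistedDerivation (shiftProd S • derivative') (shiftLogDeriv S m (e t)) ^ k)
        (P t j) * X ^ ((j : ℕ) * q) * shiftProd (e t) ^ m := by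
  have hconst (j : Fin J) :
      (shiftProd S • derivative' : Derivation R R[X] R[X]) (X ^ ((j : ℕ) * q)) = 0 := by
    change shiftProd S * derivative (X ^ ((j : ℕ) * q)) = 0
    rw [derivative_X_pow_mul_eq_zero hq, mul_zero]
  rw [auxPoly, map_sum]
  refine sum_congr rfl fun t _ ↦ ?_
  rw [derivation_pow_mul _ (shiftProd_smul_derivative_pow (heS t) m), map_sum, sum_mul]
  refine sum_congr rfl fun j _ ↦ ?_
  rw [twistedDerivation_pow_mul_of_derivation_eq_zero _ (hconst j)]

lemma eval_derivation_pow_auxPoly [DecidableEq R] {S : Finset R} {q m : ℕ} (hq : (q : R) = 0)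
    {e : Fin T → Finset R} (heS : ∀ t, e t ⊆ S) (P : Fin T → Fin J → R[X]) {a : R}
    (haq : a ^ q = a) (ha : ∀ b ∈ S, (a + b) ^ m = 1) (k : ℕ) :
    (((shiftProd S • derivative').toLinearMap ^ k) (auxPoly q m e P)).eval a =
      (reducedAuxPoly S m e k P).eval a := by
  have hshift (t : Fin T) : (shiftProd (e t) ^ m).eval a = 1 := by
    rw [eval_pow, eval_shiftProd, ← prod_pow]
    exact prod_eq_one fun b hb ↦ ha b (heS t hb)
  rw [derivation_pow_auxPoly hq m heS, reducedAuxPoly_apply]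
  simp only [eval_finsetSum, eval_mul, hshift, mul_one]
  refine sum_congr rfl fun t _ ↦ sum_congr rfl fun j _ ↦ ?_
  rw [eval_pow, eval_pow, eval_X, mul_comm (j : ℕ), pow_mul, haq]

lemma exists_ne_zero_forall_reducedAuxPoly_eq_zero {F : Type*} [Field F] [DecidableEq F]
    {S : Finset F} (m : ℕ) {e : Fin T → Finset F} (heS : ∀ t, e t ⊆ S) {d M : ℕ}
    (hM : ∑ k ∈ range M, (d + k * #S + J) < T * (J * d)) :
    ∃ P : Fin T → Fin J → F[X], P ≠ 0 ∧ (∀ t j, P t j ∈ degreeLT F d) ∧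
      ∀ k < M, reducedAuxPoly S m e k P = 0 := by
  let ι : (Fin T → Fin J → degreeLT F d) →ₗ[F] Fin T → Fin J → F[X] :=
    LinearMap.compLeft (LinearMap.compLeft (degreeLT F d).subtype (Fin J)) (Fin T)
  have hfinrank : Module.finrank F (Fin T → Fin J → degreeLT F d) = T * (J * d) := by
    simp [Module.finrank_pi_fintype, (degreeLTEquiv F d).finrank_eq]
  obtain ⟨P, hP0, hP⟩ := exists_ne_zero_forall_eq_zero_of_sum_lt_finrank
    (fun k : Fin M ↦ reducedAuxPoly S m e k ∘ₗ ι) (fun k ↦ d + k * #S + J)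
    (fun k P ↦ reducedAuxPoly_mem_degreeLT m heS (fun t j ↦ (P t j).2) k)
    (by rwa [hfinrank, Fin.sum_univ_eq_sum_range fun k ↦ d + k * #S + J])
  refine ⟨ι P, fun h ↦ hP0 ?_, fun t j ↦ (P t j).2, fun k hk ↦ hP ⟨k, hk⟩⟩
  exact funext fun t ↦ funext fun j ↦ Subtype.ext (congrFun (congrFun h t) j)

lemma prod_X_sub_C_pow_dvd {F : Type*} [Field F] {A : Finset F} {M : ℕ} {G : F[X]}
    (h : ∀ a ∈ A, (X - C a) ^ M ∣ G) : (∏ a ∈ A, (X - C a)) ^ M ∣ G := by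
  rw [← prod_pow]
  refine prod_dvd_of_coprime (fun a _ b _ hab ↦ ?_) h
  exact (isCoprime_X_sub_C_of_isUnit_sub (sub_ne_zero.mpr hab).isUnit).pow

/-- The auxiliary polynomial vanishes to order `M` at every point of `A`. -/
theorem mul_card_le_of_forall_add_pow_eq_one {F : Type*} [Field F] [Fintype F] (p : ℕ)
    [Fact p.Prime] [CharP F p] {S A : Finset F} {m d J M T : ℕ} (hm0 : 0 < m) (hm : 2 * m < p)
    (hTS : T ≤ 2 ^ #S) (hT : ∑ k ∈ range T, (d + k * #S) < m)
    (hM : ∑ k ∈ range M, (d + k * #S + J) < T * (J * d)) (hd : d ≤ Fintype.card F) (hMp : M ≤ p)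
    (hA : ∀ a ∈ A, ∀ b ∈ S, (a + b) ^ m = 1) :
    M * #A ≤ d + (J - 1) * Fintype.card F + m * #S := by
  classical
  obtain ⟨e, heS, he⟩ : ∃ e : Fin T → Finset F, (∀ t, e t ⊆ S) ∧ Function.Injective e := by
    obtain ⟨f⟩ : Nonempty (Fin T ↪ S.powerset) :=
      Function.Embedding.nonempty_of_card_le
        (by rwa [Fintype.card_fin, Fintype.card_coe, card_powerset])
    exact ⟨fun t ↦ f t, fun t ↦ mem_powerset.mp (f t).2, Subtype.val_injective.comp f.injective⟩
  have hq : (Fintype.card F : F) = 0 := FiniteField.cast_card_eq_zero F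
  obtain ⟨P, hP0, hP, hPM⟩ := exists_ne_zero_forall_reducedAuxPoly_eq_zero m heS hM
  set G := auxPoly (Fintype.card F) m e P with hG
  have hG0 : G ≠ 0 := auxPoly_ne_zero p hq hd hm hT he heS hP hP0
  have hdvd : ∀ a ∈ A, (X - C a) ^ M ∣ G := by
    intro a ha
    refine X_sub_C_pow_dvd_of_eval_derivation_pow p (B := shiftProd S) ?_ hMp fun k hk ↦ ?_
    · rw [eval_shiftProd, prod_ne_zero_iff]
      exact fun b hb h0 ↦ by simpa [h0, hm0.ne'] using hA a ha b hb
    · rw [hG, eval_derivation_pow_auxPoly hq heS P (FiniteField.pow_card a) (hA a ha), hPM k hk,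
        eval_zero]
  calc M * #A = ((∏ a ∈ A, (X - C a)) ^ M).natDegree := by
        rw [natDegree_pow, natDegree_finsetProd_X_sub_C_eq_card]
    _ ≤ G.natDegree := natDegree_le_of_dvd (prod_X_sub_C_pow_dvd hdvd) hG0
    _ ≤ _ := natDegree_auxPoly_le _ m heS hP

end AuxiliaryPolynomial

section ShiftBound

lemma two_mul_sum_range_add_mul_le (a h n : ℕ) :
    2 * ∑ k ∈ range n, (a + k * h) ≤ 2 * n * a + h * n ^ 2 := by
  induction n with
  | zero => simp
  | succ n ih =>
    rw [sum_range_succ]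
    nlinarith

variable {p : ℕ} [Fact p.Prime]

-- Stepanov's method with `T = 4U`, `d = Uh² + 2h`, `J = h` and `M = 2Uh`.
lemma four_mul_mul_card_le {S A : Finset (ZMod p)} {m h U : ℕ} (hm : 2 * m < p)
    (hpm : p ≤ 3 * m + 1) (hS : #S = h) (hh : 29 ≤ h) (hU : 0 < U) (hU_pow : 4 * U ≤ 2 ^ h)
    (hUp : 16 * (U * h) ^ 2 ≤ p) (hA : ∀ a ∈ A, ∀ b ∈ S, (a + b) ^ m = 1) :
    4 * U * #A ≤ 3 * p := by
  have hUh : 29 ≤ U * h := by nlinarith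
  have hUh_sq : 29 * (U * h) ≤ (U * h) ^ 2 := by nlinarith
  have hhU_sq : 29 * (h * U ^ 2) ≤ (U * h) ^ 2 := by
    calc 29 * (h * U ^ 2) ≤ h * (h * U ^ 2) := Nat.mul_le_mul_right _ hh
      _ = (U * h) ^ 2 := by ring
  have hd : U * h ^ 2 + 2 * h ≤ p := by nlinarith [sq_nonneg h]
  have hT : ∑ k ∈ range (4 * U), (U * h ^ 2 + 2 * h + k * h) < m := by
    have hsum := two_mul_sum_range_add_mul_le (U * h ^ 2 + 2 * h) h (4 * U)
    linarith
  have hM : ∑ k ∈ range (2 * U * h), (U * h ^ 2 + 2 * h + k * h + h) <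
      4 * U * (h * (U * h ^ 2 + 2 * h)) := by
    have hsum := two_mul_sum_range_add_mul_le (U * h ^ 2 + 2 * h + h) h (2 * U * h)
    have hpos : 0 < U * h ^ 2 := by positivity
    rw [sum_congr rfl fun k _ ↦ add_right_comm (U * h ^ 2 + 2 * h) (k * h) h]
    nlinarith
  have hcard : 2 * U * h * #A ≤ U * h ^ 2 + 2 * h + (h - 1) * p + m * h := by
    have := mul_card_le_of_forall_add_pow_eq_one p (J := h) (d := U * h ^ 2 + 2 * h)
      (T := 4 * U) (by lia) hm (by rwa [hS]) (by rwa [hS]) (by rwa [hS]) (by rwa [ZMod.card])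
      (by nlinarith : 2 * U * h ≤ p) hA
    rwa [ZMod.card, hS] at this
  have hd' : 2 * (U * h ^ 2 + 2 * h) ≤ 2 * p := by lia
  obtain ⟨g, rfl⟩ : ∃ g, h = g + 1 := ⟨h - 1, by lia⟩
  rw [Nat.add_sub_cancel] at hcard
  refine Nat.le_of_mul_le_mul_left (?_ : (g + 1) * _ ≤ (g + 1) * _) g.succ_pos
  nlinarith

lemma mul_sq_le_two_pow {n : ℕ} (hn : 29 ≤ n) : 100000 * n ^ 2 ≤ 2 ^ n := by
  induction n, hn using Nat.le_induction with
  | base => norm_num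
  | succ n hn ih =>
    rw [pow_succ 2 n]
    nlinarith

lemma two_pow_mul_two_pow (n : ℕ) : 2 ^ n * 2 ^ n = 4 ^ n :=
  (mul_pow 2 2 n).symm

lemma two_pow_log_four_le_sqrt {n : ℕ} (hn : n ≠ 0) : 2 ^ Nat.log 4 n ≤ Nat.sqrt n := by
  rw [Nat.le_sqrt, two_pow_mul_two_pow]
  exact Nat.pow_log_le_self 4 hn

lemma sqrt_lt_two_pow_log_four_add_one (n : ℕ) : Nat.sqrt n < 2 ^ (Nat.log 4 n + 1) := by
  rw [Nat.sqrt_lt, two_pow_mul_two_pow]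
  exact Nat.lt_pow_succ_log_self (by norm_num) n

lemma mul_log_four_sq_le_sqrt {n : ℕ} (hn : 4 ^ 29 ≤ n) :
    100000 * Nat.log 4 n ^ 2 ≤ Nat.sqrt n :=
  (mul_sq_le_two_pow (Nat.le_log_of_pow_le (by norm_num) hn)).trans
    (two_pow_log_four_le_sqrt (by lia : n ≠ 0))

theorem card_lt_of_forall_add_pow_eq_one {S A : Finset (ZMod p)} {m : ℕ} (hp : 4 ^ 29 ≤ p)
    (hm : 2 * m < p) (hpm : p ≤ 3 * m + 1) (hS : #S = Nat.log 4 p)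
    (hA : ∀ a ∈ A, ∀ b ∈ S, (a + b) ^ m = 1) : 5 * #A < 16 * Nat.log 4 p * Nat.sqrt p := by
  have hh : 29 ≤ Nat.log 4 p := Nat.le_log_of_pow_le (by norm_num) hp
  have hbig := mul_log_four_sq_le_sqrt hp
  have hs := sqrt_lt_two_pow_log_four_add_one p
  have hsp := Nat.sqrt_le p
  have hps := Nat.lt_succ_sqrt p
  set h := Nat.log 4 p
  set s := Nat.sqrt p
  obtain ⟨U, hU⟩ : ∃ U, U = s / (4 * h) := ⟨_, rfl⟩
  have hUs : 4 * h * U ≤ s := hU ▸ Nat.mul_div_le s (4 * h)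
  have hsU : s < 4 * h * (U + 1) := hU ▸ Nat.lt_mul_div_succ s (by lia)
  have hU0 : 0 < U := hU ▸ Nat.div_pos (by nlinarith) (by lia)
  have hU_pow : 4 * U ≤ 2 ^ h := by
    rw [pow_succ] at hs
    nlinarith
  have hUp : 16 * (U * h) ^ 2 ≤ p := by
    calc 16 * (U * h) ^ 2 = 4 * h * U * (4 * h * U) := by ring
      _ ≤ p := (Nat.mul_le_mul hUs hUs).trans hsp
  have hcard := four_mul_mul_card_le hm hpm hS hh hU0 hU_pow hUp hA
  by_contra! hlt
  have hmul : 4 * U * (16 * h * s) ≤ 15 * p := by nlinarith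
  have hhs : 2900000 * h ≤ s := by nlinarith
  nlinarith

end ShiftBound

section Counting

lemma sum_range_inv_odd_sq_le (K : ℕ) :
    ∑ k ∈ range K, 1 / (2 * (k : ℝ) + 3) ^ 2 ≤ 1 / 4 * (1 - 1 / ((K : ℝ) + 1)) := by
  induction K with
  | zero => simp
  | succ K ih =>
    have hterm : 1 / (2 * (K : ℝ) + 3) ^ 2 ≤
        1 / 4 * (1 / ((K : ℝ) + 1) - 1 / (K + 1 + 1)) := by
      have htel : 1 / 4 * (1 / ((K : ℝ) + 1) - 1 / (K + 1 + 1)) =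
          1 / (4 * ((K + 1) * (K + 2))) := by
        field_simp
        ring
      rw [htel]
      exact one_div_le_one_div_of_le (by positivity) (by nlinarith)
    rw [sum_range_succ]
    push_cast
    linarith

lemma sum_primesBelow_inv_sq_le (n : ℕ) : ∑ g ∈ n.primesBelow, 1 / (g : ℝ) ^ 2 ≤ 1 / 2 := by
  have hodd := sum_range_inv_odd_sq_le n
  have hsub : n.primesBelow ⊆ insert 2 ((range n).image fun k ↦ 2 * k + 3) := by
    intro g hg
    obtain ⟨hgn, hg⟩ := Nat.mem_primesBelow.mp hg
    rcases hg.eq_two_or_odd' with rfl | ⟨k, rfl⟩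
    · exact mem_insert_self _ _
    · have := hg.two_le
      exact mem_insert_of_mem (mem_image.mpr ⟨k - 1, mem_range.mpr (by lia), by lia⟩)
  calc ∑ g ∈ n.primesBelow, 1 / (g : ℝ) ^ 2
      ≤ ∑ g ∈ (insert 2 ((range n).image fun k ↦ 2 * k + 3) : Finset ℕ), 1 / (g : ℝ) ^ 2 :=
        sum_le_sum_of_subset_of_nonneg hsub fun _ _ _ ↦ by positivity
    _ = 1 / 2 ^ 2 + ∑ k ∈ range n, 1 / (2 * (k : ℝ) + 3) ^ 2 := by
        rw [sum_insert (by simp), sum_image (fun _ _ _ _ _ ↦ by lia)]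
        simp
    _ ≤ 1 / 2 := by
        have : 0 ≤ 1 / ((n : ℝ) + 1) := by positivity
        linarith

lemma card_filter_not_coprime_le (X Y : ℕ) :
    (#{t ∈ Ioc 0 X ×ˢ Ioc 0 Y | ¬t.1.Coprime t.2} : ℝ) ≤ X * Y / 2 := by
  let D (g : ℕ) : Finset (ℕ × ℕ) := {b ∈ Ioc 0 X | g ∣ b} ×ˢ {n ∈ Ioc 0 Y | g ∣ n}
  have hsub : {t ∈ Ioc 0 X ×ˢ Ioc 0 Y | ¬t.1.Coprime t.2} ⊆ (X + 1).primesBelow.biUnion D := by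
    rintro ⟨b, n⟩ ht
    simp only [mem_filter, mem_product, mem_Ioc] at ht
    obtain ⟨⟨hb, hn⟩, hbn⟩ := ht
    obtain ⟨g, hg, hgb, hgn⟩ := Nat.Prime.not_coprime_iff_dvd.mp hbn
    simp only [D, mem_biUnion, Nat.mem_primesBelow, mem_product, mem_filter, mem_Ioc]
    exact ⟨g, ⟨Nat.lt_succ_of_le ((Nat.le_of_dvd hb.1 hgb).trans hb.2), hg⟩, ⟨hb, hgb⟩, hn, hgn⟩
  have hD (g : ℕ) : (#(D g) : ℝ) ≤ X * Y * (1 / g ^ 2) := by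
    simp only [D, card_product, Nat.Ioc_filter_dvd_card_eq_div]
    push_cast
    calc ((X / g : ℕ) : ℝ) * (Y / g : ℕ) ≤ X / g * (Y / g) := by gcongr <;> exact Nat.cast_div_le
      _ = X * Y * (1 / g ^ 2) := by ring
  calc (#{t ∈ Ioc 0 X ×ˢ Ioc 0 Y | ¬t.1.Coprime t.2} : ℝ)
      ≤ ∑ g ∈ (X + 1).primesBelow, (#(D g) : ℝ) := by
        exact_mod_cast (card_le_card hsub).trans card_biUnion_le
    _ ≤ X * Y * ∑ g ∈ (X + 1).primesBelow, 1 / (g : ℝ) ^ 2 := by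
        rw [mul_sum]
        exact sum_le_sum fun g _ ↦ hD g
    _ ≤ X * Y * (1 / 2) := by gcongr; exact sum_primesBelow_inv_sq_le _
    _ = X * Y / 2 := by ring

lemma card_filter_dvd_add_le {q : ℕ} (hq : 0 < q) (Y c : ℕ) :
    #{n ∈ Ioc 0 Y | q ∣ n + c} ≤ Y / q + 1 := by
  have hmap : #{n ∈ Ioc 0 Y | q ∣ n + c} + #{n ∈ Ioc 0 c | q ∣ n} ≤
      #{n ∈ Ioc 0 (c + Y) | q ∣ n} := by
    rw [← card_map (addRightEmbedding c), ← card_union_of_disjoint]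
    · refine card_le_card fun n hn ↦ ?_
      simp only [mem_union, mem_map, mem_filter, mem_Ioc, addRightEmbedding_apply] at hn ⊢
      obtain ⟨k, ⟨hk, hqk⟩, rfl⟩ | ⟨hn, hqn⟩ := hn
      · exact ⟨by lia, hqk⟩
      · exact ⟨by lia, hqn⟩
    · refine disjoint_left.mpr fun n hn hn' ↦ ?_
      simp only [mem_map, mem_filter, mem_Ioc, addRightEmbedding_apply] at hn hn'
      lia
  have hdiv : (c + Y) / q ≤ c / q + Y / q + 1 := by
    rw [Nat.add_div hq]
    split_ifs <;> lia
  simp only [Nat.Ioc_filter_dvd_card_eq_div] at hmap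
  lia

/-- The pairs `(b, n)` for which the fractions `(n + b * i) / b`, `i < h`, are in lowest terms with
no numerator or denominator divisible by `q`. -/
def goodPairs (X Y q h : ℕ) : Finset (ℕ × ℕ) :=
  {t ∈ Ioc 0 X ×ˢ Ioc 0 Y | t.1.Coprime t.2 ∧ ¬q ∣ t.1 ∧ ∀ i < h, ¬q ∣ t.2 + t.1 * i}

lemma mem_goodPairs {X Y q h b n : ℕ} : (b, n) ∈ goodPairs X Y q h ↔
    ((0 < b ∧ b ≤ X) ∧ 0 < n ∧ n ≤ Y) ∧ b.Coprime n ∧ ¬q ∣ b ∧ ∀ i < h, ¬q ∣ n + b * i := by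
  simp only [goodPairs, mem_filter, mem_product, mem_Ioc]

lemma mul_le_card_goodPairs_add {q : ℕ} (hq : 0 < q) (X Y h : ℕ) :
    X * Y ≤ #(goodPairs X Y q h) + #{t ∈ Ioc 0 X ×ˢ Ioc 0 Y | ¬t.1.Coprime t.2} +
      X / q * Y + X * (h * (Y / q + 1)) := by
  let E : Finset (ℕ × ℕ) := (Ioc 0 X).biUnion fun b ↦ (range h).biUnion fun i ↦
    {b} ×ˢ {n ∈ Ioc 0 Y | q ∣ n + b * i}
  have hsub : Ioc 0 X ×ˢ Ioc 0 Y ⊆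
      goodPairs X Y q h ∪ {t ∈ Ioc 0 X ×ˢ Ioc 0 Y | ¬t.1.Coprime t.2} ∪
        {b ∈ Ioc 0 X | q ∣ b} ×ˢ Ioc 0 Y ∪ E := by
    rintro ⟨b, n⟩ ht
    simp only [E, mem_goodPairs, mem_union, mem_filter, mem_product, mem_biUnion, mem_singleton,
      mem_range, mem_Ioc] at ht ⊢
    by_cases hi : ∀ i < h, ¬q ∣ n + b * i
    · tauto
    · push Not at hi
      obtain ⟨i, hih, hi⟩ := hi
      exact Or.inr ⟨b, ht.1, i, hih, rfl, ht.2, hi⟩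
  have hE : #E ≤ X * (h * (Y / q + 1)) := by
    have := card_biUnion_le_card_mul (Ioc 0 X) _ (h * (Y / q + 1)) fun b _ ↦
      (card_range h ▸ card_biUnion_le_card_mul (range h)
        (fun i ↦ {b} ×ˢ {n ∈ Ioc 0 Y | q ∣ n + b * i}) (Y / q + 1) fun i _ ↦ by
          simpa using card_filter_dvd_add_le hq Y (b * i))
    simpa [E] using this
  have hcard := (card_le_card hsub).trans <| (card_union_le _ _).trans <| Nat.add_le_add_right
    ((card_union_le _ _).trans <| Nat.add_le_add_right (card_union_le _ _) _) _
  simp only [card_product, Nat.card_Ioc, Nat.sub_zero, Nat.Ioc_filter_dvd_card_eq_div] at hcard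
  lia

lemma le_card_goodPairs {q : ℕ} (hq : 0 < q) (X Y h : ℕ) :
    (X : ℝ) * Y * (1 / 2 - (h + 1) / q) - X * h ≤ #(goodPairs X Y q h) := by
  have htotal : (X : ℝ) * Y ≤ #(goodPairs X Y q h) +
      #{t ∈ Ioc 0 X ×ˢ Ioc 0 Y | ¬t.1.Coprime t.2} + (X / q : ℕ) * Y +
      X * (h * ((Y / q : ℕ) + 1)) := by
    exact_mod_cast mul_le_card_goodPairs_add hq X Y h
  have hXq : ((X / q : ℕ) : ℝ) * Y ≤ X / q * Y := by gcongr; exact Nat.cast_div_le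
  have hYq : (X : ℝ) * (h * ((Y / q : ℕ) + 1)) ≤ X * (h * (Y / q + 1)) := by
    gcongr
    exact Nat.cast_div_le
  calc (X : ℝ) * Y * (1 / 2 - (h + 1) / q) - X * h
      = X * Y - X * Y / 2 - X / q * Y - X * (h * (Y / q + 1)) := by ring
    _ ≤ #(goodPairs X Y q h) := by linarith [card_filter_not_coprime_le X Y]

end Counting

section Character

variable {R : Type*} [CommMonoidWithZero R]

lemma pow_eq_one_of_apply_unit_pow_eq_one {F : Type*} [CommMonoid F] {χ : MulChar F R} {g : Fˣ}
    (hg : ∀ x, x ∈ Subgroup.zpowers g) {k : ℕ} (hk : χ g ^ k = 1) : χ ^ k = 1 := by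
  rw [MulChar.eq_iff hg, MulChar.pow_apply_coe, hk, MulChar.one_apply_coe]

lemma orderOf_mulChar_dvd_card_sub_one {F : Type*} [Field F] [Fintype F] (χ : MulChar F R) :
    orderOf χ ∣ Fintype.card F - 1 := by
  classical
  rw [← Fintype.card_units]
  exact orderOf_dvd_of_pow_eq_one χ.pow_card_eq_one

lemma pow_card_sub_one_div_orderOf_eq_one [Nontrivial R] {F : Type*} [Field F] [Fintype F]
    {χ : MulChar F R} {y : F} (hy : χ y = 1) :
    y ^ ((Fintype.card F - 1) / orderOf χ) = 1 := by
  obtain ⟨g, hg⟩ := IsCyclic.exists_generator (α := Fˣ)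
  have hy0 : y ≠ 0 := by
    rintro rfl
    exact zero_ne_one ((MulChar.map_zero χ).symm.trans hy)
  obtain ⟨k, hk⟩ := mem_powers_iff_mem_zpowers.mpr (hg (Units.mk0 y hy0))
  obtain rfl : (g : F) ^ k = y := by simpa using congrArg Units.val hk
  obtain ⟨j, rfl⟩ := orderOf_dvd_of_pow_eq_one
    (pow_eq_one_of_apply_unit_pow_eq_one hg ((map_pow χ _ k).symm.trans hy))
  rw [← pow_mul, mul_right_comm, Nat.mul_div_cancel' (orderOf_mulChar_dvd_card_sub_one χ), pow_mul,
    FiniteField.pow_card_sub_one_eq_one _ g.ne_zero, one_pow]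

/-- `χ` takes the value `1` at every positive integer less than `N` that is not a multiple of `q`.
-/
def TrivialOffMultiples {p : ℕ} (χ : DirichletCharacter R p) (q N : ℕ) : Prop :=
  ∀ n : ℕ, 0 < n → n < N → ¬q ∣ n → χ n = 1

variable [Nontrivial R] {p : ℕ} [Fact p.Prime]

lemma exists_forall_pow_eq_one {χ : DirichletCharacter R p} (hχ : χ ≠ 1) :
    ∃ m, 2 * m < p ∧ p ≤ 3 * m + 1 ∧ ∀ y, χ y = 1 → y ^ m = 1 := by
  obtain ⟨f, hf⟩ := orderOf_mulChar_dvd_card_sub_one χ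
  rw [ZMod.card] at hf
  have hpf : p = orderOf χ * f + 1 := by
    have := (Fact.out : p.Prime).one_le
    lia
  have hd : 2 ≤ orderOf χ := by
    have := χ.orderOf_pos
    have := mt orderOf_eq_one_iff.mp hχ
    lia
  refine ⟨orderOf χ / 2 * f, ?_, ?_, fun y hy ↦ ?_⟩
  · nlinarith [Nat.mul_div_le (orderOf χ) 2]
  · have : orderOf χ ≤ 3 * (orderOf χ / 2) := by lia
    nlinarith
  · have := pow_card_sub_one_div_orderOf_eq_one hy
    rw [ZMod.card, hf, Nat.mul_div_cancel_left f χ.orderOf_pos] at this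
    rw [mul_comm, pow_mul, this, one_pow]

theorem card_lt_of_forall_apply_add_eq_one (hp : 4 ^ 29 ≤ p) {χ : DirichletCharacter R p}
    (hχ : χ ≠ 1) {S A : Finset (ZMod p)} (hS : #S = Nat.log 4 p)
    (hA : ∀ a ∈ A, ∀ b ∈ S, χ (a + b) = 1) : 5 * #A < 16 * Nat.log 4 p * Nat.sqrt p := by
  obtain ⟨m, hm, hpm, hχm⟩ := exists_forall_pow_eq_one hχ
  exact card_lt_of_forall_add_pow_eq_one hp hm hpm hS fun a ha b hb ↦ hχm _ (hA a ha b hb)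

lemma trivialOffMultiples_min {χ : DirichletCharacter R p} {q₁ q₂ : ℕ}
    (hmin : ∀ q : ℕ, q.Prime → χ q ∉ ({0, 1} : Set R) → q ≠ q₁ → q₂ ≤ q) :
    TrivialOffMultiples χ q₁ (min q₂ p) := by
  intro n hn0 hn hqn
  induction n using induction_on_primes with
  | zero => exact absurd hn0 (lt_irrefl 0)
  | one => simp
  | prime_mul r k hr ih =>
    have hk : 0 < k := Nat.pos_of_mul_pos_left hn0
    obtain ⟨hq₂, hp⟩ := lt_min_iff.mp hn
    have hrk : r ≤ r * k := Nat.le_mul_of_pos_right r hk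
    have hkr : k ≤ r * k := Nat.le_mul_of_pos_left k hr.pos
    have hr0 : χ r ≠ 0 := by
      have hcop := (Nat.coprime_of_lt_prime hr.ne_zero (hrk.trans_lt hp) Fact.out).symm
      exact (((ZMod.isUnit_iff_coprime r p).mpr hcop).map χ).ne_zero
    have hr1 : χ r = 1 := by
      by_contra hr1
      refine (hrk.trans_lt hq₂).not_ge (hmin r hr (by simp [hr0, hr1]) ?_)
      rintro rfl
      exact hqn (dvd_mul_right r k)
    rw [Nat.cast_mul, map_mul, hr1, one_mul]
    exact ih hk (hkr.trans_lt hn) fun h ↦ hqn (h.mul_left r)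

end Character

section ShiftedSets

namespace TrivialOffMultiples

variable {R : Type*} [CommMonoidWithZero R] {p : ℕ} {χ : DirichletCharacter R p} {q N : ℕ}

lemma exists_multiple_shifts (hχ : TrivialOffMultiples χ q N) (hN : N ≤ p) (hq : 1 < q) {h H : ℕ}
    (hh : 0 < h) (hH : H + q * h ≤ N) :
    ∃ S A : Finset (ZMod p), #S = h ∧ H ≤ 2 * #A ∧ ∀ a ∈ A, ∀ b ∈ S, χ (a + b) = 1 := by
  have hinj := CharP.natCast_injOn_Iio (ZMod p) p
  have hshift {i : ℕ} (hi : i < h) : q * i < q * h := Nat.mul_lt_mul_of_pos_left hi (by lia)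
  have hqh : 0 < q * h := by positivity
  refine ⟨(range h).image fun i ↦ ((q * i : ℕ) : ZMod p),
    {z ∈ Ioc 0 H | ¬q ∣ z}.image fun z : ℕ ↦ (z : ZMod p), ?_, ?_, ?_⟩
  · rw [card_image_of_injOn, card_range]
    intro i hi j hj hij
    rw [coe_range, Set.mem_Iio] at hi hj
    have hi' := hshift hi
    have hj' := hshift hj
    exact Nat.eq_of_mul_eq_mul_left (by lia) (hinj (Set.mem_Iio.mpr (by lia))
      (Set.mem_Iio.mpr (by lia)) hij)
  · have hcard := card_filter_add_card_filter_not (s := Ioc 0 H) (q ∣ ·)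
    have hdiv : H / q ≤ H / 2 := Nat.div_le_div_left hq two_pos
    rw [Nat.Ioc_filter_dvd_card_eq_div, Nat.card_Ioc] at hcard
    rw [card_image_of_injOn]
    · lia
    · refine hinj.mono fun z hz ↦ ?_
      simp only [coe_filter, mem_Ioc, Set.mem_ofPred_eq] at hz
      exact Set.mem_Iio.mpr (by lia)
  · simp only [forall_mem_image, mem_filter, mem_Ioc, mem_range]
    intro z hz i hi
    have hi' := hshift hi
    rw [← Nat.cast_add]
    exact hχ _ (by lia) (by lia) (by simpa [Nat.dvd_add_left (dvd_mul_right q i)] using hz.2)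

section Fractions

variable [Fact p.Prime] {X Y h : ℕ}

lemma injOn_div_goodPairs (hXY : X * Y < p) :
    Set.InjOn (fun t : ℕ × ℕ ↦ (t.2 / t.1 : ZMod p)) (goodPairs X Y q h) := by
  have hinj := CharP.natCast_injOn_Iio (ZMod p) p
  have hden {b n : ℕ} (hb : 0 < b ∧ b ≤ X) (hn : 0 < n ∧ n ≤ Y) : (b : ZMod p) ≠ 0 := by
    rw [Ne, ZMod.natCast_eq_zero_iff]
    exact Nat.not_dvd_of_pos_of_lt hb.1 (by nlinarith)
  rintro ⟨b, n⟩ ht ⟨b', n'⟩ ht' heq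
  obtain ⟨⟨hb, hn⟩, hbn, -⟩ := mem_goodPairs.mp ht
  obtain ⟨⟨hb', hn'⟩, hbn', -⟩ := mem_goodPairs.mp ht'
  have hmul : b' * n = b * n' := by
    refine hinj ((Nat.mul_le_mul hb'.2 hn.2).trans_lt hXY)
      ((Nat.mul_le_mul hb.2 hn'.2).trans_lt hXY) ?_
    rw [div_eq_div_iff (hden hb hn) (hden hb' hn')] at heq
    push_cast
    linear_combination heq
  obtain rfl : b = b' := Nat.dvd_antisymm
    (hbn.dvd_of_dvd_mul_right (hmul ▸ dvd_mul_right b n'))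
    (hbn'.dvd_of_dvd_mul_right (hmul ▸ dvd_mul_right b' n))
  rw [Nat.eq_of_mul_eq_mul_left hb.1 hmul]

lemma exists_fractions (hχ : TrivialOffMultiples χ q N) (hN : N ≤ p) (hq : 0 < q) (hh : 0 < h)
    (hX : 0 < X) (hXYN : Y + X * h ≤ N) (hXY : X * Y < p) :
    ∃ S A : Finset (ZMod p), #S = h ∧ (X : ℝ) * Y * (1 / 2 - (h + 1) / q) - X * h ≤ #A ∧
      ∀ a ∈ A, ∀ b ∈ S, χ (a + b) = 1 := by
  have hXh : X ≤ X * h := Nat.le_mul_of_pos_right X hh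
  refine ⟨(range h).image fun i : ℕ ↦ (i : ZMod p),
    (goodPairs X Y q h).image fun t : ℕ × ℕ ↦ (t.2 / t.1 : ZMod p), ?_, ?_, ?_⟩
  · have hhX : h ≤ X * h := Nat.le_mul_of_pos_left h hX
    rw [card_image_of_injOn, card_range]
    refine (CharP.natCast_injOn_Iio (ZMod p) p).mono fun i hi ↦ ?_
    rw [coe_range, Set.mem_Iio] at hi
    exact Set.mem_Iio.mpr (by lia)
  · rw [card_image_of_injOn (injOn_div_goodPairs hXY)]
    exact le_card_goodPairs hq X Y h
  · simp only [forall_mem_image, mem_range, Prod.forall, mem_goodPairs]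
    rintro b n ⟨⟨hb, hn⟩, -, hqb, hqn⟩ i hi
    have hbi : b * (i + 1) ≤ X * h := Nat.mul_le_mul hb.2 hi
    rw [mul_add_one] at hbi
    have hχb : χ b = 1 := hχ b hb.1 (by lia) hqb
    have hb0 : (b : ZMod p) ≠ 0 := by
      rw [Ne, ZMod.natCast_eq_zero_iff]
      exact Nat.not_dvd_of_pos_of_lt hb.1 (by lia)
    calc χ (n / b + i) = χ ((n / b + i) * b) := by rw [map_mul, hχb, mul_one]
      _ = χ ((n + b * i : ℕ) : ZMod p) := by
        congr 1
        push_cast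
        field_simp
      _ = 1 := hχ _ (by lia) (by lia) (hqn i hi)

end Fractions

end TrivialOffMultiples

end ShiftedSets

section Bound

variable {R : Type*} [CommMonoidWithZero R] [Nontrivial R] {p : ℕ} [Fact p.Prime]
  {χ : DirichletCharacter R p}

lemma TrivialOffMultiples.lt_seven_mul {q N : ℕ} (hχN : TrivialOffMultiples χ q N)
    (hp : 4 ^ 29 ≤ p) (hχ : χ ≠ 1) (hN : N ≤ p) (hq : 1 < q) (hqh : q < 6 * Nat.log 4 p) :
    N < 7 * Nat.log 4 p * Nat.sqrt p := by
  by_contra! hle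
  have hbig := mul_log_four_sq_le_sqrt hp
  have hh : 29 ≤ Nat.log 4 p := Nat.le_log_of_pow_le (by norm_num) hp
  obtain ⟨H, hH⟩ : ∃ H, H + q * Nat.log 4 p = 7 * Nat.log 4 p * Nat.sqrt p :=
    ⟨_, Nat.sub_add_cancel (by nlinarith)⟩
  obtain ⟨S, A, hS, hHA, hA⟩ :=
    hχN.exists_multiple_shifts hN hq (by lia) (hH.le.trans hle)
  have hcard := card_lt_of_forall_apply_add_eq_one hp hχ hS hA
  nlinarith

lemma sixteen_mul_mul_le_of_lt {h q s X : ℕ} (hh : 29 ≤ h) (hqh : 6 * h ≤ q) (hX : 100 ≤ X)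
    (hsX : 11 * s < (X + 1) * (X + 1)) :
    (16 : ℝ) * h * s ≤ 5 * (X * (h * X) * (1 / 2 - (h + 1) / q) - X * h) := by
  have hq : ((h : ℝ) + 1) / q ≤ 5 / 29 := by
    rw [div_le_div_iff₀ (by norm_cast; lia) (by norm_num)]
    norm_cast
    lia
  have hsX' : (16 : ℝ) * s ≤ 5 * (X * X * (1 / 2 - 5 / 29) - X) := by
    have : (100 : ℝ) ≤ X := by exact_mod_cast hX
    have : (11 : ℝ) * s < (X + 1) * (X + 1) := by exact_mod_cast hsX
    nlinarith
  calc (16 : ℝ) * h * s = h * (16 * s) := by ring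
    _ ≤ h * (5 * (X * X * (1 / 2 - 5 / 29) - X)) :=
        mul_le_mul_of_nonneg_left hsX' (Nat.cast_nonneg h)
    _ = 5 * (X * (h * X) * (1 / 2 - 5 / 29) - X * h) := by ring
    _ ≤ 5 * (X * (h * X) * (1 / 2 - (h + 1) / q) - X * h) := by gcongr

lemma TrivialOffMultiples.lt_two_mul {q N : ℕ} (hχN : TrivialOffMultiples χ q N)
    (hp : 4 ^ 29 ≤ p) (hχ : χ ≠ 1) (hN : N ≤ p) (hqh : 6 * Nat.log 4 p ≤ q) :
    N < 2 * (Nat.log 4 p * Nat.sqrt (11 * Nat.sqrt p)) := by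
  by_contra! hle
  have hbig := mul_log_four_sq_le_sqrt hp
  have hh : 29 ≤ Nat.log 4 p := Nat.le_log_of_pow_le (by norm_num) hp
  have hsp := Nat.sqrt_le p
  have hcard {S A : Finset (ZMod p)} := card_lt_of_forall_apply_add_eq_one hp hχ (S := S) (A := A)
  set h := Nat.log 4 p
  set s := Nat.sqrt p
  have hXs := Nat.sqrt_le (11 * s)
  have hsX := Nat.lt_succ_sqrt (11 * s)
  set X := Nat.sqrt (11 * s)
  have hX : 100 ≤ X := Nat.le_sqrt.mpr (by nlinarith)
  have hXhX : X * (h * X) < p := by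
    calc X * (h * X) = h * (X * X) := by ring
      _ ≤ h * (11 * s) := by gcongr
      _ < s * s := by nlinarith
      _ ≤ p := hsp
  obtain ⟨S, A, hS, hAX, hA⟩ := hχN.exists_fractions (Y := h * X) (X := X) hN (by lia)
    (by lia : 0 < h) (by lia) (by lia) hXhX
  have hAs : (5 * #A : ℝ) < 16 * h * s := by exact_mod_cast hcard hS hA
  have hsX' := sixteen_mul_mul_le_of_lt hh hqh hX hsX
  push_cast at hAX
  linarith

lemma mul_lt_log_four_sq_mul_sqrt (hp : 4 ^ 29 ≤ p) (hχ : χ ≠ 1) {q₁ q₂ : ℕ} (hq₁ : 1 < q₁)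
    (hlt : q₁ < q₂) (hmin : ∀ q : ℕ, q.Prime → χ q ∉ ({0, 1} : Set R) → q ≠ q₁ → q₂ ≤ q) :
    q₁ * q₂ < 46 * Nat.log 4 p ^ 2 * Nat.sqrt p := by
  have hχN := trivialOffMultiples_min hmin
  have hbig := mul_log_four_sq_le_sqrt hp
  have hh : 29 ≤ Nat.log 4 p := Nat.le_log_of_pow_le (by norm_num) hp
  have hsp := Nat.sqrt_le p
  rcases lt_or_ge q₁ (6 * Nat.log 4 p) with hqh | hqh
  · have hN := hχN.lt_seven_mul hp hχ (min_le_right _ _) hq₁ hqh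
    have hq₂ : q₂ < 7 * Nat.log 4 p * Nat.sqrt p :=
      (min_lt_iff.mp hN).resolve_right (not_lt.mpr (by nlinarith))
    nlinarith
  · have hN := hχN.lt_two_mul hp hχ (min_le_right _ _) hqh
    have hX := Nat.sqrt_le (11 * Nat.sqrt p)
    set X := Nat.sqrt (11 * Nat.sqrt p)
    have hq₂ : q₂ < 2 * (Nat.log 4 p * X) :=
      (min_lt_iff.mp hN).resolve_right (not_lt.mpr (by nlinarith))
    calc q₁ * q₂ < 2 * (Nat.log 4 p * X) * (2 * (Nat.log 4 p * X)) :=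
          Nat.mul_lt_mul'' (hlt.trans hq₂) hq₂
      _ = 4 * Nat.log 4 p ^ 2 * (X * X) := by ring
      _ ≤ 4 * Nat.log 4 p ^ 2 * (11 * Nat.sqrt p) := by gcongr
      _ ≤ 46 * Nat.log 4 p ^ 2 * Nat.sqrt p := by nlinarith

lemma mul_log_four_le_log {n : ℕ} (hn : n ≠ 0) : 1.386 * (Nat.log 4 n : ℝ) ≤ Real.log n := by
  have hlog4 : (1.386 : ℝ) ≤ Real.log 4 := by
    rw [show (4 : ℝ) = 2 ^ 2 by norm_num, Real.log_pow]
    have := Real.log_two_gt_d9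
    push_cast
    linarith
  calc 1.386 * (Nat.log 4 n : ℝ) ≤ Nat.log 4 n * Real.log 4 := by
        rw [mul_comm]
        gcongr
    _ = Real.log ((4 ^ Nat.log 4 n : ℕ) : ℝ) := by
        push_cast
        rw [Real.log_pow]
    _ ≤ Real.log n := by
        gcongr
        exact Nat.pow_log_le_self 4 hn

lemma log_four_sq_mul_sqrt_le {n : ℕ} (hn : n ≠ 0) :
    (46 * Nat.log 4 n ^ 2 * Nat.sqrt n : ℝ) ≤ 24 * (n : ℝ) ^ ((1 : ℝ) / 2) * Real.log n ^ 2 := by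
  have hsqrt : (Nat.sqrt n : ℝ) ≤ (n : ℝ) ^ ((1 : ℝ) / 2) := by
    rw [← Real.sqrt_eq_rpow]
    exact Real.nat_sqrt_le_real_sqrt
  calc (46 * Nat.log 4 n ^ 2 * Nat.sqrt n : ℝ)
      ≤ 24 * Nat.sqrt n * (1.386 * (Nat.log 4 n : ℝ)) ^ 2 := by
        have : 0 ≤ (Nat.log 4 n : ℝ) ^ 2 * Nat.sqrt n := by positivity
        linarith
    _ ≤ 24 * (n : ℝ) ^ ((1 : ℝ) / 2) * Real.log n ^ 2 := by
        gcongr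
        exact mul_log_four_le_log hn

theorem q1q2_bound_odd_order_general (hp : 4 ^ 29 ≤ p) (hχ : χ ≠ 1) {q₁ q₂ : ℕ} (hq₁ : 1 < q₁)
    (hlt : q₁ < q₂) (hmin : ∀ q : ℕ, q.Prime → χ q ∉ ({0, 1} : Set R) → q ≠ q₁ → q₂ ≤ q) :
    (q₁ : ℝ) * q₂ < 24 * (p : ℝ) ^ ((1 : ℝ) / 2) * Real.log p ^ 2 := by
  refine lt_of_lt_of_le ?_ (log_four_sq_mul_sqrt_le (NeZero.ne p))
  exact_mod_cast mul_lt_log_four_sq_mul_sqrt hp hχ hq₁ hlt hmin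

end Bound

theorem q1q2_bound_odd_order (p : ℕ) [Fact p.Prime] (hp : (10:ℕ)^18 ≤ p)
    (χ : DirichletCharacter ℂ p) (hχ : χ ≠ 1) (hodd : Odd (orderOf χ))
    (q₁ q₂ : ℕ) (hq₁ : q₁.Prime) (hq₂ : q₂.Prime) (hlt : q₁ < q₂)
    (hnr₁ : χ (q₁ : ZMod p) ∉ ({0, 1} : Set ℂ))
    (hnr₂ : χ (q₂ : ZMod p) ∉ ({0, 1} : Set ℂ))
    (hmin₁ : ∀ q : ℕ, q.Prime → χ (q : ZMod p) ∉ ({0, 1} : Set ℂ) → q₁ ≤ q)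
    (hmin₂ : ∀ q : ℕ, q.Prime → χ (q : ZMod p) ∉ ({0, 1} : Set ℂ) → q ≠ q₁ → q₂ ≤ q) :
    (q₁ : ℝ) * (q₂ : ℝ) < 24 * (p : ℝ) ^ ((1:ℝ)/2) * (Real.log p) ^ 2 :=
  q1q2_bound_odd_order_general (le_trans (by norm_num) hp) hχ hq₁.one_lt hlt hmin₂
end

section
/- Suppose χ is a non-principal Dirichlet character modulo a prime p ≥ 10^7, u is a prime with u ≥ e²·log p, and H is a positive integer such that χ(n) = 1 for all integers n ∈ [1,H] with gcd(n,u) = 1. If H ≤ (2e²·log p − 2)^{1/2}·p^{1/2}, then H ≤ K·g(p)·p^{1/4}·log p, where K = πe/√2 and g(p) = sqrt( (1 + 4/(3·log p)) / ( (1 − 1/(e²·log p)) · f(K·p^{1/4}/(2e²), 89) ) ). -/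
/-- The function `f(X,u)` from Lemma 3.4 of the paper. -/
noncomputable def burgessF (X : ℝ) (u : ℕ) : ℝ :=
  1 - (Real.pi ^ 2 / 3) *
    (1 / (2 * X ^ 2) + 1 / (2 * X) + (1 / (1 - (u : ℝ)⁻¹)) * ((1 + Real.log X) / X))

/-!
Suppose that `χ = 1` on the integers prime to `u` up to `Q`, where `Q` is about `6 p^{1/4} log p`.
The disjoint intervals `(pt/q, (pt + Q)/q]`, with `t/q` a reduced fraction of small denominator
prime to `u`, then contain at least about `Q² / (32 w)` runs of `w` consecutive residues with
`χ = 1`, as long as `2 w ≤ u`.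

This is too many. Let `l` be the order of `χ`, `p = l c + 1`, and take `w` least with `√p ≤ l ^ w`
(for large `l`, the fibre `χ = 1` itself is small and `w = 1` suffices). Wherever `χ` is `1` at
`x + 1, …, x + w`, all `(x + i)^c` are `1`, so the method of Stepanov bounds the number of such `x`
through a polynomial `∑ A_{e,j} X^{pj} ∏ (X + i)^{c e_i}` vanishing to high order at all of them.
This polynomial is nonzero because modulo `X^p` the `(X + i)^c` are inverses of `l`-th roots of
`(X + i) / i`, and by Kummer theory products of radicals of nonassociated primes are linearly
independent; the determinant of multiplication in the resulting radical extension converts the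
independence into a degree bound. No Weil bound is needed.
-/

/-! ### Linear independence of radicals -/

theorem linearIndependent_of_forall_algEquiv_apply_eq_mul {K Ω J : Type*} [Field K] [Field Ω]
    [Algebra K Ω] {x : J → Ω} (hx : ∀ j, x j ≠ 0) {ψ : J → Gal(Ω/K) →* Ω}
    (hψ : ∀ j σ, σ (x j) = ψ j σ * x j) (hinj : Function.Injective ψ) :
    LinearIndependent K x := by
  rw [linearIndependent_iff']
  intro s a ha j hj
  have hind := linearIndependent_iff'.mp ((linearIndependent_monoidHom Gal(Ω/K) Ω).comp ψ hinj) s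
    (fun i => a i • x i) ?_ j hj
  · exact (smul_eq_zero.mp hind).resolve_right (hx j)
  · ext σ
    simpa [hψ, Algebra.smul_def, mul_comm, mul_left_comm, mul_assoc] using congrArg σ ha

theorem linearIndependent_of_pow_mem_bot {K Ω J : Type*} [Field K] [Field Ω] [Algebra K Ω]
    [IsGalois K Ω] {n : ℕ} [NeZero n] {ζ : K} (hζ : IsPrimitiveRoot ζ n) {x : J → Ω}
    (hx : ∀ j, x j ≠ 0) (hpow : ∀ j, x j ^ n ∈ (⊥ : IntermediateField K Ω))
    (hdiv : ∀ i j, x i / x j ∈ (⊥ : IntermediateField K Ω) → i = j) :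
    LinearIndependent K x := by
  have hfixed (j : J) (σ τ : Gal(Ω/K)) : σ (τ (x j) / x j) = τ (x j) / x j := by
    have hroot : (τ (x j) / x j) ^ n = 1 := by
      rw [div_pow, ← map_pow, InfiniteGalois.mem_bot_iff_fixed _ |>.mp (hpow j),
        div_self (pow_ne_zero n (hx j))]
    obtain ⟨i, -, hi⟩ := (hζ.map_of_injective (algebraMap K Ω).injective).eq_pow_of_pow_eq_one hroot
    rw [← hi, ← map_pow, AlgEquiv.commutes]
  let ψ (j : J) : Gal(Ω/K) →* Ω :=
    { toFun σ := σ (x j) / x j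
      map_one' := div_self (hx j)
      map_mul' σ τ := by
        have := hfixed j σ τ
        rw [map_div₀, div_eq_iff (by simpa using hx j)] at this
        rw [AlgEquiv.mul_apply, this]
        ring }
  refine linearIndependent_of_forall_algEquiv_apply_eq_mul (ψ := ψ) hx
    (fun j σ => (div_mul_cancel₀ _ (hx j)).symm) fun i j hij => hdiv i j ?_
  rw [InfiniteGalois.mem_bot_iff_fixed]
  intro σ
  have hσ : σ (x i) / x i = σ (x j) / x j := DFunLike.congr_fun hij σ
  rw [map_div₀]
  rw [div_eq_div_iff (hx i) (hx j)] at hσ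
  rw [div_eq_div_iff (by simpa using hx j) (hx j), hσ, mul_comm]

theorem eq_of_pow_mul_prod_pow_eq {R ι : Type*} [CommRing R] [IsDomain R]
    [UniqueFactorizationMonoid R] [Fintype ι] {g : ι → R} (hg : ∀ i, Prime (g i))
    (hassoc : Pairwise fun i j => ¬ Associated (g i) (g j)) {n : ℕ} {r s : R} (hr : r ≠ 0)
    (hs : s ≠ 0) {e e' : ι → Fin n}
    (h : r ^ n * ∏ i, g i ^ (e i : ℕ) = s ^ n * ∏ i, g i ^ (e' i : ℕ)) :
    e = e' := by
  classical
  have hmult (a : R) (ha : a ≠ 0) (f : ι → Fin n) (j : ι) :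
      emultiplicity (g j) (a ^ n * ∏ i, g i ^ (f i : ℕ)) =
        (n * multiplicity (g j) a + f j : ℕ) := by
    have hself : emultiplicity (g j) (g j) = 1 :=
      (FiniteMultiplicity.of_prime_left (hg j) (hg j).ne_zero).emultiplicity_self
    have hother (i : ι) (hij : i ≠ j) : emultiplicity (g j) (g i) = 0 :=
      emultiplicity_eq_zero.mpr fun hd => hassoc hij.symm ((hg j).associated_of_dvd (hg i) hd)
    rw [emultiplicity_mul (hg j), emultiplicity_pow (hg j), Finset.emultiplicity_prod (hg j),
      Finset.sum_eq_single j, emultiplicity_pow (hg j), hself,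
      (FiniteMultiplicity.of_prime_left (hg j) ha).emultiplicity_eq_multiplicity]
    · push_cast; ring
    · intro i _ hij
      rw [emultiplicity_pow (hg j), hother i hij, mul_zero]
    · simp
  funext j
  have hj := (hmult r hr e j).symm.trans ((congrArg _ h).trans (hmult s hs e' j))
  have := congrArg (· % n) (ENat.natCast_inj.mp hj)
  simp only [Nat.mul_add_mod, Nat.mod_eq_of_lt (e j).isLt, Nat.mod_eq_of_lt (e' j).isLt] at this
  exact Fin.ext this

theorem linearIndependent_prod_root_pow {R K Ω ι : Type*} [CommRing R] [IsDomain R]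
    [UniqueFactorizationMonoid R] [Field K] [Algebra R K] [IsFractionRing R K] [Field Ω]
    [Algebra K Ω] [IsGalois K Ω] [Fintype ι] {n : ℕ} [NeZero n] {ζ : K} (hζ : IsPrimitiveRoot ζ n)
    {g : ι → R} (hg : ∀ i, Prime (g i)) (hassoc : Pairwise fun i j => ¬ Associated (g i) (g j))
    {v : ι → Ω} (hv : ∀ i, v i ^ n = algebraMap K Ω (algebraMap R K (g i))) :
    LinearIndependent K fun e : ι → Fin n => ∏ i, v i ^ (e i : ℕ) := by
  have hn : n ≠ 0 := NeZero.ne n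
  have hg0 (e : ι → Fin n) : ∏ i, g i ^ (e i : ℕ) ≠ 0 :=
    Finset.prod_ne_zero_iff.mpr fun i _ => pow_ne_zero _ (hg i).ne_zero
  have hinj : Function.Injective (algebraMap K Ω ∘ algebraMap R K) :=
    (algebraMap K Ω).injective.comp (IsFractionRing.injective R K)
  have hpow (e : ι → Fin n) : (∏ i, v i ^ (e i : ℕ)) ^ n =
      algebraMap K Ω (algebraMap R K (∏ i, g i ^ (e i : ℕ))) := by
    simp only [← Finset.prod_pow, map_prod, map_pow, ← hv, pow_right_comm]
  have hne (e : ι → Fin n) : ∏ i, v i ^ (e i : ℕ) ≠ 0 := by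
    refine fun h => hg0 e (hinj ?_)
    rw [Function.comp_apply, ← hpow, h, zero_pow hn, Function.comp_apply, map_zero, map_zero]
  refine linearIndependent_of_pow_mem_bot hζ hne (fun e => ?_) fun e e' h => ?_
  · rw [hpow]
    exact IntermediateField.algebraMap_mem _ _
  · obtain ⟨k, hk⟩ := IntermediateField.mem_bot.mp h
    obtain ⟨a, b, hb, rfl⟩ := IsFractionRing.div_surjective (A := R) k
    have hb0 : b ≠ 0 := nonZeroDivisors.ne_zero hb
    have hkey : a ^ n * ∏ i, g i ^ (e' i : ℕ) = b ^ n * ∏ i, g i ^ (e i : ℕ) := by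
      have hb1 : algebraMap K Ω (algebraMap R K b) ≠ 0 := by simpa using hb0
      apply hinj
      rw [map_div₀, div_eq_div_iff hb1 (hne e')] at hk
      have := congrArg (· ^ n) hk
      simp only [mul_pow, hpow] at this
      simpa only [Function.comp_apply, map_mul, map_pow, mul_comm] using this
    have ha0 : a ≠ 0 := by
      rintro rfl
      simp [hn, hb0, hg0] at hkey
    exact (eq_of_pow_mul_prod_pow_eq hg hassoc ha0 hb0 hkey).symm

open Polynomial

section RadicalMulMatrix

variable {R S ι : Type*} [CommRing R] [CommRing S] [Algebra R S] [Fintype ι] [DecidableEq ι] {n : ℕ}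
  [NeZero n]

/-- The matrix over `R` of multiplication by `∑ a, A a • x ^ a` with respect to the monomials
`x ^ e`, where `e : ι → Fin n` and the `x i` are formal `n`-th roots of the `g i`. -/
def radicalMulMatrix (g : ι → R) (A : (ι → Fin n) → R) : Matrix (ι → Fin n) (ι → Fin n) R :=
  .of fun e e' => A (e' - e) * ∏ i, g i ^ ((((e' - e) i : Fin n) + e i : ℕ) / n)

theorem sum_radicalMulMatrix_smul {g : ι → R} (A : (ι → Fin n) → R) {x : ι → S}
    (hx : ∀ i, x i ^ n = algebraMap R S (g i)) (e : ι → Fin n) :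
    ∑ e', radicalMulMatrix g A e e' • ∏ i, x i ^ (e' i : ℕ) =
      (∑ a, A a • ∏ i, x i ^ (a i : ℕ)) * ∏ i, x i ^ (e i : ℕ) := by
  rw [Finset.sum_mul, ← Equiv.sum_comp (Equiv.addRight e)]
  refine Finset.sum_congr rfl fun a _ => ?_
  have hcarry (i : ι) : algebraMap R S (g i) ^ ((a i + e i : ℕ) / n) * x i ^ ((a + e) i : ℕ) =
      x i ^ (a i : ℕ) * x i ^ (e i : ℕ) := by
    rw [← hx, ← pow_mul, ← pow_add, ← pow_add, Pi.add_apply, Fin.val_add, Nat.div_add_mod]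
  simp only [radicalMulMatrix, Matrix.of_apply, Equiv.coe_addRight, add_sub_cancel_right,
    Algebra.smul_def, map_mul, map_prod, map_pow, mul_assoc, ← Finset.prod_mul_distrib, hcarry]

theorem dvd_det_radicalMulMatrix {f : R} {g q : ι → R} (hq : ∀ i, f ∣ q i ^ n - g i)
    {A : (ι → Fin n) → R} (hA : f ∣ ∑ e, A e * ∏ i, q i ^ (e i : ℕ)) :
    f ∣ (radicalMulMatrix g A).det := by
  let π := algebraMap R (R ⧸ Ideal.span {f})
  have hπ (a : R) : π a = 0 ↔ f ∣ a := by
    rw [← Ideal.mem_span_singleton]; exact Ideal.Quotient.eq_zero_iff_mem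
  let y : (ι → Fin n) → R ⧸ Ideal.span {f} := fun e => ∏ i, π (q i) ^ (e i : ℕ)
  have hy : ((radicalMulMatrix g A).map π).mulVec y = 0 := by
    funext e
    have hroot (i : ι) : π (q i) ^ n = π (g i) := by
      rw [← sub_eq_zero, ← map_pow, ← map_sub, hπ]; exact hq i
    have hsum : ∑ a, A a • y a = 0 := by
      simpa [y, Algebra.smul_def, π] using (hπ _).mpr hA
    have := sum_radicalMulMatrix_smul A hroot e
    rw [hsum, zero_mul] at this
    simp only [Algebra.smul_def] at this
    exact this
  have hdet : π (radicalMulMatrix g A).det • y = 0 := by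
    rw [RingHom.map_det, RingHom.mapMatrix_apply]
    have := congrArg ((radicalMulMatrix g A).map π).adjugate.mulVec hy
    rwa [Matrix.mulVec_mulVec, Matrix.adjugate_mul, Matrix.smul_mulVec, Matrix.one_mulVec,
      Matrix.mulVec_zero] at this
  rw [← hπ]
  simpa [y] using congrFun hdet 0

theorem det_radicalMulMatrix_ne_zero_of_linearIndependent [IsDomain R] [IsDomain S] {g : ι → R}
    {x : ι → S} (hx : ∀ i, x i ^ n = algebraMap R S (g i))
    (hind : LinearIndependent R fun e : ι → Fin n => ∏ i, x i ^ (e i : ℕ))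
    {A : (ι → Fin n) → R} (hA : A ≠ 0) : (radicalMulMatrix g A).det ≠ 0 := by
  have hzero (a : (ι → Fin n) → R) (ha : ∑ e, a e • ∏ i, x i ^ (e i : ℕ) = 0) : a = 0 :=
    funext (Fintype.linearIndependent_iff.mp hind a ha)
  intro hdet
  obtain ⟨b, hb, hbM⟩ := Matrix.exists_vecMul_eq_zero_iff.mpr hdet
  have hcol (e : ι → Fin n) : ∑ e', b e' * radicalMulMatrix g A e' e = 0 := congrFun hbM e
  have hprod : (∑ a, A a • ∏ i, x i ^ (a i : ℕ)) * ∑ e, b e • ∏ i, x i ^ (e i : ℕ) = 0 := by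
    simp only [Finset.mul_sum, mul_smul_comm, ← sum_radicalMulMatrix_smul A hx,
      Finset.smul_sum, smul_smul]
    rw [Finset.sum_comm]
    simp only [← Finset.sum_smul, hcol, zero_smul, Finset.sum_const_zero]
  exact (mul_eq_zero.mp hprod).elim (hA ∘ hzero A) (hb ∘ hzero b)

theorem det_radicalMulMatrix_ne_zero [IsDomain R] [UniqueFactorizationMonoid R] {ζ : R}
    (hζ : IsPrimitiveRoot ζ n) {g : ι → R} (hg : ∀ i, Prime (g i))
    (hassoc : Pairwise fun i j => ¬ Associated (g i) (g j)) {A : (ι → Fin n) → R} (hA : A ≠ 0) :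
    (radicalMulMatrix g A).det ≠ 0 := by
  let K := FractionRing R
  let Ω := SeparableClosure K
  have hζK : IsPrimitiveRoot (algebraMap R K ζ) n :=
    hζ.map_of_injective (IsFractionRing.injective R K)
  have : NeZero (n : Ω) := (hζK.map_of_injective (algebraMap K Ω).injective).neZero'
  have hroot (i : ι) : ∃ v : Ω, v ^ n = algebraMap R Ω (g i) := IsSepClosed.exists_pow_nat_eq _ n
  choose v hv using hroot
  refine det_radicalMulMatrix_ne_zero_of_linearIndependent hv ?_ hA
  exact (LinearIndependent.iff_fractionRing R K).mpr <| linearIndependent_prod_root_pow hζK hg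
    hassoc fun i => (hv i).trans (IsScalarTower.algebraMap_apply R K Ω _)

end RadicalMulMatrix

theorem natDegree_det_le_card_mul {R m : Type*} [CommRing R] [Fintype m] [DecidableEq m]
    {M : Matrix m m R[X]} {d : ℕ} (hM : ∀ i j, (M i j).natDegree ≤ d) :
    M.det.natDegree ≤ Fintype.card m * d := by
  rw [Matrix.det_apply]
  refine natDegree_sum_le_of_forall_le _ _ fun σ _ => (natDegree_smul_le _ _).trans ?_
  refine (natDegree_prod_le _ _).trans ((Finset.sum_le_sum fun i _ => hM (σ i) i).trans ?_)
  simp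

theorem natDegree_le_of_dvd_sum_mul_prod_pow {F ι : Type*} [Field F] [Fintype ι] [DecidableEq ι]
    {n : ℕ} [NeZero n] {ζ : F} (hζ : IsPrimitiveRoot ζ n) {f : F[X]} {g q : ι → F[X]}
    (hg : ∀ i, Irreducible (g i)) (hassoc : Pairwise fun i j => ¬ Associated (g i) (g j))
    (hq : ∀ i, f ∣ q i ^ n - g i) {A : (ι → Fin n) → F[X]} (hA : A ≠ 0) {d : ℕ}
    (hdeg : ∀ e, (A e).natDegree ≤ d)
    (hdvd : f ∣ ∑ e, A e * ∏ i, q i ^ (e i : ℕ)) :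
    f.natDegree ≤ n ^ Fintype.card ι * (d + ∑ i, (g i).natDegree) := by
  have hζX : IsPrimitiveRoot (C ζ) n := hζ.map_of_injective C_injective
  have hentry (e e' : ι → Fin n) :
      (radicalMulMatrix g A e e').natDegree ≤ d + ∑ i, (g i).natDegree := by
    refine natDegree_mul_le_of_le (hdeg _) ((natDegree_prod_le _ _).trans ?_)
    refine Finset.sum_le_sum fun i _ => (natDegree_pow_le_of_le _ le_rfl).trans ?_
    have : ((((e' - e) i : Fin n) + e i : ℕ) / n) ≤ 1 := by
      rw [← Nat.lt_succ_iff, Nat.div_lt_iff_lt_mul (NeZero.pos n)]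
      omega
    nlinarith
  calc f.natDegree ≤ (radicalMulMatrix g A).det.natDegree :=
        natDegree_le_of_dvd (dvd_det_radicalMulMatrix hq hdvd)
          (det_radicalMulMatrix_ne_zero hζX (fun i => (hg i).prime) hassoc hA)
    _ ≤ Fintype.card (ι → Fin n) * (d + ∑ i, (g i).natDegree) := natDegree_det_le_card_mul hentry
    _ = n ^ Fintype.card ι * (d + ∑ i, (g i).natDegree) := by simp

/-! ### The auxiliary polynomial of Stepanov -/

section Frobenius

variable {p : ℕ} [Fact p.Prime] {l c : ℕ}

theorem exists_isPrimitiveRoot_zmod (hlc : l * c + 1 = p) :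
    ∃ ζ : ZMod p, IsPrimitiveRoot ζ l := by
  obtain ⟨g, hg⟩ := IsCyclic.exists_ofOrder_eq_natCard (α := (ZMod p)ˣ)
  have hcard : Nat.card (ZMod p)ˣ = c * l := by
    rw [Nat.card_eq_fintype_card, ZMod.card_units]; lia
  refine ⟨(g ^ c : (ZMod p)ˣ), IsPrimitiveRoot.coe_units_iff.mpr ?_⟩
  exact (IsPrimitiveRoot.orderOf g).pow (by rw [hg]; exact Nat.card_pos) (hg.trans hcard)

theorem exists_X_pow_dvd_mul_sub_one {F : Type*} [Field F] {α : F} (hα : α ≠ 0) (m k : ℕ) :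
    ∃ q : F[X], X ^ k ∣ q * (X + C α) ^ m - 1 := by
  have hcop : IsCoprime (X + C α) (X : F[X]) := by
    refine ⟨C α⁻¹, -C α⁻¹, ?_⟩
    ring_nf
    rw [← C_mul, inv_mul_cancel₀ hα, C_1]
  obtain ⟨a, b, hab⟩ := hcop.pow (m := m) (n := k)
  exact ⟨a, -b, by linear_combination hab⟩

theorem X_pow_dvd_pow_sub {α : ZMod p} (hlc : l * c + 1 = p) (hα : α ≠ 0) {q : (ZMod p)[X]}
    (hq : X ^ p ∣ q * (X + C α) ^ c - 1) : X ^ p ∣ q ^ l - C α⁻¹ * (X + C α) := by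
  have hfrob : (X + C α) ^ (l * c + 1) = X ^ p + C α := by
    rw [hlc, add_pow_char, ← C_pow, ZMod.pow_card]
  have hone : C α⁻¹ * C α = 1 := by rw [← C_mul, inv_mul_cancel₀ hα, C_1]
  have hql : X ^ p ∣ (q * (X + C α) ^ c) ^ l - 1 := by
    simpa using hq.trans (sub_dvd_pow_sub_pow (q * (X + C α) ^ c) 1 l)
  have hmul : (q * (X + C α) ^ c) ^ l = q ^ l * (X + C α) ^ (l * c) := by
    rw [mul_pow, ← pow_mul, mul_comm c]
  obtain ⟨r, hr⟩ := hql
  refine ⟨C α⁻¹ * (X + C α) * r - C α⁻¹ * q ^ l, ?_⟩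
  rw [hmul] at hr
  rw [pow_succ] at hfrob
  linear_combination (C α⁻¹ * (X + C α)) * hr - C α⁻¹ * q ^ l * hfrob + (-q ^ l) * hone

theorem dvd_sum_rev_mul_prod_pow {R ι : Type*} [CommRing R] [Fintype ι] [DecidableEq ι] {f : R}
    {q y : ι → R} (hqy : ∀ i, f ∣ q i * y i - 1) {A : (ι → Fin l) → R}
    (h : f ∣ ∑ e, A e * ∏ i, y i ^ (e i : ℕ)) :
    f ∣ ∑ e : ι → Fin l, A (Fin.rev ∘ e) * ∏ i, q i ^ (e i : ℕ) := by
  let π := Ideal.Quotient.mk (Ideal.span {f})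
  have hπ (a : R) : π a = 0 ↔ f ∣ a := Ideal.Quotient.eq_zero_iff_dvd f a
  have hinv (i : ι) : π (q i) * π (y i) = 1 := by
    rw [← map_mul, ← sub_eq_zero, ← map_one π, ← map_sub, hπ]
    exact hqy i
  have hterm (e : ι → Fin l) (i : ι) :
      π (q i) ^ ((Fin.rev (e i) : Fin l) : ℕ) = π (q i) ^ (l - 1) * π (y i) ^ (e i : ℕ) := by
    have : l - 1 = (Fin.rev (e i) : Fin l) + e i := by rw [Fin.val_rev]; lia
    rw [this, pow_add, mul_assoc, ← mul_pow, hinv, one_pow, mul_one]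
  rw [← hπ, ← Equiv.sum_comp (Equiv.arrowCongr (Equiv.refl ι) Fin.revPerm)]
  calc π (∑ e : ι → Fin l, A (Fin.rev ∘ Fin.rev ∘ e) * ∏ i, q i ^ (Fin.rev (e i) : ℕ))
      = (∏ i, π (q i) ^ (l - 1)) * π (∑ e, A e * ∏ i, y i ^ (e i : ℕ)) := by
        simp only [map_sum, map_mul, map_prod, map_pow, hterm, Finset.prod_mul_distrib,
          Finset.mul_sum, ← Function.comp_assoc, Fin.rev_involutive.comp_self, Function.id_comp,
          mul_left_comm]
    _ = 0 := by rw [(hπ _).mpr h, mul_zero]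

theorem eq_zero_of_X_pow_dvd_sum {ι : Type*} [Fintype ι] [DecidableEq ι]
    (hlc : l * c + 1 = p) {α : ι → ZMod p} (hα : Function.Injective α) (hα0 : ∀ i, α i ≠ 0) {d : ℕ}
    (hd : l ^ Fintype.card ι * (d + Fintype.card ι) < p) {A : (ι → Fin l) → (ZMod p)[X]}
    (hdeg : ∀ e, (A e).natDegree ≤ d)
    (hdvd : X ^ p ∣ ∑ e, A e * ∏ i, (X + C (α i)) ^ (c * e i)) : A = 0 := by
  have : NeZero l := ⟨by
    rintro rfl
    exact (Fact.out : p.Prime).one_lt.ne' (by simpa using hlc.symm)⟩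
  obtain ⟨ζ, hζ⟩ := exists_isPrimitiveRoot_zmod hlc
  choose q hq using fun i => exists_X_pow_dvd_mul_sub_one (hα0 i) c p
  let g (i : ι) : (ZMod p)[X] := C (α i)⁻¹ * (X + C (α i))
  have hunit (i : ι) : IsUnit (C (α i)⁻¹) := isUnit_C.mpr (inv_ne_zero (hα0 i)).isUnit
  have hirr (i : ι) : Irreducible (g i) := by
    rw [irreducible_isUnit_mul (hunit i), ← sub_neg_eq_add, ← C_neg]
    exact irreducible_X_sub_C _
  have hassoc : Pairwise fun i j => ¬ Associated (g i) (g j) := by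
    intro i j hij h
    have hroot : (g j).eval (-α i) = 0 :=
      eval_eq_zero_of_dvd_of_eval_eq_zero h.dvd (by simp [g])
    simp only [g, eval_mul, eval_C, eval_add, eval_X, mul_eq_zero, inv_eq_zero, hα0 j,
      false_or, neg_add_eq_zero] at hroot
    exact hij (hα hroot)
  simp only [pow_mul] at hdvd
  have hdvd' := dvd_sum_rev_mul_prod_pow hq hdvd
  by_contra hA
  have hA' : (fun e => A (Fin.rev ∘ e)) ≠ 0 := fun h => hA <| funext fun e => by
    simpa [← Function.comp_assoc, Fin.rev_involutive.comp_self] using congrFun h (Fin.rev ∘ e)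
  have hle := natDegree_le_of_dvd_sum_mul_prod_pow hζ hirr hassoc
    (fun i => X_pow_dvd_pow_sub hlc (hα0 i) (hq i)) hA' (fun e => hdeg _) hdvd'
  have hg (i : ι) : (g i).natDegree = 1 := by
    rw [natDegree_C_mul (inv_ne_zero (hα0 i)), natDegree_X_add_C]
  simp only [natDegree_X_pow, hg, Finset.sum_const, Finset.card_univ, smul_eq_mul, mul_one] at hle
  exact hle.not_gt hd

end Frobenius

section LogDerivative

variable {R : Type*} [CommRing R]

/-- The operators with `G ^ k * (A * Y)⁽ᵏ⁾ = twistedIterDeriv G h k A * Y` for every `Y` whose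
logarithmic derivative is `h / G`, defined by the recursion in `k` that this relation forces. -/
noncomputable def twistedIterDeriv (G h : R[X]) : ℕ → R[X] →ₗ[R] R[X]
  | 0 => LinearMap.id
  | k + 1 => LinearMap.mulLeft R G ∘ₗ derivative ∘ₗ twistedIterDeriv G h k +
      LinearMap.mulLeft R (h - k * derivative G) ∘ₗ twistedIterDeriv G h k

theorem pow_mul_iterate_derivative_mul {G h Y : R[X]} (hY : G * derivative Y = h * Y) (A : R[X])
    (k : ℕ) : G ^ k * derivative^[k] (A * Y) = twistedIterDeriv G h k A * Y := by
  induction k with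
  | zero => simp [twistedIterDeriv]
  | succ k ih =>
    have hGk : G * derivative (G ^ k) = k * derivative G * G ^ k := by
      rcases k with - | k
      · simp
      · rw [derivative_pow, Nat.add_sub_cancel, C_eq_natCast, pow_succ]; ring
    have hd := congrArg derivative ih
    rw [derivative_mul, derivative_mul] at hd
    simp only [Function.iterate_succ_apply', twistedIterDeriv, LinearMap.add_apply,
      LinearMap.comp_apply, LinearMap.mulLeft_apply]
    linear_combination G * hd - derivative^[k] (A * Y) * hGk + twistedIterDeriv G h k A * hY -
      k * derivative G * ih

theorem natDegree_twistedIterDeriv_le {G h : R[X]} {w : ℕ} (hG : G.natDegree ≤ w)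
    (hh : h.natDegree ≤ w) (A : R[X]) (k : ℕ) :
    (twistedIterDeriv G h k A).natDegree ≤ A.natDegree + k * w := by
  induction k with
  | zero => simp [twistedIterDeriv]
  | succ k ih =>
    have hcoef : (h - k * derivative G).natDegree ≤ w := by
      rw [← C_eq_natCast]
      refine (natDegree_sub_le_of_le hh ((natDegree_C_mul_le _ _).trans ?_)).trans (max_self w).le
      exact (natDegree_derivative_le G).trans ((Nat.sub_le _ 1).trans hG)
    refine natDegree_add_le_of_le (n := _) ?_ ?_ |>.trans (max_self _).le
    · have hderiv := (natDegree_derivative_le (twistedIterDeriv G h k A)).trans (Nat.sub_le _ 1)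
      exact (natDegree_mul_le_of_le hG (hderiv.trans ih)).trans (by lia)
    · refine (natDegree_mul_le_of_le hcoef ih).trans ?_
      lia

end LogDerivative

theorem exists_ne_zero_forall_eq_zero {F V E κ : Type*} [Field F] [AddCommGroup V] [Module F V]
    [FiniteDimensional F V] [AddCommGroup E] [Module F E] [Fintype κ] {W : κ → Submodule F E}
    [∀ k, FiniteDimensional F (W k)] (Φ : κ → V →ₗ[F] E) (hΦ : ∀ k v, Φ k v ∈ W k)
    (hlt : ∑ k, Module.finrank F (W k) < Module.finrank F V) :
    ∃ v ≠ 0, ∀ k, Φ k v = 0 := by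
  let Ψ : V →ₗ[F] (∀ k, W k) := LinearMap.pi fun k => (Φ k).codRestrict (W k) (hΦ k)
  have hker : LinearMap.ker Ψ ≠ ⊥ := by
    apply LinearMap.ker_ne_bot_of_finrank_lt
    rwa [Module.finrank_pi_fintype]
  obtain ⟨v, hv, hv0⟩ := Submodule.exists_mem_ne_zero_of_ne_bot hker
  exact ⟨v, hv0, fun k => congrArg Subtype.val (congrFun hv k)⟩

theorem eq_zero_of_sum_pow_mul_eq_zero {R : Type*} [CommRing R] [IsDomain R] {f : R} (hf : f ≠ 0)
    {n : ℕ} {S : Fin n → R} (hS : ∀ j, f ∣ S j → S j = 0)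
    (hsum : ∑ j : Fin n, f ^ (j : ℕ) * S j = 0) (j : Fin n) : S j = 0 := by
  induction n with
  | zero => exact j.elim0
  | succ n ih =>
    have hsplit : S 0 + f * ∑ j : Fin n, f ^ (j : ℕ) * S j.succ = 0 := by
      rw [← hsum, Fin.sum_univ_succ, Finset.mul_sum]
      simp [pow_succ', mul_assoc]
    have h0 : S 0 = 0 := hS 0 ⟨-∑ j : Fin n, f ^ (j : ℕ) * S j.succ, by linear_combination hsplit⟩
    rw [h0, zero_add] at hsplit
    refine Fin.cases h0 (fun i => ?_) j
    exact ih (fun i => hS i.succ) ((mul_eq_zero.mp hsplit).resolve_left hf) i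

theorem card_mul_le_natDegree {F : Type*} [Field F] {P : F[X]} (hP : P ≠ 0)
    {T : Finset F} {M : ℕ} (hM : ((M - 1).factorial : F) ≠ 0)
    (hT : ∀ x ∈ T, ∀ k < M, (derivative^[k] P).IsRoot x) :
    T.card * M ≤ P.natDegree := by
  classical
  rcases M with - | M
  · simp
  have hle : (M + 1) • T.val ≤ P.roots := by
    refine Multiset.le_iff_count.mpr fun x => ?_
    rw [Multiset.count_nsmul]
    by_cases hx : x ∈ T
    · rw [Multiset.count_eq_one_of_mem T.nodup hx, mul_one, count_roots]
      exact lt_rootMultiplicity_of_isRoot_iterate_derivative_of_mem_nonZeroDivisors hP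
        (fun k hk => hT x hx k (by lia)) (mem_nonZeroDivisors_of_ne_zero hM)
    · rw [Multiset.count_eq_zero_of_notMem hx, mul_zero]
      exact Nat.zero_le _
  calc T.card * (M + 1) = ((M + 1) • T.val).card := by
        rw [Multiset.card_nsmul, mul_comm, Finset.card_val]
    _ ≤ P.roots.card := Multiset.card_le_card hle
    _ ≤ P.natDegree := P.card_roots'

theorem prod_mul_derivative_prod_pow {R ι : Type*} [CommRing R] [DecidableEq ι] (s : Finset ι)
    (f : ι → R[X]) (m : ι → ℕ) :
    (∏ i ∈ s, f i) * derivative (∏ i ∈ s, f i ^ m i) =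
      (∑ i ∈ s, m i * derivative (f i) * ∏ i' ∈ s.erase i, f i') * ∏ i ∈ s, f i ^ m i := by
  rw [derivative_prod_finset, Finset.mul_sum, Finset.sum_mul]
  refine Finset.sum_congr rfl fun i hi => ?_
  have hpow : f i * derivative (f i ^ m i) = m i * derivative (f i) * f i ^ m i := by
    rcases m i with - | k
    · simp
    · rw [derivative_pow, Nat.add_sub_cancel, C_eq_natCast, pow_succ]; ring
  rw [← Finset.mul_prod_erase s f hi, ← Finset.mul_prod_erase s (fun i => f i ^ m i) hi]
  linear_combination (∏ i' ∈ s.erase i, f i') * (∏ i' ∈ s.erase i, f i' ^ m i') * hpow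

theorem natDegree_prod_X_add_C_le {R ι : Type*} [CommRing R] (s : Finset ι) (α : ι → R) :
    (∏ i ∈ s, (X + C (α i))).natDegree ≤ s.card := by
  refine (natDegree_prod_le _ _).trans
    ((Finset.sum_le_card_nsmul _ _ 1 fun i _ => ?_).trans (by simp))
  exact natDegree_add_C.trans_le natDegree_X_le

section Stepanov

variable {ι : Type*} [Fintype ι] [DecidableEq ι] {p l c J : ℕ}

/-- The auxiliary polynomial `∑ A_{e,j} X^{pj} ∏ (X + α_i)^{c e_i}` of the Stepanov method. -/
noncomputable def stepanovAux (c : ℕ) (α : ι → ZMod p) (A : (ι → Fin l) × Fin J → (ZMod p)[X]) :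
    (ZMod p)[X] :=
  ∑ θ, A θ * (X ^ (p * θ.2) * ∏ i, (X + C (α i)) ^ (c * θ.1 i))

/-- A polynomial which agrees with `∏ (X + α_i)^k` times the `k`-th derivative of
`stepanovAux c α A` at every `x : ZMod p` with all `(x + α_i)^c = 1`, and whose degree does not
depend on `c`. -/
noncomputable def stepanovDeriv (c : ℕ) (α : ι → ZMod p) (k : ℕ) :
    ((ι → Fin l) × Fin J → (ZMod p)[X]) →ₗ[ZMod p] (ZMod p)[X] :=
  ∑ θ, LinearMap.mulRight (ZMod p) (X ^ (θ.2 : ℕ)) ∘ₗ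
    twistedIterDeriv (∏ i, (X + C (α i)))
      (∑ i, ((c * θ.1 i : ℕ) : (ZMod p)[X]) * derivative (X + C (α i)) *
        ∏ i' ∈ Finset.univ.erase i, (X + C (α i'))) k ∘ₗ LinearMap.proj θ

theorem stepanovDeriv_mem_degreeLT (α : ι → ZMod p) (k : ℕ) {a : ℕ}
    {A : (ι → Fin l) × Fin J → (ZMod p)[X]} (hA : ∀ θ, (A θ).natDegree ≤ a) :
    stepanovDeriv c α k A ∈ degreeLT (ZMod p) (a + k * Fintype.card ι + J) := by
  rw [stepanovDeriv, LinearMap.sum_apply]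
  refine Submodule.sum_mem _ fun θ _ => mem_degreeLT.mpr (degree_le_natDegree.trans_lt ?_)
  refine Nat.cast_lt.mpr (lt_of_le_of_lt (natDegree_mul_le_of_le
    (natDegree_twistedIterDeriv_le (natDegree_prod_X_add_C_le _ α) ?_ _ k)
    (natDegree_X_pow_le _)) (Nat.add_lt_add_of_le_of_lt (Nat.add_le_add_right (hA θ) _) θ.2.isLt))
  refine natDegree_sum_le_of_forall_le _ _ fun i _ => ?_
  rw [derivative_X_add_C, mul_one, ← C_eq_natCast]
  exact (natDegree_C_mul_le _ _).trans ((natDegree_prod_X_add_C_le _ α).trans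
    (Finset.card_le_univ _))

theorem eval_prod_pow_mul_iterate_derivative_stepanovAux [Fact p.Prime] {α : ι → ZMod p}
    (A : (ι → Fin l) × Fin J → (ZMod p)[X]) {x : ZMod p} (hx : ∀ i, (x + α i) ^ c = 1) (k : ℕ) :
    ((∏ i, (X + C (α i))) ^ k * derivative^[k] (stepanovAux c α A)).eval x =
      (stepanovDeriv c α k A).eval x := by
  rw [stepanovAux, stepanovDeriv, iterate_derivative_sum, Finset.mul_sum, LinearMap.sum_apply,
    eval_finsetSum, eval_finsetSum]
  refine Finset.sum_congr rfl fun θ _ => ?_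
  have hfrob {G h Y : (ZMod p)[X]} (hY : G * derivative Y = h * Y) :
      G * derivative (X ^ (p * θ.2) * Y) = h * (X ^ (p * θ.2) * Y) := by
    rw [derivative_mul, derivative_X_pow, Nat.cast_mul, CharP.cast_eq_zero, zero_mul, C_0, zero_mul,
      zero_mul, zero_add]
    linear_combination X ^ (p * θ.2) * hY
  rw [pow_mul_iterate_derivative_mul (hfrob (prod_mul_derivative_prod_pow Finset.univ
    (fun i => X + C (α i)) (fun i => c * θ.1 i)))]
  simp [eval_prod, pow_mul, hx, ZMod.pow_card]

theorem natDegree_stepanovAux_le {α : ι → ZMod p} (hlc : l * c + 1 = p) {a : ℕ}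
    {A : (ι → Fin l) × Fin J → (ZMod p)[X]} (hA : ∀ θ, (A θ).natDegree ≤ a) (ha : a ≤ p) :
    (stepanovAux c α A).natDegree ≤ (J + Fintype.card ι) * p := by
  refine natDegree_sum_le_of_forall_le _ _ fun θ _ => ?_
  have hprod : (∏ i, (X + C (α i)) ^ (c * θ.1 i)).natDegree ≤ Fintype.card ι * p := by
    refine (natDegree_prod_le _ _).trans (Finset.sum_le_card_nsmul _ _ p fun i _ => ?_)
    refine (natDegree_pow_le_of_le _ (natDegree_add_C.trans_le natDegree_X_le)).trans ?_
    have := Nat.mul_le_mul_left c (θ.1 i).isLt.le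
    lia
  refine (natDegree_mul_le_of_le (hA θ)
    (natDegree_mul_le_of_le (natDegree_X_pow_le _) hprod)).trans ?_
  have := θ.2.isLt
  nlinarith

theorem stepanovAux_ne_zero [Fact p.Prime] (hlc : l * c + 1 = p) {α : ι → ZMod p}
    (hα : Function.Injective α) (hα0 : ∀ i, α i ≠ 0) {a : ℕ}
    (ha : l ^ Fintype.card ι * (a + Fintype.card ι) < p)
    {A : (ι → Fin l) × Fin J → (ZMod p)[X]} (hA : ∀ θ, (A θ).natDegree ≤ a) (hA0 : A ≠ 0) :
    stepanovAux c α A ≠ 0 := by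
  intro h
  let S (j : Fin J) : (ZMod p)[X] := ∑ e, A (e, j) * ∏ i, (X + C (α i)) ^ (c * e i)
  have hdvd (j : Fin J) (hj : X ^ p ∣ S j) (e : ι → Fin l) : A (e, j) = 0 :=
    congrFun (eq_zero_of_X_pow_dvd_sum hlc hα hα0 ha (fun e => hA (e, j)) hj) e
  have hsum : ∑ j : Fin J, (X ^ p) ^ (j : ℕ) * S j = 0 := by
    rw [← h, stepanovAux, Fintype.sum_prod_type_right]
    simp only [S, Finset.mul_sum, pow_mul, mul_left_comm]
  have hS := eq_zero_of_sum_pow_mul_eq_zero (pow_ne_zero p X_ne_zero)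
    (fun j hj => Finset.sum_eq_zero fun e _ => by rw [hdvd j hj e, zero_mul]) hsum
  exact hA0 <| funext fun θ => hdvd θ.2 (by rw [show S θ.2 = 0 from hS θ.2]; exact dvd_zero _) θ.1

theorem exists_stepanovDeriv_eq_zero [Fact p.Prime] (α : ι → ZMod p) {a M : ℕ}
    (hM : ∑ k ∈ Finset.range M, (a + k * Fintype.card ι + J) < l ^ Fintype.card ι * J * a) :
    ∃ A : (ι → Fin l) × Fin J → (ZMod p)[X], A ≠ 0 ∧ (∀ θ, (A θ).natDegree ≤ a) ∧
      ∀ k < M, stepanovDeriv c α k A = 0 := by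
  have hfin (n : ℕ) : FiniteDimensional (ZMod p) (degreeLT (ZMod p) n) :=
    (degreeLTEquiv (ZMod p) n).symm.finiteDimensional
  have hrank (n : ℕ) : Module.finrank (ZMod p) (degreeLT (ZMod p) n) = n := by
    rw [(degreeLTEquiv (ZMod p) n).finrank_eq, Module.finrank_fin_fun]
  have hdeg {n : ℕ} {f : (ZMod p)[X]} (hf : f ∈ degreeLT (ZMod p) n) : f.natDegree ≤ n :=
    natDegree_le_of_degree_le (mem_degreeLT.mp hf).le
  let incl : ((ι → Fin l) × Fin J → degreeLT (ZMod p) a) →ₗ[ZMod p]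
      ((ι → Fin l) × Fin J → (ZMod p)[X]) := (degreeLT (ZMod p) a).subtype.compLeft _
  obtain ⟨A, hA0, hvanish⟩ := exists_ne_zero_forall_eq_zero
    (W := fun k : Fin M => degreeLT (ZMod p) (a + k * Fintype.card ι + J))
    (fun k => stepanovDeriv c α k ∘ₗ incl)
    (fun k A => stepanovDeriv_mem_degreeLT α k fun θ => hdeg (A θ).2)
    (by simpa [hrank, Module.finrank_pi_fintype, Finset.sum_range, mul_assoc] using hM)
  refine ⟨incl A, fun h => hA0 ?_, fun θ => hdeg (A θ).2, fun k hk => hvanish ⟨k, hk⟩⟩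
  exact funext fun θ => Subtype.ext (congrFun h θ)

end Stepanov

theorem stepanov_card_mul_le {ι : Type*} [Fintype ι] {p l c J : ℕ} [Fact p.Prime]
    (hlc : l * c + 1 = p) {α : ι → ZMod p}
    (hα : Function.Injective α) (hα0 : ∀ i, α i ≠ 0) {T : Finset (ZMod p)}
    (hT : ∀ x ∈ T, ∀ i, (x + α i) ^ c = 1) {a M : ℕ} (hMp : M ≤ p)
    (ha : l ^ Fintype.card ι * (a + Fintype.card ι) < p)
    (hM : ∑ k ∈ Finset.range M, (a + k * Fintype.card ι + J) < l ^ Fintype.card ι * J * a) :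
    T.card * M ≤ (J + Fintype.card ι) * p := by
  classical
  obtain ⟨A, hA0, hA, hvanish⟩ := exists_stepanovDeriv_eq_zero (c := c) α hM
  have hp := (Fact.out : p.Prime)
  have hlc0 : l * c ≠ 0 := fun h => hp.one_lt.ne' (by rw [← hlc, h])
  have hc : c ≠ 0 := right_ne_zero_of_mul hlc0
  have hl : 0 < l := Nat.pos_of_ne_zero (left_ne_zero_of_mul hlc0)
  have hap : a ≤ p := by
    have := Nat.one_le_pow (Fintype.card ι) l hl
    nlinarith
  refine (card_mul_le_natDegree (stepanovAux_ne_zero hlc hα hα0 ha hA hA0) ?_ ?_).trans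
    (natDegree_stepanovAux_le hlc hA hap)
  · rw [Ne, CharP.cast_eq_zero_iff (ZMod p) p, hp.dvd_factorial]
    have := hp.pos
    lia
  · intro x hx k hk
    have heval := eval_prod_pow_mul_iterate_derivative_stepanovAux A (hT x hx) k
    rw [hvanish k hk, eval_zero, eval_mul, mul_eq_zero] at heval
    refine heval.resolve_left ?_
    rw [eval_pow, eval_prod]
    refine pow_ne_zero _ (Finset.prod_ne_zero_iff.mpr fun i _ h => ?_)
    have := hT x hx i
    simp [show x + α i = 0 by simpa using h, hc] at this

/-! ### Runs of residues on which a character is trivial -/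

theorem pow_eq_one_of_mulChar_eq_one {F R : Type*} [Field F] [Fintype F] [CommRing R]
    [Nontrivial R] {χ : MulChar F R} {c : ℕ} (hc : orderOf χ * c = Fintype.card F - 1) {y : F}
    (hy : χ y = 1) : y ^ c = 1 := by
  classical
  obtain ⟨y, rfl⟩ : IsUnit y := by
    by_contra h
    exact zero_ne_one ((χ.map_nonunit h).symm.trans hy)
  obtain ⟨g, hg⟩ := IsCyclic.exists_generator (α := Fˣ)
  obtain ⟨k, rfl : g ^ k = y⟩ := mem_powers_iff_mem_zpowers.mpr (hg y)
  have hχ : χ ^ k = 1 := by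
    rw [MulChar.eq_iff hg, MulChar.pow_apply_coe, MulChar.one_apply_coe, ← map_pow]
    exact_mod_cast hy
  obtain ⟨m, rfl⟩ := orderOf_dvd_of_pow_eq_one hχ
  have : (g ^ (orderOf χ * m)) ^ c = 1 := by
    rw [← pow_mul, mul_right_comm, hc, ← Fintype.card_units, pow_mul, pow_card_eq_one, one_pow]
  simpa using congrArg Units.val this

theorem sum_range_add_mul_add (a b : ℝ) (M : ℕ) :
    ∑ k ∈ Finset.range M, (a + k * b + b) = M * (a + b) + b * (M * (M - 1) / 2) := by
  induction M with
  | zero => simp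
  | succ M ih => rw [Finset.sum_range_succ, ih]; push_cast; ring

-- With `s = √p`, `L = log p` and `B = l ^ w`, this says that vanishing to order `M` imposes fewer
-- conditions than the auxiliary polynomial has coefficients.
theorem sum_range_lt_of_stepanov_parameters {s L : ℝ} {w B M a : ℕ} (hL : 16 ≤ L) (hs : 3000 ≤ s)
    (hw : 0 < w) (hwL : w ≤ 0.8 * L) (hB : s ≤ B) (hBs : B * L ^ 2 ≤ s ^ 2)
    (ha : B * (a + w) < s ^ 2) (ha' : s ^ 2 ≤ B * (a + w + 1)) (hM : M ≤ 2 * (w / L) ^ 2 * s + 1) :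
    ∑ k ∈ Finset.range M, (a + k * w + w) < B * w * a := by
  have hw1 : (1 : ℝ) ≤ w := by exact_mod_cast hw
  have hL0 : 0 < L := by linarith
  have hratio : (w : ℝ) / L ≤ 0.8 := by rwa [div_le_iff₀ hL0]
  have hx : 2 * (w / L) ^ 2 * s ≤ 1.28 * s := by
    have : ((w : ℝ) / L) ^ 2 ≤ 0.8 ^ 2 := by gcongr
    nlinarith
  have hlinear : M * ((a : ℝ) + w) ≤ (0.1 * w * s + 1) * s := by
    have has : (a : ℝ) + w ≤ s := by
      refine le_of_mul_le_mul_left (?_ : s * _ ≤ s * s) (by linarith)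
      calc s * ((a : ℝ) + w) ≤ B * (a + w) := by gcongr
        _ ≤ s * s := by linarith
    have hsq : ((w : ℝ) / L) ^ 2 ≤ 0.8 * (w / 16) := by
      calc ((w : ℝ) / L) ^ 2 = w / L * (w / L) := sq _
      _ ≤ 0.8 * (w / 16) := by gcongr
    have hMw : (M : ℝ) ≤ 0.1 * w * s + 1 := by nlinarith
    gcongr
  have hquadratic : (M : ℝ) * (M - 1) ≤ (1.28 * s + 1) * (1.28 * s) := by
    calc (M : ℝ) * (M - 1) ≤ M * (1.28 * s) := by gcongr; linarith
      _ ≤ (1.28 * s + 1) * (1.28 * s) := by gcongr; linarith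
  have hmain : 0.946 * s ^ 2 ≤ B * a := by
    have : (B : ℝ) * (w + 1) ≤ 0.054 * s ^ 2 := by
      refine le_of_mul_le_mul_right (?_ : _ * L ^ 2 ≤ _ * L ^ 2) (by positivity)
      calc (B : ℝ) * (w + 1) * L ^ 2 = B * L ^ 2 * (w + 1) := by ring
        _ ≤ s ^ 2 * (0.054 * L ^ 2) := by gcongr; nlinarith
        _ = _ := by ring
    linarith
  rw [← Nat.cast_lt (α := ℝ)]
  push_cast
  rw [sum_range_add_mul_add]
  have hws : (w : ℝ) * s * 3000 ≤ w * s * s := by gcongr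
  have hs1 : 1 * s ≤ w * s := by gcongr
  linarith [mul_le_mul_of_nonneg_left hmain w.cast_nonneg,
    mul_le_mul_of_nonneg_left hquadratic w.cast_nonneg]

theorem sixteen_le_log {x : ℝ} (hx : 10 ^ 7 ≤ x) : 16 ≤ Real.log x := by
  rw [Real.le_log_iff_exp_le (by linarith), ← mul_one (16 : ℝ),
    ← Nat.cast_ofNat (n := 16), Real.exp_nat_mul]
  calc Real.exp 1 ^ 16 ≤ 2.7182818286 ^ 16 := by gcongr; exact Real.exp_one_lt_d9.le
    _ ≤ x := by norm_num at hx ⊢; linarith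

theorem sqrt_le_pow_clog_sq {l : ℕ} (hl : 1 < l) (n : ℕ) : √(n : ℝ) ≤ l ^ Nat.clog (l ^ 2) n := by
  have hle := Nat.le_pow_clog (Nat.one_lt_pow two_ne_zero hl) n
  rw [pow_right_comm] at hle
  rw [Real.sqrt_le_left (by positivity)]
  exact_mod_cast hle

theorem pow_clog_sq_le {l n : ℕ} (hl : 1 < l) (hn : 1 < n) :
    (l : ℝ) ^ Nat.clog (l ^ 2) n ≤ l * √n := by
  have hl2 := Nat.one_lt_pow two_ne_zero hl
  have hlt := Nat.pow_pred_clog_lt_self hl2 hn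
  rw [pow_right_comm] at hlt
  have hpred : (l : ℝ) ^ (Nat.clog (l ^ 2) n - 1) ≤ √n :=
    Real.le_sqrt_of_sq_le (by exact_mod_cast hlt.le)
  rw [← Nat.sub_add_cancel (Nat.clog_pos hl2 hn), pow_succ']
  gcongr

theorem clog_sq_le {l n : ℕ} (hl : 1 < l) (hn : 1 < n) (hlog : 16 ≤ Real.log n) :
    (Nat.clog (l ^ 2) n : ℝ) ≤ 0.8 * Real.log n := by
  have hn0 : (0 : ℝ) < n := by positivity
  have hle := Real.log_le_log (by positivity) (pow_clog_sq_le hl hn)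
  rw [Real.log_pow, Real.log_mul (by positivity) (by positivity), Real.log_sqrt hn0.le] at hle
  have hlog2 : 0.69 ≤ Real.log l := by
    linarith [Real.log_two_gt_d9, Real.log_le_log two_pos (by exact_mod_cast hl : (2 : ℝ) ≤ l)]
  nlinarith

theorem exists_mul_add_lt_le {B w n : ℕ} (hB : 0 < B) (hn : B * (w + 1) ≤ n) :
    ∃ a, B * (a + w) < n ∧ n ≤ B * (a + w + 1) := by
  have hle : w ≤ (n - 1) / B := by
    rw [Nat.le_div_iff_mul_le hB]
    lia
  refine ⟨(n - 1) / B - w, ?_, ?_⟩ <;> rw [Nat.sub_add_cancel hle]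
  · have := Nat.mul_div_le (n - 1) B
    lia
  · have := Nat.lt_mul_div_succ (n - 1) hB
    lia

section Runs

variable {p : ℕ} {R : Type*} [CommRing R] {χ : MulChar (ZMod p) R}

open Classical in
/-- The starting points of the runs of `w` consecutive residues on which `χ` takes the value `1`. -/
noncomputable def runStarts [NeZero p] (χ : MulChar (ZMod p) R) (w : ℕ) : Finset (ZMod p) :=
  {x | ∀ m < w, χ (x + m) = 1}

theorem mem_runStarts [NeZero p] {w : ℕ} {x : ZMod p} :
    x ∈ runStarts χ w ↔ ∀ m < w, χ (x + m) = 1 := by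
  simp [runStarts]

variable [Fact p.Prime]

theorem exists_orderOf_mul_add_one_eq (χ : MulChar (ZMod p) R) : ∃ c, orderOf χ * c + 1 = p := by
  obtain ⟨c, hc⟩ := χ.orderOf_dvd_card_sub_one
  rw [ZMod.card] at hc
  exact ⟨c, by rw [← hc, Nat.sub_add_cancel (Fact.out : p.Prime).one_le]⟩

variable [Nontrivial R]

theorem orderOf_mul_card_runStarts_one_le (χ : MulChar (ZMod p) R) :
    orderOf χ * (runStarts χ 1).card ≤ p := by
  obtain ⟨c, hc⟩ := exists_orderOf_mul_add_one_eq χ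
  have hroots : runStarts χ 1 ⊆ (Polynomial.nthRoots c (1 : ZMod p)).toFinset := fun x hx => by
    have hc0 : 0 < c := Nat.pos_of_ne_zero fun h =>
      (Fact.out : p.Prime).one_lt.ne' (by simpa [h] using hc.symm)
    rw [Multiset.mem_toFinset, Polynomial.mem_nthRoots hc0]
    refine pow_eq_one_of_mulChar_eq_one (χ := χ) (by rw [ZMod.card]; lia) ?_
    simpa using mem_runStarts.mp hx 0 one_pos
  calc orderOf χ * (runStarts χ 1).card ≤ orderOf χ * c := by
        gcongr
        exact (Finset.card_le_card hroots).trans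
          ((Multiset.toFinset_card_le _).trans (Polynomial.card_nthRoots _ _))
    _ ≤ p := by lia

theorem card_runStarts_mul_le {w a M : ℕ} (hw : w < p) (hM : M ≤ p)
    (ha : orderOf χ ^ w * (a + w) < p)
    (hsum : ∑ k ∈ Finset.range M, (a + k * w + w) < orderOf χ ^ w * w * a) :
    (runStarts χ w).card * M ≤ 2 * w * p := by
  obtain ⟨c, hc⟩ := exists_orderOf_mul_add_one_eq χ
  have hcast {i j : ℕ} (hi : i ≤ w) (hj : j ≤ w) (h : (i : ZMod p) = j) : i = j :=
    CharP.natCast_injOn_Iio (ZMod p) p (hi.trans_lt hw) (hj.trans_lt hw) h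
  -- The shift by `1` keeps the translates `m + 1` nonzero.
  have hinj : Function.Injective fun x : ZMod p => x - 1 := sub_left_injective
  rw [← Finset.card_image_of_injective _ hinj, two_mul]
  simpa using stepanov_card_mul_le (α := fun m : Fin w => ((m + 1 : ℕ) : ZMod p)) (J := w) hc
    (fun i j h => Fin.ext <| Nat.succ_injective <| hcast i.2 j.2 h)
    (fun i h => Nat.succ_ne_zero _ <| hcast i.2 (Nat.zero_le w) (by simpa using h))
    (fun x hx i => by
      obtain ⟨y, hy, rfl⟩ := Finset.mem_image.mp hx
      refine pow_eq_one_of_mulChar_eq_one (χ := χ) (by rw [ZMod.card]; lia) ?_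
      simpa [sub_add_add_cancel, add_comm] using mem_runStarts.mp hy i i.2)
    hM (by simpa using ha) (by simpa using hsum)

theorem mul_card_runStarts_le_of_pow {w : ℕ} (hp : 10 ^ 7 ≤ p) (hw : 0 < w)
    (hwL : w ≤ 0.8 * Real.log p) (hB : √p ≤ orderOf χ ^ w)
    (hBs : orderOf χ ^ w * Real.log p ^ 2 ≤ p) :
    (w * (runStarts χ w).card : ℝ) ≤ Real.log p ^ 2 * √p := by
  have hpR : (10 : ℝ) ^ 7 ≤ p := by exact_mod_cast hp
  have hL : 16 ≤ Real.log p := sixteen_le_log hpR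
  have hsq : √(p : ℝ) ^ 2 = p := Real.sq_sqrt p.cast_nonneg
  have hs : 3000 ≤ √(p : ℝ) := Real.le_sqrt_of_sq_le (by linarith)
  set L := Real.log p
  set s := √(p : ℝ)
  have hB0 : 0 < orderOf χ ^ w := by exact_mod_cast (by linarith : (0 : ℝ) < orderOf χ ^ w)
  have hBw : orderOf χ ^ w * (w + 1) ≤ p := by
    have hw1 : (w : ℝ) + 1 ≤ L ^ 2 := by nlinarith
    have : (orderOf χ : ℝ) ^ w * (w + 1) ≤ p := le_trans (by gcongr) hBs
    exact_mod_cast this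
  obtain ⟨a, ha, ha'⟩ := exists_mul_add_lt_le hB0 hBw
  have hM := (Nat.ceil_lt_add_one (by positivity : 0 ≤ 2 * (w / L) ^ 2 * s)).le
  have hMp : ⌈2 * (w / L) ^ 2 * s⌉₊ ≤ p := by
    rw [Nat.ceil_le, ← hsq, sq s]
    have : (w : ℝ) / L ≤ 0.8 := by rwa [div_le_iff₀ (by linarith)]
    gcongr
    nlinarith [show 0 ≤ (w : ℝ) / L by positivity]
  have hsum := sum_range_lt_of_stepanov_parameters hL hs hw hwL (by exact_mod_cast hB)
    (by rw [hsq]; exact_mod_cast hBs) (by rw [hsq]; exact_mod_cast ha)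
    (by rw [hsq]; exact_mod_cast ha') hM
  have hcard : ((runStarts χ w).card : ℝ) * (2 * (w / L) ^ 2 * s) ≤ 2 * w * s ^ 2 := by
    rw [hsq]
    refine (mul_le_mul_of_nonneg_left (Nat.le_ceil _) (by positivity)).trans ?_
    exact_mod_cast card_runStarts_mul_le (by nlinarith) hMp ha hsum
  refine le_of_mul_le_mul_right ?_ (by positivity : 0 < 2 * w * s / L ^ 2)
  calc (w * (runStarts χ w).card : ℝ) * (2 * w * s / L ^ 2) =
        (runStarts χ w).card * (2 * (w / L) ^ 2 * s) := by ring
    _ ≤ 2 * w * s ^ 2 := hcard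
    _ = L ^ 2 * s * (2 * w * s / L ^ 2) := by field_simp

-- If `χ` has large order, the `χ = 1` fibre itself is small enough; otherwise `w` is the least
-- length with `√p ≤ orderOf χ ^ w`.
theorem exists_mul_card_runStarts_le (hp : 10 ^ 7 ≤ p) (hχ : χ ≠ 1) :
    ∃ w : ℕ, 0 < w ∧ w ≤ 0.8 * Real.log p ∧
      (w * (runStarts χ w).card : ℝ) ≤ Real.log p ^ 2 * √p := by
  have hL : 16 ≤ Real.log p := sixteen_le_log (by exact_mod_cast hp)
  have hs : √(p : ℝ) * √p = p := Real.mul_self_sqrt p.cast_nonneg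
  rcases le_total √(p : ℝ) (orderOf χ * Real.log p ^ 2) with hlarge | hsmall
  · refine ⟨1, one_pos, by push_cast; linarith, ?_⟩
    have hcard : (orderOf χ * (runStarts χ 1).card : ℝ) ≤ p := by
      exact_mod_cast orderOf_mul_card_runStarts_one_le χ
    refine le_of_mul_le_mul_right ?_ (by positivity : 0 < √(p : ℝ))
    calc ((1 : ℕ) * (runStarts χ 1).card : ℝ) * √p
        ≤ (1 : ℕ) * (runStarts χ 1).card * (orderOf χ * Real.log p ^ 2) := by gcongr
      _ = orderOf χ * (runStarts χ 1).card * Real.log p ^ 2 := by push_cast; ring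
      _ ≤ p * Real.log p ^ 2 := by gcongr
      _ = Real.log p ^ 2 * √p * √p := by rw [mul_assoc, hs, mul_comm]
  · have hp1 : 1 < p := (Fact.out : p.Prime).one_lt
    have hl : 1 < orderOf χ :=
      lt_of_le_of_ne χ.orderOf_pos fun h => hχ (orderOf_eq_one_iff.mp h.symm)
    have hw := Nat.clog_pos (Nat.one_lt_pow two_ne_zero hl) hp1
    refine ⟨_, hw, clog_sq_le hl hp1 hL, mul_card_runStarts_le_of_pow hp hw (clog_sq_le hl hp1 hL)
      (sqrt_le_pow_clog_sq hl p) ?_⟩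
    calc (orderOf χ : ℝ) ^ Nat.clog (orderOf χ ^ 2) p * Real.log p ^ 2
        ≤ orderOf χ * √p * Real.log p ^ 2 := by gcongr; exact pow_clog_sq_le hl hp1
      _ = orderOf χ * Real.log p ^ 2 * √p := by ring
      _ ≤ √p * √p := by gcongr
      _ = p := hs

end Runs

/-! ### Burgess windows -/

section FareyWindows

/-- Burgess windows: the triples `(q, t, z)` with `q ≤ n` prime to `u`, `t / q` a reduced fraction
in `[0, 1)` and `z, …, z + 2w - 1` in `(pt / q, (pt + Q) / q]`. A character `χ` modulo `p` that is
`1` at `q` then takes the same value at `z + m` as at `q (z + m) - p t ∈ [1, Q]`. -/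
def fareyWindows (p u Q n w : ℕ) : Finset (Σ _ _ : ℕ, ℕ) :=
  {q ∈ Finset.Ioc 0 n | ¬ u ∣ q}.sigma fun q =>
    {t ∈ Finset.range q | q.Coprime t}.sigma fun t =>
      Finset.Ico (p * t / q + 1) ((p * t + Q) / q + 2 - 2 * w)

theorem mem_fareyWindows {p u Q n w q t z : ℕ} (h : ⟨q, t, z⟩ ∈ fareyWindows p u Q n w) :
    (0 < q ∧ q ≤ n ∧ ¬ u ∣ q) ∧ (t < q ∧ q.Coprime t) ∧
      ∀ m < 2 * w, p * t < q * (z + m) ∧ q * (z + m) ≤ p * t + Q := by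
  simp only [fareyWindows, Finset.mem_sigma, Finset.mem_filter, Finset.mem_Ioc, Finset.mem_range,
    Finset.mem_Ico] at h
  obtain ⟨⟨⟨hq0, hqn⟩, hqu⟩, ht, hz⟩ := h
  refine ⟨⟨hq0, hqn, hqu⟩, ht, fun m hm => ?_⟩
  rw [mul_comm q, ← Nat.div_lt_iff_lt_mul hq0, ← Nat.le_div_iff_mul_le hq0]
  lia

theorem mul_le_mul_of_window_inter {p n Q q t q' t' z : ℕ} (hnQ : n * Q ≤ p) (hq : q ≤ n)
    (hq' : 0 < q') (h : p * t < q * z) (h' : q' * z ≤ p * t' + Q) : q' * t ≤ q * t' := by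
  have hlt : p * (q' * t) < p * (q * t' + 1) := calc
    p * (q' * t) = q' * (p * t) := by ring
    _ < q' * (q * z) := by gcongr
    _ = q * (q' * z) := by ring
    _ ≤ q * (p * t' + Q) := by gcongr
    _ = p * (q * t') + q * Q := by ring
    _ ≤ p * (q * t') + n * Q := by gcongr
    _ ≤ p * (q * t' + 1) := by lia
  exact Nat.lt_succ_iff.mp (Nat.lt_of_mul_lt_mul_left hlt)

theorem injOn_fareyWindows {p u Q n w : ℕ} (hw : 0 < w) (hnQ : n * Q ≤ p) (hQ : Q < p) :
    Set.InjOn (fun i : Σ _ _ : ℕ, ℕ => (i.2.2 : ZMod p)) (fareyWindows p u Q n w) := by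
  have hlt {q t z : ℕ} (h : ⟨q, t, z⟩ ∈ fareyWindows p u Q n w) : z < p := by
    obtain ⟨-, ⟨htq, -⟩, hz⟩ := mem_fareyWindows h
    have := (hz 0 (by positivity)).2
    by_contra! hpz
    nlinarith
  rintro ⟨q, t, z⟩ h ⟨q', t', z'⟩ h' hzz'
  obtain rfl : z = z' := CharP.natCast_injOn_Iio (ZMod p) p (hlt h) (hlt h') hzz'
  obtain ⟨⟨hq0, hqn, -⟩, ⟨-, hco⟩, hz⟩ := mem_fareyWindows h
  obtain ⟨⟨hq0', hqn', -⟩, ⟨-, hco'⟩, hz'⟩ := mem_fareyWindows h'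
  specialize hz 0 (by positivity)
  specialize hz' 0 (by positivity)
  have hcross : q' * t = q * t' := (mul_le_mul_of_window_inter hnQ hqn hq0' hz.1 hz'.2).antisymm
    (mul_le_mul_of_window_inter hnQ hqn' hq0 hz'.1 hz.2)
  obtain rfl : q = q' := Nat.dvd_antisymm (hco.dvd_of_dvd_mul_right (Dvd.intro _ hcross.symm))
    (hco'.dvd_of_dvd_mul_right (Dvd.intro _ hcross))
  obtain rfl : t = t' := Nat.eq_of_mul_eq_mul_left hq0 hcross
  rfl

variable {p : ℕ} [NeZero p] {R : Type*} [CommRing R] {χ : MulChar (ZMod p) R}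

-- Two multiples of `u` among the `q (z + m) - p t` are at least `u` indices apart, so one of the
-- two halves of a window avoids them.
theorem mem_runStarts_or_add_mem_runStarts {u Q w q t z : ℕ} (hu : u.Prime) (hwu : 2 * w ≤ u)
    (hres : ∀ m : ℕ, 1 ≤ m → m ≤ Q → m.gcd u = 1 → χ m = 1) (hq : χ q = 1) (hqu : ¬ u ∣ q)
    (hz : ∀ m < 2 * w, p * t < q * (z + m) ∧ q * (z + m) ≤ p * t + Q) :
    (z : ZMod p) ∈ runStarts χ w ∨ (z + w : ZMod p) ∈ runStarts χ w := by
  have hgood {m : ℕ} (hm : m < 2 * w) (hd : ¬ u ∣ q * (z + m) - p * t) :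
      χ ((z : ZMod p) + (m : ℕ)) = 1 := by
    obtain ⟨hlt, hle⟩ := hz m hm
    have := hres (q * (z + m) - p * t) (by lia) (by lia) (hu.coprime_iff_not_dvd.mpr hd).symm
    simpa [Nat.cast_sub hlt.le, hq] using this
  simp only [mem_runStarts]
  by_cases hfirst : ∀ m < w, ¬ u ∣ q * (z + m) - p * t
  · exact .inl fun m hm => hgood (by lia) (hfirst m hm)
  push Not at hfirst
  obtain ⟨m₁, hm₁, hd₁⟩ := hfirst
  refine .inr fun m hm => ?_
  rw [add_assoc, ← Nat.cast_add]
  refine hgood (by lia) fun hd => ?_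
  have hlt := (hz m₁ (by lia)).1
  have hsub : q * (z + (w + m)) - p * t - (q * (z + m₁) - p * t) = q * (w + m - m₁) := by
    rw [Nat.sub_sub_sub_cancel_right hlt.le, ← Nat.mul_sub]
    congr 1
    lia
  rcases hu.dvd_mul.mp (hsub ▸ Nat.dvd_sub hd hd₁) with h | h
  · exact hqu h
  · have := Nat.le_of_dvd (by lia) h
    lia

theorem card_fareyWindows_le {u Q n w : ℕ} (hu : u.Prime) (hw : 0 < w) (hwu : 2 * w ≤ u)
    (hnQ : n * Q ≤ p) (hQ : Q < p)
    (hres : ∀ m : ℕ, 1 ≤ m → m ≤ Q → m.gcd u = 1 → χ m = 1) :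
    (fareyWindows p u Q n w).card ≤ 2 * (runStarts χ w).card := by
  classical
  have hsub : (fareyWindows p u Q n w).image (fun i => (i.2.2 : ZMod p)) ⊆
      runStarts χ w ∪ (runStarts χ w).image fun x => x - w := by
    simp only [Finset.image_subset_iff, Sigma.forall]
    intro q t z h
    obtain ⟨⟨hq0, -, hqu⟩, -, hz⟩ := mem_fareyWindows h
    have hqQ : q ≤ Q := by
      have hfirst := (hz 0 (by lia)).1
      have hsecond := (hz 1 (by lia)).2
      rw [mul_add] at hfirst hsecond
      lia
    have hq := hres q hq0 hqQ (hu.coprime_iff_not_dvd.mpr hqu).symm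
    rw [Finset.mem_union, Finset.mem_image]
    exact (mem_runStarts_or_add_mem_runStarts hu hwu hres hq hqu hz).imp_right
      fun h => ⟨_, h, add_sub_cancel_right _ _⟩
  rw [← Finset.card_image_of_injOn (injOn_fareyWindows hw hnQ hQ)]
  refine (Finset.card_le_card hsub).trans ((Finset.card_union_le _ _).trans ?_)
  have := Finset.card_image_le (s := runStarts χ w) (f := fun x => x - w)
  lia

end FareyWindows

section TotientSums

theorem sum_Ioc_zero_id (n : ℕ) : ∑ m ∈ Finset.Ioc 0 n, (m : ℝ) = n * (n + 1) / 2 := by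
  induction n with
  | zero => simp
  | succ n ih => rw [Finset.sum_Ioc_succ_top n.zero_le, ih]; push_cast; ring

theorem sum_totient_mul_div (n : ℕ) :
    ∑ q ∈ Finset.Ioc 0 n, q.totient * (n / q) = ∑ m ∈ Finset.Ioc 0 n, m := by
  let φ : ArithmeticFunction ℕ := ⟨Nat.totient, Nat.totient_zero⟩
  calc ∑ q ∈ Finset.Ioc 0 n, q.totient * (n / q)
      = ∑ m ∈ Finset.Ioc 0 n, (φ * ArithmeticFunction.zeta) m := by
        simpa [φ] using (ArithmeticFunction.sum_Ioc_mul_zeta_eq_sum φ n).symm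
    _ = ∑ m ∈ Finset.Ioc 0 n, m := Finset.sum_congr rfl fun m _ => by
        rw [ArithmeticFunction.mul_zeta_apply]
        exact Nat.sum_totient m

theorem le_sum_totient_div {n : ℕ} (hn : 0 < n) :
    ((n : ℝ) + 1) / 2 ≤ ∑ q ∈ Finset.Ioc 0 n, (q.totient : ℝ) / q := by
  refine le_of_mul_le_mul_left ?_ (by positivity : (0 : ℝ) < n)
  calc (n : ℝ) * ((n + 1) / 2) = ((∑ q ∈ Finset.Ioc 0 n, q.totient * (n / q) : ℕ) : ℝ) := by
        rw [sum_totient_mul_div, Nat.cast_sum, sum_Ioc_zero_id, mul_div_assoc]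
    _ = ∑ q ∈ Finset.Ioc 0 n, (q.totient : ℝ) * (n / q : ℕ) := by push_cast; rfl
    _ ≤ ∑ q ∈ Finset.Ioc 0 n, (q.totient : ℝ) * (n / q) := by gcongr; exact Nat.cast_div_le
    _ = n * ∑ q ∈ Finset.Ioc 0 n, (q.totient : ℝ) / q := by
        rw [Finset.mul_sum]
        exact Finset.sum_congr rfl fun q _ => by ring

theorem sum_totient_le (n : ℕ) :
    ∑ q ∈ Finset.Ioc 0 n, (q.totient : ℝ) ≤ n * (n + 1) / 2 := by
  rw [← sum_Ioc_zero_id]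
  exact Finset.sum_le_sum fun q _ => by exact_mod_cast q.totient_le

theorem sum_totient_mul_div_le_of_dvd (u n : ℕ) {Q : ℝ} (hQ : 0 ≤ Q) :
    ∑ q ∈ Finset.Ioc 0 n with u ∣ q, (q.totient : ℝ) * (Q / q) ≤ Q * (n / u) := by
  calc ∑ q ∈ Finset.Ioc 0 n with u ∣ q, (q.totient : ℝ) * (Q / q)
      ≤ ∑ q ∈ Finset.Ioc 0 n with u ∣ q, Q := Finset.sum_le_sum fun q _ => by
        rw [mul_div_left_comm]
        exact mul_le_of_le_one_right hQ
          (div_le_one_of_le₀ (by exact_mod_cast q.totient_le) q.cast_nonneg)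
    _ = Q * (n / u : ℕ) := by
        rw [Finset.sum_const, Nat.Ioc_filter_dvd_card_eq_div, nsmul_eq_mul, mul_comm]
    _ ≤ Q * (n / u) := by gcongr; exact Nat.cast_div_le

theorem le_sum_totient_mul_sub (u : ℕ) {n : ℕ} (hn : 0 < n) {Q b : ℝ} (hQ : 0 ≤ Q) (hb : 0 ≤ b) :
    ((n : ℝ) + 1) / 2 * (Q - b * n) - Q * (n / u) ≤
      ∑ q ∈ Finset.Ioc 0 n with ¬ u ∣ q, (q.totient : ℝ) * (Q / q - b) := by
  have hsplit := Finset.sum_filter_add_sum_filter_not (Finset.Ioc 0 n) (u ∣ ·)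
    fun q => (q.totient : ℝ) * (Q / q - b)
  have hdvd : ∑ q ∈ Finset.Ioc 0 n with u ∣ q, (q.totient : ℝ) * (Q / q - b) ≤ Q * (n / u) := by
    refine (Finset.sum_le_sum fun q _ => ?_).trans (sum_totient_mul_div_le_of_dvd u n hQ)
    gcongr
    linarith
  have hall : ((n : ℝ) + 1) / 2 * (Q - b * n) ≤
      ∑ q ∈ Finset.Ioc 0 n, (q.totient : ℝ) * (Q / q - b) := calc
    ((n : ℝ) + 1) / 2 * (Q - b * n) = Q * ((n + 1) / 2) - b * (n * (n + 1) / 2) := by ring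
    _ ≤ Q * ∑ q ∈ Finset.Ioc 0 n, (q.totient : ℝ) / q -
        b * ∑ q ∈ Finset.Ioc 0 n, (q.totient : ℝ) := by
      gcongr
      · exact le_sum_totient_div hn
      · exact sum_totient_le n
    _ = ∑ q ∈ Finset.Ioc 0 n, (q.totient : ℝ) * (Q / q - b) := by
      rw [Finset.mul_sum, Finset.mul_sum, ← Finset.sum_sub_distrib]
      exact Finset.sum_congr rfl fun q _ => by ring
  linarith

end TotientSums

theorem div_sub_le_card_Ico (a Q w q : ℕ) :
    (Q : ℝ) / q - 2 * w ≤ (Finset.Ico (a / q + 1) ((a + Q) / q + 2 - 2 * w)).card := by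
  have hcard : (a + Q) / q + 1 ≤ ((a + Q) / q + 2 - 2 * w - (a / q + 1)) + 2 * w + a / q := by lia
  rw [Nat.card_Ico]
  have hcardR : (((a + Q) / q : ℕ) : ℝ) + 1 ≤
      ((a + Q) / q + 2 - 2 * w - (a / q + 1) : ℕ) + 2 * w + (a / q : ℕ) := by exact_mod_cast hcard
  have hfloor : ((a : ℝ) + Q) / q < ((a + Q) / q : ℕ) + 1 := by
    rw [← Nat.floor_div_eq_div (K := ℝ)]
    exact_mod_cast Nat.lt_floor_add_one _
  have := Nat.cast_div_le (α := ℝ) (m := a) (n := q)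
  rw [add_div] at hfloor
  linarith

theorem le_card_fareyWindows (p u Q w : ℕ) {n : ℕ} (hn : 0 < n) :
    ((n : ℝ) + 1) / 2 * (Q - 2 * w * n) - Q * (n / u) ≤ (fareyWindows p u Q n w).card := by
  refine (le_sum_totient_mul_sub u hn Q.cast_nonneg (by positivity)).trans ?_
  rw [fareyWindows, Finset.card_sigma, Nat.cast_sum]
  refine Finset.sum_le_sum fun q _ => ?_
  rw [Finset.card_sigma, Nat.totient_eq_card_coprime, ← nsmul_eq_mul, Nat.cast_sum]
  refine Finset.card_nsmul_le_sum _ _ _ fun t _ => div_sub_le_card_Ico (p * t) Q w q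

theorem sq_mul_le_card_runStarts {p : ℕ} [NeZero p] {R : Type*} [CommRing R]
    {χ : MulChar (ZMod p) R} {u Q w : ℕ} (hu : u.Prime) (hw : 0 < w) (hwu : 2 * w ≤ u)
    (hwQ : 4 * w ≤ Q) (hQ : Q < p) (hQp : Q ^ 2 ≤ 4 * w * p)
    (hres : ∀ m : ℕ, 1 ≤ m → m ≤ Q → m.gcd u = 1 → χ m = 1) :
    (Q : ℝ) ^ 2 * (1 - 4 / u) ≤ 32 * (w * (runStarts χ w).card) := by
  have hn : 0 < Q / (4 * w) := Nat.div_pos hwQ (by positivity)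
  have hle : (Q / (4 * w) : ℕ) * (4 * w) ≤ (Q : ℝ) := by
    exact_mod_cast Nat.div_mul_le_self Q (4 * w)
  have hlt : (Q : ℝ) ≤ ((Q / (4 * w) : ℕ) + 1) * (4 * w) := by
    exact_mod_cast (Nat.lt_div_mul_add (by positivity : 0 < 4 * w)).le.trans_eq (by ring)
  have hnQ : Q / (4 * w) * Q ≤ p := by
    refine Nat.le_of_mul_le_mul_left (?_ : 4 * w * _ ≤ 4 * w * p) (by positivity)
    nlinarith [Nat.div_mul_le_self Q (4 * w)]
  have hcard : ((fareyWindows p u Q (Q / (4 * w)) w).card : ℝ) ≤ 2 * (runStarts χ w).card := by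
    exact_mod_cast card_fareyWindows_le hu hw hwu hnQ hQ hres
  have hlower := (le_card_fareyWindows p u Q w hn).trans hcard
  set n := Q / (4 * w)
  have hmain : (Q : ℝ) * (Q / 2) ≤ (n + 1) * (4 * w) * (Q - 2 * w * n) := by
    gcongr
    linarith
  have hmult : (Q : ℝ) * (n * (4 * w)) / u ≤ Q * Q / u := by gcongr
  have hscaled := mul_le_mul_of_nonneg_left hlower (by positivity : (0 : ℝ) ≤ 16 * w)
  linear_combination hscaled + 2 * hmain + 4 * hmult

/-! ### Explicit constants -/

theorem log_le_div_add {x : ℝ} (hx : 0 < x) : Real.log x ≤ x / 54 + 3 := by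
  have hexp : 54 ≤ Real.exp 4 := by
    have h : Real.exp 4 = Real.exp 1 ^ 4 := by rw [← Real.exp_nat_mul]; norm_num
    calc (54 : ℝ) ≤ 2.718 ^ 4 := by norm_num
      _ ≤ Real.exp 4 := by rw [h]; gcongr; linarith [Real.exp_one_gt_d9]
  have hlog := Real.log_le_sub_one_of_pos (by positivity : 0 < x / Real.exp 4)
  rw [Real.log_div hx.ne' (Real.exp_pos 4).ne', Real.log_exp] at hlog
  have : x / Real.exp 4 ≤ x / 54 := by gcongr
  linarith

theorem rpow_one_quarter_pow_four {x : ℝ} (hx : 0 ≤ x) : (x ^ ((1 : ℝ) / 4)) ^ 4 = x := by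
  rw [← Real.rpow_natCast, ← Real.rpow_mul hx]
  norm_num

theorem sqrt_eq_rpow_one_quarter_sq {x : ℝ} (hx : 0 ≤ x) : √x = (x ^ ((1 : ℝ) / 4)) ^ 2 := by
  rw [Real.sqrt_eq_iff_eq_sq hx (sq_nonneg _), ← pow_mul, rpow_one_quarter_pow_four hx]

theorem le_rpow_one_quarter {x : ℝ} (hx : 10 ^ 7 ≤ x) : 56 ≤ x ^ ((1 : ℝ) / 4) := by
  have hx0 : 0 ≤ x := le_trans (by norm_num) hx
  refine le_of_pow_le_pow_left₀ four_ne_zero (Real.rpow_nonneg hx0 _) ?_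
  rw [rpow_one_quarter_pow_four hx0]
  linarith

theorem three_mul_log_le_rpow_one_quarter {x : ℝ} (hx : 10 ^ 7 ≤ x) :
    3 * Real.log x ≤ x ^ ((1 : ℝ) / 4) := by
  have hr := le_rpow_one_quarter hx
  have hlog : Real.log x = 4 * Real.log (x ^ ((1 : ℝ) / 4)) := by
    rw [Real.log_rpow (by linarith)]
    ring
  linarith [log_le_div_add (x := x ^ ((1 : ℝ) / 4)) (by linarith)]

theorem exists_window_length {p w : ℕ} (hp : 10 ^ 7 ≤ p) (hw : 0 < w)
    (hwL : w ≤ 0.8 * Real.log p) :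
    ∃ Q : ℕ, Q ≤ 6 * (p : ℝ) ^ ((1 : ℝ) / 4) * Real.log p ∧
      5.99 * ((p : ℝ) ^ ((1 : ℝ) / 4) * Real.log p) ≤ Q ∧
      4 * w ≤ Q ∧ Q < p ∧ Q ^ 2 ≤ 4 * w * p := by
  have hpR : (10 : ℝ) ^ 7 ≤ p := by exact_mod_cast hp
  have hL := sixteen_le_log hpR
  have hr := le_rpow_one_quarter hpR
  have hLr := three_mul_log_le_rpow_one_quarter hpR
  have hr4 := rpow_one_quarter_pow_four (p.cast_nonneg (α := ℝ))
  set L := Real.log p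
  set r := (p : ℝ) ^ ((1 : ℝ) / 4)
  have hrL : 56 * 16 ≤ r * L := by gcongr
  have hQle : (⌊6 * r * L⌋₊ : ℝ) ≤ 6 * r * L := Nat.floor_le (by positivity)
  have hQge : 5.99 * (r * L) ≤ ⌊6 * r * L⌋₊ := by linarith [Nat.lt_floor_add_one (6 * r * L)]
  have hQr : (⌊6 * r * L⌋₊ : ℝ) ≤ 2 * r ^ 2 := by nlinarith
  refine ⟨⌊6 * r * L⌋₊, hQle, hQge, ?_, ?_, ?_⟩
  · have : 4 * (w : ℝ) ≤ ⌊6 * r * L⌋₊ := by nlinarith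
    exact_mod_cast this
  · have : (⌊6 * r * L⌋₊ : ℝ) < p := by
      refine hQr.trans_lt ?_
      rw [← hr4]
      nlinarith [pow_le_pow_left₀ (by norm_num) hr 2]
    exact_mod_cast this
  · have : (⌊6 * r * L⌋₊ : ℝ) ^ 2 ≤ 4 * (w : ℝ) * p := calc
      (⌊6 * r * L⌋₊ : ℝ) ^ 2 ≤ (2 * r ^ 2) ^ 2 := by gcongr
      _ = 4 * 1 * (p : ℝ) := by rw [← hr4]; ring
      _ ≤ 4 * w * p := by gcongr; exact_mod_cast hw
    exact_mod_cast this

theorem main_H_bound_general {p : ℕ} [Fact p.Prime] (hp : 10 ^ 7 ≤ p) {R : Type*} [CommRing R]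
    {χ : DirichletCharacter R p} (hχ : χ ≠ 1) {u : ℕ} (hu : u.Prime) (hu2 : 4 * Real.log p ≤ u)
    {H : ℕ} (hres : ∀ n : ℕ, 1 ≤ n → n ≤ H → n.gcd u = 1 → χ n = 1) :
    (H : ℝ) ≤ 6 * (p : ℝ) ^ ((1 : ℝ) / 4) * Real.log p := by
  have : Nontrivial R := not_subsingleton_iff_nontrivial.mp fun _ =>
    hχ (MulChar.ext fun _ => Subsingleton.elim _ _)
  have hpR : (10 : ℝ) ^ 7 ≤ p := by exact_mod_cast hp
  have hL := sixteen_le_log hpR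
  have hr := le_rpow_one_quarter hpR
  obtain ⟨w, hw, hwL, hcard⟩ := exists_mul_card_runStarts_le hp hχ
  obtain ⟨Q, hQle, hQge, hwQ, hQp, hQ2⟩ := exists_window_length hp hw hwL
  by_contra! hH
  have hwu : 2 * w ≤ u := by
    have : 2 * (w : ℝ) ≤ u := by linarith
    exact_mod_cast this
  have hcount : (Q : ℝ) ^ 2 * (1 - 4 / u) ≤ 32 * (w * (runStarts χ w).card) :=
    sq_mul_le_card_runStarts hu hw hwu hwQ hQp hQ2 fun m h1 hm =>
      hres m h1 (hm.trans (by exact_mod_cast hQle.trans hH.le))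
  have hu16 : 15 / 16 ≤ 1 - 4 / (u : ℝ) := by
    have : 4 / (u : ℝ) ≤ 4 / 64 := by gcongr; linarith
    linarith
  rw [sqrt_eq_rpow_one_quarter_sq p.cast_nonneg] at hcard
  set L := Real.log p
  set r := (p : ℝ) ^ ((1 : ℝ) / 4)
  have hlower : (5.99 * (r * L)) ^ 2 * (15 / 16) ≤ (Q : ℝ) ^ 2 * (1 - 4 / u) := by gcongr
  nlinarith [show 0 < (r * L) ^ 2 by positivity]

theorem burgessF_mem_Ioc {X : ℝ} (hX : 22 ≤ X) : burgessF X 89 ∈ Set.Ioc 0 1 := by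
  have hX0 : 0 < X := by linarith
  have hlog0 : 0 ≤ Real.log X := Real.log_nonneg (by linarith)
  have hlog : (1 + Real.log X) / X ≤ 1 / 54 + 4 / 22 := calc
    (1 + Real.log X) / X ≤ (X / 54 + 4) / X := by
      gcongr ?_ / X
      linarith [log_le_div_add hX0]
    _ = 1 / 54 + 4 / X := by field_simp
    _ ≤ 1 / 54 + 4 / 22 := by gcongr
  have hpi : Real.pi ^ 2 / 3 ≤ 3.4 := by nlinarith [Real.pi_lt_d2, Real.pi_pos]
  have hY : 1 / (2 * X ^ 2) + 1 / (2 * X) + (1 / (1 - ((89 : ℕ) : ℝ)⁻¹)) * ((1 + Real.log X) / X)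
      ≤ 0.23 := calc
    _ ≤ 1 / (2 * 22 ^ 2) + 1 / (2 * 22) + (1 / (1 - ((89 : ℕ) : ℝ)⁻¹)) * (1 / 54 + 4 / 22) := by
      gcongr
    _ ≤ 0.23 := by norm_num
  have hY0 : 0 ≤ 1 / (2 * X ^ 2) + 1 / (2 * X) +
      (1 / (1 - ((89 : ℕ) : ℝ)⁻¹)) * ((1 + Real.log X) / X) := by
    exact add_nonneg (by positivity) (mul_nonneg (by norm_num) (by positivity))
  rw [burgessF]
  constructor
  · linarith [mul_le_mul hpi hY hY0 (by norm_num)]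
  · linarith [show 0 ≤ Real.pi ^ 2 / 3 * _ from mul_nonneg (by positivity) hY0]

theorem six_le_pi_mul_exp_one_div_sqrt_two : 6 ≤ Real.pi * Real.exp 1 / √2 := by
  have hsqrt : √2 ≤ 1.4143 := by
    rw [Real.sqrt_le_left (by norm_num)]
    norm_num
  have he := Real.exp_one_gt_d9
  have hmul : 3.14 * 2.718 ≤ Real.pi * Real.exp 1 := by
    gcongr
    · exact Real.pi_gt_d2.le
    · linarith
  rw [le_div_iff₀ (by positivity)]
  linarith

theorem exp_two_mem_Icc : Real.exp 2 ∈ Set.Icc 4 7.5 := by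
  have h : Real.exp 2 = Real.exp 1 ^ 2 := by rw [← Real.exp_nat_mul]; norm_num
  have hgt := Real.exp_one_gt_d9
  have hlt := Real.exp_one_lt_d9
  rw [h]
  constructor <;> nlinarith

theorem one_le_sqrt_one_add_div {L F : ℝ} (hL : 1 ≤ L) (hF : F ∈ Set.Ioc 0 1) :
    1 ≤ √((1 + 4 / (3 * L)) / ((1 - 1 / (Real.exp 2 * L)) * F)) := by
  have hexp : 4 * 1 ≤ Real.exp 2 * L := by
    gcongr
    exact exp_two_mem_Icc.1
  have hsub : 1 - 1 / (Real.exp 2 * L) ∈ Set.Ioc 0 1 := by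
    have : 1 / (Real.exp 2 * L) ≤ 1 / (4 * 1) := by gcongr
    constructor
    · linarith
    · linarith [show 0 ≤ 1 / (Real.exp 2 * L) by positivity]
  rw [Real.one_le_sqrt, one_le_div (mul_pos hsub.1 hF.1)]
  calc (1 - 1 / (Real.exp 2 * L)) * F ≤ 1 := mul_le_one₀ hsub.2 hF.1.le hF.2
    _ ≤ 1 + 4 / (3 * L) := le_add_of_nonneg_right (by positivity)

theorem main_H_bound (p : ℕ) [Fact p.Prime] (hp : (10:ℕ)^7 ≤ p)
    (χ : DirichletCharacter ℂ p) (hχ : χ ≠ 1)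
    (u : ℕ) (hu : u.Prime) (hu2 : Real.exp 2 * Real.log p ≤ u)
    (H : ℕ) (hH : 0 < H)
    (hres : ∀ n : ℕ, 1 ≤ n → n ≤ H → Nat.gcd n u = 1 → χ (n : ZMod p) = 1)
    (hHle : (H : ℝ) ≤ (2 * Real.exp 2 * Real.log p - 2) ^ ((1:ℝ)/2) * (p : ℝ) ^ ((1:ℝ)/2)) :
    (H : ℝ) ≤ (Real.pi * Real.exp 1 / Real.sqrt 2) *
      Real.sqrt ((1 + 4 / (3 * Real.log p)) /
        ((1 - 1 / (Real.exp 2 * Real.log p)) *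
          burgessF ((Real.pi * Real.exp 1 / Real.sqrt 2) * (p : ℝ) ^ ((1:ℝ)/4) / (2 * Real.exp 2)) 89)) *
      (p : ℝ) ^ ((1:ℝ)/4) * Real.log p := by
  have hpR : (10 : ℝ) ^ 7 ≤ p := by exact_mod_cast hp
  have hL := sixteen_le_log hpR
  have hK := six_le_pi_mul_exp_one_div_sqrt_two
  obtain ⟨he, he'⟩ := exp_two_mem_Icc
  have hX : 22 ≤ Real.pi * Real.exp 1 / √2 * (p : ℝ) ^ ((1 : ℝ) / 4) / (2 * Real.exp 2) := by
    rw [le_div_iff₀ (by positivity)]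
    have hKr : 6 * 56 ≤ Real.pi * Real.exp 1 / √2 * (p : ℝ) ^ ((1 : ℝ) / 4) := by
      gcongr
      exact le_rpow_one_quarter hpR
    linarith
  have hg := one_le_sqrt_one_add_div (L := Real.log p) (by linarith) (burgessF_mem_Ioc hX)
  have hu4 : 4 * Real.log p ≤ u := le_trans (by gcongr) hu2
  calc (H : ℝ) ≤ 6 * 1 * (p : ℝ) ^ ((1 : ℝ) / 4) * Real.log p := by
        rw [mul_one]
        exact main_H_bound_general hp hχ hu hu4 hres
    _ ≤ _ := by gcongr
end

section
/- Let X > 1 be a real number and let u be a prime. Then Σ_{1 ≤ q ≤ X, gcd(q,u)=1} φ(q) ≥ (3/π²)·(1 − u^{-1})·X²·f(X,u), where the sum is over positive integers q ≤ X coprime to u and f(X,u) = 1 − (π²/3)·( 1/(2X²) + 1/(2X) + (1/(1 − u^{-1}))·(1 + log X)/X ). -/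
/-!
Since `φ = μ * id`, restricting to integers coprime to `u` turns the sum into
`∑_{d ≤ X} μ(d) S(X / d)`, where `d` runs over integers coprime to `u` and `S(Y)` is the sum of the
`m ≤ Y` coprime to `u`. Inclusion-exclusion over the divisors of `u` gives
`S(Y) = (φ(u) / u) Y² / 2` up to `2 ^ ω(u) Y / 2`, since `u` has `2 ^ ω(u)` squarefree divisors;
these errors add up to a harmonic sum. In the main term,
`∑ μ(d) / d²` over all `d` coprime to `u` is the inverse of `∑ 1 / d² ≤ ζ(2) = π² / 6`,
and cutting it at `X` costs at most `∑_{d > X} 1 / d² ≤ 1 / X² + 1 / X`.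
-/

open Finset
open scoped ArithmeticFunction.Moebius ArithmeticFunction.zeta

section CoprimePart

variable {R : Type*}

/-- The arithmetic function that agrees with `f` at the integers coprime to `u` and vanishes
elsewhere, i.e. the twist of `f` by the principal character modulo `u`. -/
def coprimePart [Zero R] (u : ℕ) (f : ArithmeticFunction R) : ArithmeticFunction R :=
  ⟨fun n => if n.Coprime u then f n else 0, by simp⟩

lemma coprimePart_apply [Zero R] (u : ℕ) (f : ArithmeticFunction R) (n : ℕ) :
    coprimePart u f n = if n.Coprime u then f n else 0 := rfl

lemma coprimePart_one [MonoidWithZero R] (u : ℕ) :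
    coprimePart u (1 : ArithmeticFunction R) = 1 := by
  ext n
  by_cases hn : n = 1 <;> simp [coprimePart_apply, hn]

lemma coprimePart_mul [Semiring R] (u : ℕ) (f g : ArithmeticFunction R) :
    coprimePart u (f * g) = coprimePart u f * coprimePart u g := by
  ext n
  simp only [coprimePart_apply, ArithmeticFunction.mul_apply, ite_zero_mul_ite_zero,
    ← Nat.coprime_mul_iff_left]
  have hprod : ∀ x ∈ n.divisorsAntidiagonal, x.1 * x.2 = n := fun x hx =>
    (Nat.mem_divisorsAntidiagonal.1 hx).1
  split_ifs with hn
  · exact sum_congr rfl fun x hx => by rw [hprod x hx, if_pos hn]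
  · exact (sum_eq_zero fun x hx => by rw [hprod x hx, if_neg hn]).symm

lemma abs_coprimePart_le_abs [AddCommGroup R] [LinearOrder R] [IsOrderedAddMonoid R] (u : ℕ)
    (f : ArithmeticFunction R) (n : ℕ) : |coprimePart u f n| ≤ |f n| := by
  rw [coprimePart_apply]
  split_ifs <;> simp

lemma abs_coprimePart_moebius_le_one (u n : ℕ) :
    |coprimePart u (μ : ArithmeticFunction ℝ) n| ≤ 1 := by
  refine (abs_coprimePart_le_abs u _ n).trans ?_
  rw [ArithmeticFunction.intCoe_apply]
  exact_mod_cast ArithmeticFunction.abs_moebius_le_one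

lemma abs_coprimePart_zeta_le_one (u n : ℕ) :
    |coprimePart u (ζ : ArithmeticFunction ℝ) n| ≤ 1 :=
  (abs_coprimePart_le_abs u _ n).trans (by by_cases hn : n = 0 <;> simp [hn])

end CoprimePart

lemma moebius_mul_id_apply {R : Type*} [Ring R] (n : ℕ) :
    ((μ : ArithmeticFunction R) * (ArithmeticFunction.id : ArithmeticFunction R)) n =
      (n.totient : R) := by
  rcases n.eq_zero_or_pos with rfl | hn
  · simp
  · have hsum : ∀ k : ℕ, k > 0 → ∑ d ∈ k.divisors, (d.totient : R) = k := fun k _ => by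
      rw [← Nat.cast_sum, Nat.sum_totient]
    simpa [ArithmeticFunction.mul_apply] using
      ArithmeticFunction.sum_eq_iff_sum_mul_moebius_eq.1 hsum n hn

section DirichletSeries

lemma LSeriesHasSum_ofReal_iff {f : ArithmeticFunction ℝ} {k : ℕ} {a : ℝ} :
    LSeriesHasSum (fun n => (f n : ℂ)) k a ↔ HasSum (fun n : ℕ => f n / (n : ℝ) ^ k) a := by
  rw [LSeriesHasSum, ← Complex.hasSum_ofReal]
  refine iff_of_eq (congrArg₂ HasSum (funext fun n => ?_) rfl)
  rw [LSeries.term_def₀ (by simp), Complex.cpow_neg, Complex.cpow_natCast]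
  push_cast
  rw [div_eq_mul_inv]

lemma hasSum_mul_div_pow {f g : ArithmeticFunction ℝ} {k : ℕ} {a b : ℝ}
    (hf : HasSum (fun n : ℕ => f n / (n : ℝ) ^ k) a)
    (hg : HasSum (fun n : ℕ => g n / (n : ℝ) ^ k) b) :
    HasSum (fun n : ℕ => (f * g) n / (n : ℝ) ^ k) (a * b) := by
  rw [← LSeriesHasSum_ofReal_iff] at hf hg ⊢
  convert hf.convolution hg using 1
  · ext n
    simp [LSeries.convolution_def, ArithmeticFunction.mul_apply]
  · push_cast
    rfl

lemma summable_div_sq {a : ℕ → ℝ} (ha : ∀ n, |a n| ≤ 1) :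
    Summable fun n : ℕ => a n / (n : ℝ) ^ 2 := by
  refine .of_norm_bounded hasSum_zeta_two.summable fun n => ?_
  rw [Real.norm_eq_abs, abs_div, abs_of_nonneg (by positivity : (0 : ℝ) ≤ (n : ℝ) ^ 2)]
  gcongr
  exact ha n

lemma tsum_coprimePart_moebius_mul_tsum_coprimePart_zeta (u : ℕ) :
    (∑' n : ℕ, coprimePart u (μ : ArithmeticFunction ℝ) n / (n : ℝ) ^ 2) *
      ∑' n : ℕ, coprimePart u (ζ : ArithmeticFunction ℝ) n / (n : ℝ) ^ 2 = 1 := by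
  refine (hasSum_mul_div_pow (summable_div_sq (abs_coprimePart_moebius_le_one u)).hasSum
    (summable_div_sq (abs_coprimePart_zeta_le_one u)).hasSum).unique ?_
  rw [← coprimePart_mul, ArithmeticFunction.coe_moebius_mul_coe_zeta, coprimePart_one]
  convert hasSum_ite_eq (1 : ℕ) (1 : ℝ) using 2 with n
  by_cases hn : n = 1 <;> simp [hn]

lemma tsum_coprimePart_zeta_le (u : ℕ) :
    ∑' n : ℕ, coprimePart u (ζ : ArithmeticFunction ℝ) n / (n : ℝ) ^ 2 ≤ Real.pi ^ 2 / 6 := by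
  rw [← hasSum_zeta_two.tsum_eq]
  refine (summable_div_sq (abs_coprimePart_zeta_le_one u)).tsum_le_tsum (fun n => ?_)
    hasSum_zeta_two.summable
  gcongr
  exact (abs_le.1 (abs_coprimePart_zeta_le_one u n)).2

lemma six_div_pi_sq_le_tsum_coprimePart_moebius (u : ℕ) :
    6 / Real.pi ^ 2 ≤ ∑' n : ℕ, coprimePart u (μ : ArithmeticFunction ℝ) n / (n : ℝ) ^ 2 := by
  set B := ∑' n : ℕ, coprimePart u (ζ : ArithmeticFunction ℝ) n / (n : ℝ) ^ 2 with hB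
  have hB_nonneg : 0 ≤ B := tsum_nonneg fun n => by
    rw [coprimePart_apply]
    split_ifs
    · rw [ArithmeticFunction.natCoe_apply]
      positivity
    · simp
  have hmul := tsum_coprimePart_moebius_mul_tsum_coprimePart_zeta u
  rw [← hB] at hmul
  have hB_pos : 0 < B := hB_nonneg.lt_of_ne' (right_ne_zero_of_mul_eq_one hmul)
  calc 6 / Real.pi ^ 2 = 1 / (Real.pi ^ 2 / 6) := (one_div_div _ _).symm
    _ ≤ 1 / B := one_div_le_one_div_of_le hB_pos (tsum_coprimePart_zeta_le u)
    _ = _ := (eq_one_div_of_mul_eq_one_left hmul).symm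

lemma tsum_inv_sq_nat_add_le {n : ℕ} (hn : n ≠ 0) :
    ∑' i : ℕ, (((i + n : ℕ) : ℝ) ^ 2)⁻¹ ≤ ((n : ℝ) ^ 2)⁻¹ + (n : ℝ)⁻¹ := by
  refine Real.tsum_le_of_sum_range_le (fun i => by positivity) fun k => ?_
  rw [range_eq_Ico, sum_Ico_add' (fun i : ℕ => ((i : ℝ) ^ 2)⁻¹), zero_add]
  calc ∑ i ∈ Ico n (k + n), ((i : ℝ) ^ 2)⁻¹
      ≤ ∑ i ∈ Icc n (k + n), ((i : ℝ) ^ 2)⁻¹ :=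
        sum_le_sum_of_subset_of_nonneg Ico_subset_Icc_self fun i _ _ => by positivity
    _ = ((n : ℝ) ^ 2)⁻¹ + ∑ i ∈ Ioc n (k + n), ((i : ℝ) ^ 2)⁻¹ :=
        (add_sum_Ioc_eq_sum_Icc (Nat.le_add_left n k)).symm
    _ ≤ ((n : ℝ) ^ 2)⁻¹ + (n : ℝ)⁻¹ := by
        have hk : (0 : ℝ) ≤ ((k + n : ℕ) : ℝ)⁻¹ := by positivity
        linarith [sum_Ioc_inv_sq_le_sub (α := ℝ) hn (Nat.le_add_left n k)]

lemma tsum_div_sq_sub_le_sum_range {a : ℕ → ℝ} (ha : ∀ n, |a n| ≤ 1) {N : ℕ} (hN : N ≠ 0) :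
    ∑' n : ℕ, a n / (n : ℝ) ^ 2 - (((N : ℝ) ^ 2)⁻¹ + (N : ℝ)⁻¹) ≤
      ∑ n ∈ range N, a n / (n : ℝ) ^ 2 := by
  have htail : ∑' i : ℕ, a (i + N) / ((i + N : ℕ) : ℝ) ^ 2 ≤
      ∑' i : ℕ, (((i + N : ℕ) : ℝ) ^ 2)⁻¹ := by
    refine Summable.tsum_le_tsum (fun i => ?_)
      ((summable_nat_add_iff (f := fun n : ℕ => a n / (n : ℝ) ^ 2) N).2 (summable_div_sq ha))
      ((summable_nat_add_iff (f := fun n : ℕ => ((n : ℝ) ^ 2)⁻¹) N).2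
        (Real.summable_nat_pow_inv.2 one_lt_two))
    rw [← one_div]
    gcongr
    exact (abs_le.1 (ha _)).2
  linarith [(summable_div_sq ha).sum_add_tsum_nat_add N, tsum_inv_sq_nat_add_le hN]

lemma tsum_div_sq_sub_le_sum_Ioc_floor {a : ℕ → ℝ} (ha : ∀ n, |a n| ≤ 1) {X : ℝ} (hX : 0 < X) :
    ∑' n : ℕ, a n / (n : ℝ) ^ 2 - (1 / X ^ 2 + 1 / X) ≤
      ∑ n ∈ Ioc 0 ⌊X⌋₊, a n / (n : ℝ) ^ 2 := by
  have hX_le : X ≤ (⌊X⌋₊ + 1 : ℕ) := mod_cast (Nat.lt_floor_add_one X).le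
  have hrange : ∑ n ∈ range (⌊X⌋₊ + 1), a n / (n : ℝ) ^ 2 =
      ∑ n ∈ Ioc 0 ⌊X⌋₊, a n / (n : ℝ) ^ 2 := by
    rw [Nat.range_succ_eq_Icc_zero, ← add_sum_Ioc_eq_sum_Icc (Nat.zero_le _)]
    simp
  rw [← hrange]
  refine le_trans ?_ (tsum_div_sq_sub_le_sum_range ha (Nat.succ_ne_zero ⌊X⌋₊))
  rw [one_div, one_div]
  gcongr

end DirichletSeries

section CoprimeIntegers

lemma sum_moebius_divisors_filter_dvd {u : ℕ} (hu : u ≠ 0) (n : ℕ) :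
    ∑ d ∈ u.divisors with d ∣ n, μ d = if n.Coprime u then 1 else 0 := by
  have hgcd : u.divisors.filter (· ∣ n) = (n.gcd u).divisors := by
    ext d
    simp [Nat.dvd_gcd_iff, hu, and_comm]
  rw [hgcd, ← ArithmeticFunction.coe_mul_zeta_apply, ArithmeticFunction.moebius_mul_coe_zeta,
    ArithmeticFunction.one_apply]

lemma sum_Ioc_filter_dvd {K : Type*} [Field K] [CharZero K] (d N : ℕ) :
    ∑ m ∈ Ioc 0 N with d ∣ m, (m : K) = d * ((N / d : ℕ) * ((N / d : ℕ) + 1) / 2) := by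
  induction N with
  | zero => simp
  | succ N ih =>
    rw [sum_filter] at ih ⊢
    rw [sum_Ioc_succ_top N.zero_le, ih, Nat.succ_div]
    split_ifs with hd
    · have hN : (d : K) * ((N / d : ℕ) + 1) = N + 1 := by
        have := Nat.mul_div_cancel' hd
        rw [Nat.succ_div_of_dvd hd] at this
        exact_mod_cast this
      push_cast
      linear_combination -hN
    · simp

lemma abs_floor_mul_floor_add_one_sub_sq_le {Y : ℝ} (hY : 0 ≤ Y) :
    |(⌊Y⌋₊ : ℝ) * (⌊Y⌋₊ + 1) - Y ^ 2| ≤ Y := by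
  have hle := Nat.floor_le hY
  have hlt := Nat.lt_floor_add_one Y
  rw [abs_le]
  constructor <;> nlinarith

lemma abs_sum_Ioc_filter_dvd_sub_le {d : ℕ} (hd : d ≠ 0) {Y : ℝ} (hY : 0 ≤ Y) :
    |∑ m ∈ Ioc 0 ⌊Y⌋₊ with d ∣ m, (m : ℝ) - Y ^ 2 / (2 * d)| ≤ Y / 2 := by
  have hd_pos : (0 : ℝ) < d := by positivity
  rw [sum_Ioc_filter_dvd, ← Nat.floor_div_natCast]
  calc |(d : ℝ) * (⌊Y / d⌋₊ * (⌊Y / d⌋₊ + 1) / 2) - Y ^ 2 / (2 * d)|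
      = (d : ℝ) / 2 * |(⌊Y / d⌋₊ : ℝ) * (⌊Y / d⌋₊ + 1) - (Y / d) ^ 2| := by
        rw [← abs_of_pos (half_pos hd_pos), ← abs_mul]
        congr 1
        field_simp
    _ ≤ (d : ℝ) / 2 * (Y / d) := by
        gcongr
        exact abs_floor_mul_floor_add_one_sub_sq_le (by positivity)
    _ = Y / 2 := by field_simp

lemma sum_Ioc_coprimePart_id {u : ℕ} (hu : u ≠ 0) (N : ℕ) :
    ∑ m ∈ Ioc 0 N, coprimePart u (ArithmeticFunction.id : ArithmeticFunction ℝ) m =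
      ∑ d ∈ u.divisors, (μ d : ℝ) * ∑ m ∈ Ioc 0 N with d ∣ m, (m : ℝ) := by
  simp_rw [mul_sum, sum_filter]
  rw [sum_comm]
  refine sum_congr rfl fun m _ => ?_
  rw [← sum_filter, ← sum_mul, ← Int.cast_sum, sum_moebius_divisors_filter_dvd hu,
    coprimePart_apply]
  simp

lemma sum_divisors_moebius_div {K : Type*} [Field K] [CharZero K] {u : ℕ} (hu : u ≠ 0) :
    ∑ d ∈ u.divisors, (μ d : K) / d = (u.totient : K) / u := by
  rw [← moebius_mul_id_apply, ArithmeticFunction.mul_apply, sum_div,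
    ← Nat.sum_divisorsAntidiagonal fun d _ => (μ d : K) / d]
  refine sum_congr rfl fun x hx => ?_
  have hx_mul := (Nat.mem_divisorsAntidiagonal.1 hx).1
  have hx_ne : x.1 * x.2 ≠ 0 := hx_mul ▸ hu
  have hx₁ : (x.1 : K) ≠ 0 := mod_cast left_ne_zero_of_mul hx_ne
  have hx₂ : (x.2 : K) ≠ 0 := mod_cast right_ne_zero_of_mul hx_ne
  simp only [ArithmeticFunction.intCoe_apply, ArithmeticFunction.natCoe_apply,
    ArithmeticFunction.id_apply]
  rw [← hx_mul, Nat.cast_mul]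
  field_simp

lemma sum_divisors_abs_moebius {u : ℕ} (hu : u ≠ 0) :
    ∑ d ∈ u.divisors, |μ d| = 2 ^ #u.primeFactors := by
  simp_rw [ArithmeticFunction.abs_moebius]
  rw [← sum_filter, Nat.sum_divisors_filter_squarefree hu]
  rw [sum_const, card_powerset, Nat.factors_eq, List.toFinset_coe]
  simp

lemma abs_sum_Ioc_coprimePart_id_sub_le {u : ℕ} (hu : u ≠ 0) {Y : ℝ} (hY : 0 ≤ Y) :
    |∑ m ∈ Ioc 0 ⌊Y⌋₊, coprimePart u (ArithmeticFunction.id : ArithmeticFunction ℝ) m -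
      u.totient / u / 2 * Y ^ 2| ≤ 2 ^ #u.primeFactors / 2 * Y := by
  have hdiff : ∑ m ∈ Ioc 0 ⌊Y⌋₊, coprimePart u (ArithmeticFunction.id : ArithmeticFunction ℝ) m -
      u.totient / u / 2 * Y ^ 2 =
      ∑ d ∈ u.divisors, (μ d : ℝ) * (∑ m ∈ Ioc 0 ⌊Y⌋₊ with d ∣ m, (m : ℝ) - Y ^ 2 / (2 * d)) := by
    rw [sum_Ioc_coprimePart_id hu, ← sum_divisors_moebius_div hu, sum_div, sum_mul,
      ← sum_sub_distrib]
    exact sum_congr rfl fun d _ => by ring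
  calc _ ≤ ∑ d ∈ u.divisors,
        |(μ d : ℝ) * (∑ m ∈ Ioc 0 ⌊Y⌋₊ with d ∣ m, (m : ℝ) - Y ^ 2 / (2 * d))| := by
        rw [hdiff]
        exact abs_sum_le_sum_abs _ _
    _ ≤ ∑ d ∈ u.divisors, |(μ d : ℝ)| * (Y / 2) := by
        refine sum_le_sum fun d hd => ?_
        rw [abs_mul]
        gcongr
        exact abs_sum_Ioc_filter_dvd_sub_le (Nat.pos_of_mem_divisors hd).ne' hY
    _ = 2 ^ #u.primeFactors / 2 * Y := by
        rw [← sum_mul]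
        have habs : ∑ d ∈ u.divisors, |(μ d : ℝ)| = 2 ^ #u.primeFactors :=
          mod_cast sum_divisors_abs_moebius hu
        rw [habs]
        ring

end CoprimeIntegers

lemma sum_Ioc_floor_inv_le {X : ℝ} (hX : 1 ≤ X) :
    ∑ d ∈ Ioc 0 ⌊X⌋₊, (d : ℝ)⁻¹ ≤ 1 + Real.log X := by
  have h := harmonic_floor_le_one_add_log X hX
  rw [harmonic_eq_sum_Icc] at h
  push_cast at h
  exact h

lemma abs_sum_Ioc_mul_sub_le {f g : ArithmeticFunction ℝ} {c C : ℝ} (hf : ∀ d, |f d| ≤ 1)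
    (hg : ∀ Y : ℝ, 0 ≤ Y → |∑ m ∈ Ioc 0 ⌊Y⌋₊, g m - c * Y ^ 2| ≤ C * Y) {X : ℝ} (hX : 1 ≤ X) :
    |∑ n ∈ Ioc 0 ⌊X⌋₊, (f * g) n - c * X ^ 2 * ∑ d ∈ Ioc 0 ⌊X⌋₊, f d / (d : ℝ) ^ 2| ≤
      C * X * (1 + Real.log X) := by
  have hC : 0 ≤ C := by simpa using (abs_nonneg _).trans (hg 1 zero_le_one)
  have hdiff : ∑ n ∈ Ioc 0 ⌊X⌋₊, (f * g) n - c * X ^ 2 * ∑ d ∈ Ioc 0 ⌊X⌋₊, f d / (d : ℝ) ^ 2 =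
      ∑ d ∈ Ioc 0 ⌊X⌋₊, f d * (∑ m ∈ Ioc 0 ⌊X / d⌋₊, g m - c * (X / d) ^ 2) := by
    rw [ArithmeticFunction.sum_Ioc_mul_eq_sum_sum, mul_sum, ← sum_sub_distrib]
    refine sum_congr rfl fun d _ => ?_
    rw [Nat.floor_div_natCast]
    ring
  calc _ ≤ ∑ d ∈ Ioc 0 ⌊X⌋₊, |f d * (∑ m ∈ Ioc 0 ⌊X / d⌋₊, g m - c * (X / d) ^ 2)| := by
        rw [hdiff]
        exact abs_sum_le_sum_abs _ _
    _ ≤ ∑ d ∈ Ioc 0 ⌊X⌋₊, 1 * (C * (X / d)) := by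
        refine sum_le_sum fun d _ => ?_
        rw [abs_mul]
        exact mul_le_mul (hf d) (hg _ (by positivity)) (abs_nonneg _) zero_le_one
    _ = C * X * ∑ d ∈ Ioc 0 ⌊X⌋₊, (d : ℝ)⁻¹ := by
        rw [mul_sum]
        exact sum_congr rfl fun d _ => by ring
    _ ≤ C * X * (1 + Real.log X) := by
        gcongr
        exact sum_Ioc_floor_inv_le hX

lemma sum_totient_coprime_eq_sum_coprimePart_mul (N u : ℕ) :
    ∑ q ∈ Icc 1 N with q.Coprime u, (q.totient : ℝ) =
      ∑ q ∈ Ioc 0 N, (coprimePart u (μ : ArithmeticFunction ℝ) *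
        coprimePart u (ArithmeticFunction.id : ArithmeticFunction ℝ)) q := by
  rw [← coprimePart_mul, sum_filter]
  simp only [coprimePart_apply, moebius_mul_id_apply]
  rfl

theorem totient_sum_lower_bound_general {X : ℝ} (hX : 1 ≤ X) {u : ℕ} (hu : u ≠ 0) :
    u.totient / u * (3 / Real.pi ^ 2 * X ^ 2 - (X + 1) / 2) -
        2 ^ #u.primeFactors / 2 * X * (1 + Real.log X) ≤
      ∑ q ∈ Icc 1 ⌊X⌋₊ with q.Coprime u, (q.totient : ℝ) := by
  have hX_pos : 0 < X := by linarith
  have hμ := abs_coprimePart_moebius_le_one u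
  have hsum := abs_sum_Ioc_mul_sub_le hμ (fun _ => abs_sum_Ioc_coprimePart_id_sub_le hu) hX
  have hmain : 6 / Real.pi ^ 2 - (1 / X ^ 2 + 1 / X) ≤
      ∑ d ∈ Ioc 0 ⌊X⌋₊, coprimePart u (μ : ArithmeticFunction ℝ) d / (d : ℝ) ^ 2 := by
    linarith [six_div_pi_sq_le_tsum_coprimePart_moebius u,
      tsum_div_sq_sub_le_sum_Ioc_floor hμ hX_pos]
  rw [sum_totient_coprime_eq_sum_coprimePart_mul]
  calc _ = u.totient / u / 2 * X ^ 2 * (6 / Real.pi ^ 2 - (1 / X ^ 2 + 1 / X)) -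
        2 ^ #u.primeFactors / 2 * X * (1 + Real.log X) := by
        field_simp
        ring
    _ ≤ u.totient / u / 2 * X ^ 2 *
          ∑ d ∈ Ioc 0 ⌊X⌋₊, coprimePart u (μ : ArithmeticFunction ℝ) d / (d : ℝ) ^ 2 -
        2 ^ #u.primeFactors / 2 * X * (1 + Real.log X) := by gcongr
    _ ≤ _ := by linarith [(abs_le.1 hsum).1]

lemma totient_div_self_of_prime {p : ℕ} (hp : p.Prime) :
    (p.totient : ℝ) / p = 1 - (p : ℝ)⁻¹ := by
  have hp_ne : (p : ℝ) ≠ 0 := mod_cast hp.ne_zero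
  rw [Nat.totient_prime hp, Nat.cast_pred hp.pos]
  field_simp

lemma mul_burgessF_eq {X : ℝ} (hX : X ≠ 0) {u : ℕ} (hu : 1 < u) :
    3 / Real.pi ^ 2 * (1 - (u : ℝ)⁻¹) * X ^ 2 * burgessF X u =
      (1 - (u : ℝ)⁻¹) * (3 / Real.pi ^ 2 * X ^ 2 - (X + 1) / 2) - X * (1 + Real.log X) := by
  have hu_inv : (u : ℝ)⁻¹ < 1 := inv_lt_one_of_one_lt₀ (mod_cast hu)
  have hc : 1 - (u : ℝ)⁻¹ ≠ 0 := (sub_pos.2 hu_inv).ne'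
  rw [burgessF]
  generalize 1 - (u : ℝ)⁻¹ = c at hc ⊢
  field_simp
  ring

theorem totient_sum_lower_bound (X : ℝ) (hX : 1 < X) (u : ℕ) (hu : u.Prime) :
    (3 / Real.pi ^ 2) * (1 - (u : ℝ)⁻¹) * X ^ 2 * burgessF X u ≤
      ∑ q ∈ (Finset.Icc 1 ⌊X⌋₊).filter (fun q => Nat.gcd q u = 1), (Nat.totient q : ℝ) := by
  rw [mul_burgessF_eq (zero_lt_one.trans hX).ne' hu.one_lt]
  simpa [hu.primeFactors, totient_div_self_of_prime hu] using
    totient_sum_lower_bound_general hX.le hu.ne_zero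
end
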